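/- Let ε be the involution y ↦ b⁻¹y*b of W_{H*}. Then q^{ℓ(b)}·(q−1)^{φ(b)}·P_{J,*}(q)·P_{H*}(−q) = (−q)^{ℓ(b)}·(q+1)^{φ(b)}·P_J(−q)·P_{H*,ε}(q) as polynomials in q; equivalently, in ℚ(q): q^{ℓ(b)}·((q−1)/(q+1))^{φ(b)}·P_{J,*}(q)/P_{H*,ε}(q) = (−q)^{ℓ(b)}·P_J(−q)/P_{H*}(−q). -/

import Mathlib

set_option synthInstance.maxHeartbeats 1000000
set_option maxHeartbeats 2000000

open scoped Classical

noncomputable section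

namespace LY

/-! ## The coefficient field `ℚ(q)` -/

/-- The field `ℚ(q)` of rational functions. -/
abbrev K : Type := RatFunc ℚ

/-- The indeterminate `q`. -/
def qK : K := RatFunc.X

/-- The inclusion `ℤ[q] → ℚ(q)`. -/
def toK (p : Polynomial ℤ) : K := algebraMap (Polynomial ℚ) K (p.map (Int.castRingHom ℚ))

/-- Evaluation of `p ∈ ℤ[q]` at `−q`, as an element of `ℚ(q)`; i.e. `p(−q)`. -/
def atNegQ (p : Polynomial ℤ) : K := Polynomial.eval₂ (Int.castRingHom K) (-qK) p

/-- The standard basis element `T_w` (resp. `a_w`) of the function model `W → ℚ(q)`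
of the Hecke algebra (resp. of the Lusztig–Vogan module `M`). -/
def TT {W : Type} (w : W) : W → K := fun y => if y = w then 1 else 0

variable {B W : Type} [Group W] {M : CoxeterMatrix B}

/-- The Bruhat order on a Coxeter group: `u ≤ v` iff `v` is obtained from `u` by successive
right multiplications by reflections, each increasing the length. -/
def BruhatLE (cs : CoxeterSystem M W) (u v : W) : Prop :=
  Relation.ReflTransGen
    (fun a b => cs.length a < cs.length b ∧ ∃ t, cs.IsReflection t ∧ b = a * t) u v

/-- Connectedness of the Coxeter diagram of `M`. -/
def DiagramConnected (M : CoxeterMatrix B) : Prop :=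
  ∀ i j : B, Relation.ReflTransGen (fun a b => a ≠ b ∧ M a b ≠ 2) i j

/-- An automorphism of `W` preserving the set `S` of simple reflections, i.e. an element
of `A = Aut(W,S)`. -/
def IsDiagAut (cs : CoxeterSystem M W) (a : MulAut W) : Prop :=
  (⇑a) '' (Set.range cs.simple) = Set.range cs.simple

/-! ## The affine setting -/

/-- All the data and axioms describing the setting: `(W,S)` is the Coxeter group of an
untwisted connected affine Dynkin diagram (an irreducible affine Weyl group); `Λ` is the
subgroup of translations (elements with finite conjugacy class), free abelian of finite
rank and of finite index; `s₀` is a hyperspecial vertex, `J = S − {s₀}`, `W_J` is the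
finite subgroup generated by `J` with longest element `w_J`; `*` is the involution of `W`
given by `w* = w_J w w_J` on `W_J` and `λ* = −(ʷᴶλ)` on `Λ`; `pr` is the projection
`W → W_J` along `Λ`; `ρ` is the conjugation action of `W` on `Λ_ℚ ≅ ℚ^rank`
(via the identification `freeIso` of `Λ` with `ℤ^rank`). -/
structure AffineData (cs : CoxeterSystem M W) where
  finB : Finite B
  conn : DiagramConnected M
  infW : Infinite W
  /-- the subgroup `Λ` of translations -/
  Lam : Subgroup W
  hLam_mem : ∀ w : W, w ∈ Lam ↔ {x : W | IsConj w x}.Finite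
  hLam_normal : Lam.Normal
  hLam_comm : ∀ a ∈ Lam, ∀ b ∈ Lam, a * b = b * a
  hLam_index : Lam.FiniteIndex
  /-- `Λ` is free abelian of finite rank -/
  rank : ℕ
  freeIso : Lam ≃* Multiplicative (Fin rank → ℤ)
  /-- the hyperspecial vertex `s₀` -/
  s0 : W
  hs0_S : s0 ∈ Set.range cs.simple
  /-- `s₀` is hyperspecial: the projection `W → W/Λ` restricts to an isomorphism from the
  subgroup generated by `S − {s₀}` onto `W/Λ`. -/
  hs0_hyper : ∀ w : W, ∃! u : W,
    u ∈ Subgroup.closure (Set.range cs.simple \ {s0}) ∧ w * u⁻¹ ∈ Lam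
  hWJ_fin : (Subgroup.closure (Set.range cs.simple \ {s0}) : Set W).Finite
  /-- the longest element `w_J` of `W_J` -/
  wJ : W
  hwJ_mem : wJ ∈ Subgroup.closure (Set.range cs.simple \ {s0})
  hwJ_max : ∀ u ∈ Subgroup.closure (Set.range cs.simple \ {s0}), cs.length u ≤ cs.length wJ
  /-- the involution `*` of `W` -/
  st : MulAut W
  hst_inv : ∀ w : W, st (st w) = w
  hst_J : ∀ u ∈ Subgroup.closure (Set.range cs.simple \ {s0}), st u = wJ * u * wJ
  hst_Lam : ∀ l ∈ Lam, st l = (wJ * l * wJ⁻¹)⁻¹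
  hst_S : ∀ s ∈ Set.range cs.simple, st s ∈ Set.range cs.simple
  /-- lower Bruhat intervals are finite -/
  hBruhat_fin : ∀ w : W, {y : W | BruhatLE cs y w}.Finite
  /-- the projection `W → W_J` along `Λ` (`w ↦ w̄`) -/
  pr : W → W
  hpr : ∀ w : W, pr w ∈ Subgroup.closure (Set.range cs.simple \ {s0}) ∧ w * (pr w)⁻¹ ∈ Lam
  /-- the conjugation action of `W` on `Λ_ℚ ≅ ℚ^rank` -/
  rho : W → ((Fin rank → ℚ) →ₗ[ℚ] (Fin rank → ℚ))
  hrho : ∀ (w : W) (l : Lam),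
    rho w (fun i => ((Multiplicative.toAdd (freeIso l)) i : ℚ)) =
      fun i => ((Multiplicative.toAdd
        (freeIso ⟨w * (l : W) * w⁻¹, hLam_normal.conj_mem _ l.2 w⟩)) i : ℚ)

namespace AffineData

variable {cs : CoxeterSystem M W} (D : AffineData cs)

/-- The set `J = S − {s₀}`. -/
def Jset : Set W := Set.range cs.simple \ {D.s0}

/-- The finite Weyl group `W_J`. -/
def WJ : Subgroup W := Subgroup.closure D.Jset

/-- `λ ∈ Λ` is a dominant translation (`λ ∈ Λ⁺`). -/
def IsDominant (l : W) : Prop :=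
  l ∈ D.Lam ∧ cs.length (l * D.wJ) = cs.length l + cs.length D.wJ

/-- The embedding `Λ → Λ_ℚ = ℚ^rank`. -/
def iota (l : D.Lam) : Fin D.rank → ℚ :=
  fun i => ((Multiplicative.toAdd (D.freeIso l)) i : ℚ)

/-- `e(A)`: the dimension of the `(−1)`-eigenspace of a linear endomorphism `A` of `Λ_ℚ`. -/
def eNeg (f : (Fin D.rank → ℚ) →ₗ[ℚ] (Fin D.rank → ℚ)) : ℕ :=
  Module.finrank ℚ (Module.End.eigenspace (f : Module.End ℚ (Fin D.rank → ℚ)) (-1))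

/-- The map `A_u : λ ↦ ᵘ(λ*) = −(ᵘʷᴶλ)` on `Λ_ℚ`, for `u ∈ W_J`. -/
def Amap (u : W) : (Fin D.rank → ℚ) →ₗ[ℚ] (Fin D.rank → ℚ) := - D.rho (u * D.wJ)

/-- The invariant `φ(w) = e(A_{w̄}) − e(A_e)` for `w ∈ I_*`. -/
def phi (w : W) : ℤ := (D.eNeg (D.Amap (D.pr w)) : ℤ) - (D.eNeg (D.Amap 1) : ℤ)

/-- The double coset `W_J x W_J`. -/
def DCoset (x : W) : Set W := {y : W | ∃ u ∈ D.WJ, ∃ v ∈ D.WJ, y = u * x * v}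

/-- The set `H = J ∩ bJb⁻¹`. -/
def Hset (b : W) : Set W := D.Jset ∩ ((fun s => b * s * b⁻¹) '' D.Jset)

/-- The set `H* ⊆ J`, image of `H` under `*`. -/
def Hstar (b : W) : Set W := (⇑D.st) '' D.Hset b

/-- The subgroup `W_{H*}` generated by `H*`. -/
def WHstar (b : W) : Subgroup W := Subgroup.closure (D.Hstar b)

/-- The reflection representation `R'` of `W_{H*}`, as a subspace of `Λ_ℚ`:
the span of the vectors `λ − ˢλ` for `λ ∈ Λ`, `s ∈ H*`. -/
def Rprime (b : W) : Submodule ℚ (Fin D.rank → ℚ) :=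
  Submodule.span ℚ
    {v : Fin D.rank → ℚ | ∃ l : D.Lam, ∃ s ∈ D.Hstar b,
      v = D.iota l - D.iota ⟨s * (l : W) * s⁻¹, D.hLam_normal.conj_mem _ l.2 s⟩}

/-- `e'(A)`: the dimension of the `(−1)`-eigenspace of an endomorphism `A` of `R'`. -/
def eNeg' {b : W} (f : ↥(D.Rprime b) →ₗ[ℚ] ↥(D.Rprime b)) : ℕ :=
  Module.finrank ℚ (Module.End.eigenspace (f : Module.End ℚ ↥(D.Rprime b)) (-1))

/-- `φ'(z) = e'(B_z) − e'(B_e)`, where `B_u : x ↦ −u·(w_{H*}·x)` on `R'`; here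
`rho'` is the conjugation action of `W_{H*}` on `R'` and `wHs` is the longest element
of `W_{H*}`. -/
def phiP {b : W} (rho' : W → (↥(D.Rprime b) →ₗ[ℚ] ↥(D.Rprime b))) (wHs z : W) : ℤ :=
  (D.eNeg' (-(rho' (z * wHs))) : ℤ) - (D.eNeg' (-(rho' wHs)) : ℤ)

/-- Membership in `A_Λ ⊆ A = Aut(W,S)`: automorphisms acting on `Λ` as conjugation by some
element of `W_J`. -/
def InALam (a : MulAut W) : Prop :=
  IsDiagAut cs a ∧ ∃ w ∈ D.WJ, ∀ l ∈ D.Lam, a l = w * l * w⁻¹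

/-- Membership in the coset `A_Λ* = {a ∘ * : a ∈ A_Λ}`. -/
def InALamStar (c : MulAut W) : Prop := ∃ a : MulAut W, D.InALam a ∧ c = a * D.st

/-- The double coset `W_J x W_J^◇`, where `W_J^◇` is the subgroup generated by
`J^◇ = S − {s₁}`. -/
def DCosetDia (s1 : W) (x : W) : Set W :=
  {y : W | ∃ u ∈ D.WJ, ∃ v ∈ Subgroup.closure (Set.range cs.simple \ {s1}), y = u * x * v}


end AffineData

/-! ## The Hecke algebra, the Lusztig–Vogan module, and the polynomials `P`, `P^σ` -/

/-- The Hecke algebra of `(W,S)` over `ℚ(q)` (modelled on functions `W → ℚ(q)`, with basis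
`TT w = T_w`), together with its bar involution, and the Kazhdan–Lusztig polynomials
`P_{y,w} ∈ ℤ[q]` characterized by their defining properties. -/
structure HeckeData (cs : CoxeterSystem M W) where
  /-- the involution `q ↦ q⁻¹` of `ℚ(q)` -/
  barK : K →+* K
  hbarK_X : barK qK = qK⁻¹
  hbarK_inv : ∀ x, barK (barK x) = x
  /-- the multiplication of the Hecke algebra -/
  mulH : (W → K) →ₗ[K] (W → K) →ₗ[K] (W → K)
  hmul_assoc : ∀ x y z : W → K, mulH (mulH x y) z = mulH x (mulH y z)
  hmul_one : ∀ x : W → K, mulH (TT 1) x = x ∧ mulH x (TT 1) = x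
  hmul_TT : ∀ u v : W, cs.length (u * v) = cs.length u + cs.length v →
    mulH (TT u) (TT v) = TT (u * v)
  hmul_Ts : ∀ s ∈ Set.range cs.simple,
    mulH (TT s) (TT s) = (qK - 1) • TT s + qK • TT (1 : W)
  /-- the bar involution of the Hecke algebra: the ring involution with `q ↦ q⁻¹`,
  `T_w ↦ (T_{w⁻¹})⁻¹` -/
  barH : (W → K) →+ (W → K)
  hbarH_inv : ∀ x, barH (barH x) = x
  hbarH_smul : ∀ (c : K) (x : W → K), barH (c • x) = barK c • barH x
  hbarH_mul : ∀ x y : W → K, barH (mulH x y) = mulH (barH x) (barH y)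
  hbarH_T : ∀ w : W, mulH (barH (TT w)) (TT w⁻¹) = TT (1 : W) ∧
    mulH (TT w⁻¹) (barH (TT w)) = TT (1 : W)
  /-- the Kazhdan–Lusztig polynomials `P_{y,w}` -/
  P : W → W → Polynomial ℤ
  hP_supp : ∀ y w : W, ¬ BruhatLE cs y w → P y w = 0
  hP_diag : ∀ w : W, P w w = 1
  hP_deg : ∀ y w : W, BruhatLE cs y w → y ≠ w →
    2 * (P y w).natDegree + 1 ≤ cs.length w - cs.length y
  hP_dual : ∀ w : W,
    (qK ^ cs.length w) • barH (fun y => if BruhatLE cs y w then toK (P y w) else 0)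
      = fun y => if BruhatLE cs y w then toK (P y w) else 0

/-- The Lusztig–Vogan module `M` over the Hecke algebra `H'` with parameter `q²`, attached to
a length-preserving involutive automorphism `star` of `(W,S)`, together with its bar
involution, and the polynomials `P^σ_{y,w} ∈ ℤ[q]` (for `y, w ∈ I_*`) characterized by their
defining properties.  Both `H'` and `M` are modelled on functions `W → ℚ(q)`; the basis
element `a_w` of `M` (for `w ∈ I_*`) is `TT w`. -/
structure LVData (cs : CoxeterSystem M W) (star : MulAut W) where
  /-- the involution `q ↦ q⁻¹` of `ℚ(q)` -/
  barK : K →+* K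
  hbarK_X : barK qK = qK⁻¹
  hbarK_inv : ∀ x, barK (barK x) = x
  /-- the multiplication of the Hecke algebra `H'` with parameter `q²` -/
  mulH' : (W → K) →ₗ[K] (W → K) →ₗ[K] (W → K)
  hmul'_assoc : ∀ x y z : W → K, mulH' (mulH' x y) z = mulH' x (mulH' y z)
  hmul'_one : ∀ x : W → K, mulH' (TT 1) x = x ∧ mulH' x (TT 1) = x
  hmul'_TT : ∀ u v : W, cs.length (u * v) = cs.length u + cs.length v →
    mulH' (TT u) (TT v) = TT (u * v)
  hmul'_Ts : ∀ s ∈ Set.range cs.simple,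
    mulH' (TT s) (TT s) = (qK ^ 2 - 1) • TT s + (qK ^ 2) • TT (1 : W)
  /-- the bar involution of `H'` -/
  barH' : (W → K) →+ (W → K)
  hbarH'_inv : ∀ x, barH' (barH' x) = x
  hbarH'_smul : ∀ (c : K) (x : W → K), barH' (c • x) = barK c • barH' x
  hbarH'_mul : ∀ x y : W → K, barH' (mulH' x y) = mulH' (barH' x) (barH' y)
  hbarH'_T : ∀ w : W, mulH' (barH' (TT w)) (TT w⁻¹) = TT (1 : W) ∧
    mulH' (TT w⁻¹) (barH' (TT w)) = TT (1 : W)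
  /-- the action of `H'` on the module `M` -/
  actM : (W → K) →ₗ[K] (W → K) →ₗ[K] (W → K)
  hact_one : ∀ m : W → K, actM (TT 1) m = m
  hact_mul : ∀ (h h' : W → K) (m : W → K), actM (mulH' h h') m = actM h (actM h' m)
  hact1 : ∀ s ∈ Set.range cs.simple, ∀ w : W, star w = w⁻¹ →
    s * w = w * star s → cs.length w < cs.length (s * w) →
    actM (TT s) (TT w) = qK • TT w + (qK + 1) • TT (s * w)
  hact2 : ∀ s ∈ Set.range cs.simple, ∀ w : W, star w = w⁻¹ →
    s * w = w * star s → cs.length (s * w) < cs.length w →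
    actM (TT s) (TT w) = (qK ^ 2 - qK - 1) • TT w + (qK ^ 2 - qK) • TT (s * w)
  hact3 : ∀ s ∈ Set.range cs.simple, ∀ w : W, star w = w⁻¹ →
    s * w ≠ w * star s → cs.length w < cs.length (s * w) →
    actM (TT s) (TT w) = TT (s * w * star s)
  hact4 : ∀ s ∈ Set.range cs.simple, ∀ w : W, star w = w⁻¹ →
    s * w ≠ w * star s → cs.length (s * w) < cs.length w →
    actM (TT s) (TT w) = (qK ^ 2 - 1) • TT w + (qK ^ 2) • TT (s * w * star s)
  /-- the bar involution of the module `M` -/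
  barM : (W → K) →+ (W → K)
  hbarM_inv : ∀ m : W → K, barM (barM m) = m
  hbarM_smul : ∀ (c : K) (m : W → K), barM (c • m) = barK c • barM m
  hbarM_act : ∀ (h m : W → K), barM (actM h m) = actM (barH' h) (barM m)
  hbarM_one : barM (TT 1) = TT (1 : W)
  /-- the Lusztig–Vogan polynomials `P^σ_{y,w}` -/
  Psig : W → W → Polynomial ℤ
  hPsig_supp : ∀ y w : W, ¬ (BruhatLE cs y w ∧ star y = y⁻¹) → Psig y w = 0
  hPsig_diag : ∀ w : W, star w = w⁻¹ → Psig w w = 1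
  hPsig_deg : ∀ y w : W, star w = w⁻¹ → star y = y⁻¹ → BruhatLE cs y w → y ≠ w →
    2 * (Psig y w).natDegree + 1 ≤ cs.length w - cs.length y
  hPsig_dual : ∀ w : W, star w = w⁻¹ →
    (qK ^ (2 * cs.length w)) •
        barM (fun y => if BruhatLE cs y w ∧ star y = y⁻¹ then toK (Psig y w) else 0)
      = fun y => if BruhatLE cs y w ∧ star y = y⁻¹ then toK (Psig y w) else 0

/-! ## The `Z`-polynomials -/

/-- `Z_w(q) = Σ_{y ≤ w} P_{y,w}(q) q^{ℓ(y)}`. -/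
def Zpoly (cs : CoxeterSystem M W) (HD : HeckeData cs) (w : W) : K :=
  ∑ᶠ y : W, if BruhatLE cs y w then toK (HD.P y w) * qK ^ cs.length y else 0

/-- `Z_w(−q) = Σ_{y ≤ w} P_{y,w}(−q) (−q)^{ℓ(y)}`. -/
def ZpolyNeg (cs : CoxeterSystem M W) (HD : HeckeData cs) (w : W) : K :=
  ∑ᶠ y : W, if BruhatLE cs y w then atNegQ (HD.P y w) * (-qK) ^ cs.length y else 0

/-- `Z^σ_w(q) = Σ_{y ≤ w, y ∈ I_*} P^σ_{y,w}(q) q^{ℓ(y)} ((q−1)/(q+1))^{φ(y)}`. -/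
def Zsig (cs : CoxeterSystem M W) (D : AffineData cs) (LD : LVData cs D.st) (w : W) : K :=
  ∑ᶠ y : W, if BruhatLE cs y w ∧ D.st y = y⁻¹ then
    toK (LD.Psig y w) * qK ^ cs.length y * ((qK - 1) / (qK + 1)) ^ D.phi y else 0

/-!
Let `w` be the longest element of a finite parabolic subgroup `W_L`, let `τ` be conjugation by `w`,
and let `e(w)` be the multiplicity of the eigenvalue `-1` of `w` on `Λ_ℚ`. Everything rests on
`P_{L,τ}(q) (1 - q) ^ e(w) = P_L(-q) (1 + q) ^ e(w)`.

Whenever an involution `T` of a reflection representation `V` of `W_L` induces the diagram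
involution `τ`, the polynomial `P_{L,τ}(q)` times the mean over `x ∈ W_L` of the Molien series of
`x T` is the Molien series of `T`. Indeed both `P_{L,τ}⁻¹` and this mean satisfy the same
inclusion-exclusion recursion over the `τ`-stable subsets of `L`: for `P_{L,τ}` because `w` is the
only `τ`-fixed element having all of `L` as descents; for the mean because of a twisted form of
Solomon's identity for the sign character, and because antisymmetric polynomials are the multiples
of the product of the roots, whose degree is `ℓ(w)`. The pairs `(τ, T) = (conj w, -w)` and `(1, 1)`
have means which correspond under `q ↦ -q`, since `x ↦ x w` permutes `W_L`, and the Molien series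
of the involution `-w` and of `1` are explicit.

The translation lattice gives such a representation once reflections of `W` are known to act on
`Λ_ℚ` as reflections. This holds because the set of left inversions of an element is finite: two
independent translations inverted by one reflection `t` would divide a copy of `ℤ × ℤ` into two
sides, almost invariant under translation and exchanged by `x ↦ -x`.

For `w_J` and the longest element `w_J w_H w_J` of `W_{H*}` the identity compares the two sides of
the theorem. Since `μ = w_J w_H b`, the image of `b` in `W_J` is `w_H w_J`; hence `ε` is conjugation
by `w_J w_H w_J`, `φ(b) = e(w_J) - e(w_H)`, and taking determinants on `Λ_ℚ` gives
`(-1) ^ ℓ(b) = (-1) ^ (e(w_J) + e(w_H))`.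
-/

/-! ### Inversion sets -/

section Inversions

variable (cs : CoxeterSystem M W)

/-- The action of a simple reflection on signed group elements `(t, z)`: conjugation of `t`, with
a change of sign exactly when `t` is that simple reflection. -/
def signedConjSimple (i : B) (p : W × ZMod 2) : W × ZMod 2 :=
  (cs.simple i * p.1 * cs.simple i, p.2 + if p.1 = cs.simple i then 1 else 0)

theorem signedConjSimple_involutive (i : B) : Function.Involutive (signedConjSimple cs i) := by
  rintro ⟨t, z⟩
  have hconj : cs.simple i * t * cs.simple i = cs.simple i ↔ t = cs.simple i := by
    rw [mul_assoc, mul_eq_left, mul_eq_one_iff_eq_inv, cs.inv_simple]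
  simp only [signedConjSimple, hconj, add_assoc, CharTwo.add_self_eq_zero, add_zero]
  simp [mul_assoc]

theorem prod_map_alternatingWord {G : Type*} [Monoid G] (f : B → G) (i j : B) (m : ℕ) :
    ((CoxeterSystem.alternatingWord i j (2 * m)).map f).prod = (f i * f j) ^ m := by
  induction m with
  | zero => simp [CoxeterSystem.alternatingWord]
  | succ m ih =>
    simp only [mul_add, mul_one, CoxeterSystem.alternatingWord, List.concat_eq_append,
      List.map_append, List.prod_append, ih, pow_succ]
    simp [mul_assoc]

theorem inv_prod_map_signedConjSimple_apply (ω : List B) (t : W) (z : ZMod 2) :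
    ((ω.map fun i => (signedConjSimple_involutive cs i).toPerm).prod)⁻¹ (t, z) =
      ((cs.wordProd ω)⁻¹ * t * cs.wordProd ω, z + ((cs.leftInvSeq ω).count t : ZMod 2)) := by
  induction ω generalizing t z with
  | nil => simp
  | cons i ω ih =>
    have hcount : ((cs.leftInvSeq ω).map (MulAut.conj (cs.simple i))).count t =
        (cs.leftInvSeq ω).count (cs.simple i * t * cs.simple i) := by
      have ht : t = MulAut.conj (cs.simple i) (cs.simple i * t * cs.simple i) := by
        simp [mul_assoc]
      conv_lhs => rw [ht]
      exact List.count_map_of_injective _ _ (MulAut.conj (cs.simple i)).injective _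
    have hinv : (signedConjSimple_involutive cs i).toPerm⁻¹ (t, z) = signedConjSimple cs i (t, z) :=
      rfl
    rw [List.map_cons, List.prod_cons, mul_inv_rev, Equiv.Perm.mul_apply, hinv,
      signedConjSimple, ih, CoxeterSystem.leftInvSeq, List.count_cons, hcount]
    simp only [beq_iff_eq, eq_comm (a := t), cs.wordProd_cons, mul_inv_rev, cs.inv_simple,
      mul_assoc, Nat.cast_add, Nat.cast_ite, Nat.cast_one, Nat.cast_zero]
    rw [add_assoc, add_comm (ite _ _ _)]

theorem even_count_leftInvSeq_alternatingWord (i j : B) (t : W) :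
    Even ((cs.leftInvSeq (CoxeterSystem.alternatingWord i j (2 * M i j))).count t) := by
  set f : ℕ → W := fun k => cs.wordProd (CoxeterSystem.alternatingWord j i (2 * k + 1)) with hf
  have hperiod (k : ℕ) : f (M i j + k) = f k := by
    simp [hf, cs.prod_alternatingWord_eq_mul_pow, Nat.mul_add_div, pow_add]
  have hseq : cs.leftInvSeq (CoxeterSystem.alternatingWord i j (2 * M i j)) =
      (List.range (M i j)).map f ++ (List.range (M i j)).map f := by
    have hmap : (List.range (M i j)).map f ++ (List.range (M i j)).map f =
        (List.range (2 * M i j)).map f := by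
      simp [two_mul, List.range_add, Function.comp_def, hperiod]
    rw [hmap]
    refine List.ext_getElem (by simp) fun k hk _ => ?_
    rw [List.getElem_map, List.getElem_range]
    exact cs.getElem_leftInvSeq_alternatingWord i j (M i j) k (by simpa using hk)
  rw [hseq, List.count_append]
  exact Even.add_self _

theorem isLiftable_signedConjSimple :
    M.IsLiftable fun i => (signedConjSimple_involutive cs i).toPerm := by
  intro i j
  refine (prod_map_alternatingWord (fun i => (signedConjSimple_involutive cs i).toPerm)
    i j (M i j)).symm.trans (inv_eq_one.1 ?_)
  ext1 ⟨t, z⟩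
  have hprod : cs.wordProd (CoxeterSystem.alternatingWord i j (2 * M i j)) = 1 := by
    simp [cs.prod_alternatingWord_eq_mul_pow]
  rw [inv_prod_map_signedConjSimple_apply, hprod,
    (ZMod.natCast_eq_zero_iff_even).2 (even_count_leftInvSeq_alternatingWord cs i j t)]
  simp

/-- The action of `W` on signed group elements `W × ZMod 2`; on signed reflections it is the action
on the roots of the Coxeter group. -/
def signedConj : W →* Equiv.Perm (W × ZMod 2) :=
  cs.lift ⟨_, isLiftable_signedConjSimple cs⟩

/-- The inversion cocycle: `inversionParity cs x t = 1` iff `t` is a left inversion of `x`. -/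
def inversionParity (x t : W) : ZMod 2 := (signedConj cs x⁻¹ (t, 0)).2

theorem signedConj_inv_wordProd_apply (ω : List B) (t : W) (z : ZMod 2) :
    signedConj cs (cs.wordProd ω)⁻¹ (t, z) =
      ((cs.wordProd ω)⁻¹ * t * cs.wordProd ω, z + ((cs.leftInvSeq ω).count t : ZMod 2)) := by
  rw [← inv_prod_map_signedConjSimple_apply, map_inv, CoxeterSystem.wordProd, map_list_prod,
    List.map_map]
  congr! 4
  funext i
  exact cs.lift_apply_simple (isLiftable_signedConjSimple cs) i

theorem inversionParity_wordProd (ω : List B) (t : W) :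
    inversionParity cs (cs.wordProd ω) t = ((cs.leftInvSeq ω).count t : ZMod 2) := by
  rw [inversionParity, signedConj_inv_wordProd_apply, zero_add]

theorem signedConj_inv_apply (x t : W) (z : ZMod 2) :
    signedConj cs x⁻¹ (t, z) = (x⁻¹ * t * x, z + inversionParity cs x t) := by
  obtain ⟨ω, rfl⟩ := cs.wordProd_surjective x
  rw [signedConj_inv_wordProd_apply, inversionParity_wordProd]

theorem inversionParity_mul (x y t : W) :
    inversionParity cs (x * y) t =
      inversionParity cs x t + inversionParity cs y (x⁻¹ * t * x) := by
  rw [inversionParity, mul_inv_rev, map_mul, Equiv.Perm.mul_apply, signedConj_inv_apply,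
    signedConj_inv_apply, zero_add]

theorem inversionParity_one (t : W) : inversionParity cs 1 t = 0 := by
  simp [inversionParity]

theorem inversionParity_simple (i : B) (t : W) :
    inversionParity cs (cs.simple i) t = if t = cs.simple i then 1 else 0 := by
  have h := inversionParity_wordProd cs [i] t
  rw [cs.wordProd_singleton, cs.leftInvSeq_singleton, List.count_singleton] at h
  simp only [h, beq_iff_eq, eq_comm (a := t), Nat.cast_ite, Nat.cast_one, Nat.cast_zero]

theorem inversionParity_self {t : W} (ht : cs.IsReflection t) : inversionParity cs t t = 1 := by
  obtain ⟨w, i, rfl⟩ := ht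
  have hcancel := inversionParity_mul cs w w⁻¹ (w * cs.simple i * w⁻¹)
  rw [mul_inv_cancel, inversionParity_one] at hcancel
  rw [inversionParity_mul, inversionParity_mul, inversionParity_simple]
  simp only [mul_assoc, inv_mul_cancel_left, inv_mul_cancel, mul_one, mul_inv_rev,
    cs.inv_simple, cs.simple_mul_simple_cancel_left,
    if_true] at hcancel ⊢
  rw [add_right_comm, ← hcancel, zero_add]

theorem mem_leftInvSeq_of_inversionParity_eq_one {ω : List B} {t : W}
    (h : inversionParity cs (cs.wordProd ω) t = 1) : t ∈ cs.leftInvSeq ω := by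
  by_contra hmem
  simp [inversionParity_wordProd, List.count_eq_zero_of_not_mem hmem] at h

theorem isLeftInversion_iff_inversionParity (x t : W) :
    cs.IsLeftInversion x t ↔ inversionParity cs x t = 1 := by
  have isLeftInversion_of {x : W} (h : inversionParity cs x t = 1) : cs.IsLeftInversion x t := by
    obtain ⟨ω, hω, rfl⟩ := cs.exists_isReduced x
    exact cs.isLeftInversion_of_mem_leftInvSeq hω (mem_leftInvSeq_of_inversionParity_eq_one cs h)
  refine ⟨fun ⟨ht, hlt⟩ => ?_, isLeftInversion_of⟩
  by_contra hne
  have hzero : inversionParity cs x t = 0 := by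
    generalize inversionParity cs x t = z at hne
    revert z
    decide
  have hmul : inversionParity cs (t * x) t = 1 := by
    rw [inversionParity_mul, inversionParity_self cs ht, inv_mul_cancel, one_mul, hzero, add_zero]
  have := (isLeftInversion_of hmul).2
  rw [← mul_assoc, ht.mul_self, one_mul] at this
  exact this.not_gt hlt

/-- The set of left inversions of `x`: the reflections `t` with `ℓ(tx) < ℓ(x)`. -/
def leftInversions (x : W) : Set W := {t | cs.IsLeftInversion x t}

variable {cs}

theorem mem_leftInversions_mul {x y t : W} :
    t ∈ leftInversions cs (x * y) ↔
      Xor (t ∈ leftInversions cs x) (x⁻¹ * t * x ∈ leftInversions cs y) := by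
  simp only [leftInversions, Set.mem_ofPred_eq, isLeftInversion_iff_inversionParity,
    inversionParity_mul]
  generalize inversionParity cs x t = a
  generalize inversionParity cs y (x⁻¹ * t * x) = b
  revert a b
  simp only [Xor]
  decide

theorem leftInversions_one : leftInversions cs 1 = ∅ := by
  ext t
  simp [leftInversions, isLeftInversion_iff_inversionParity, inversionParity_one]

theorem leftInversions_wordProd {ω : List B} (hω : cs.IsReduced ω) :
    leftInversions cs (cs.wordProd ω) = (cs.leftInvSeq ω).toFinset := by
  ext t
  simp only [List.coe_toFinset, Set.mem_ofPred_eq]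
  exact ⟨fun h => mem_leftInvSeq_of_inversionParity_eq_one cs
    ((isLeftInversion_iff_inversionParity cs _ _).1 h), cs.isLeftInversion_of_mem_leftInvSeq hω⟩

theorem finite_leftInversions (x : W) : (leftInversions cs x).Finite := by
  obtain ⟨ω, hω, rfl⟩ := cs.exists_isReduced x
  rw [leftInversions_wordProd hω]
  exact Finset.finite_toSet _

theorem ncard_leftInversions (x : W) : (leftInversions cs x).ncard = cs.length x := by
  obtain ⟨ω, hω, rfl⟩ := cs.exists_isReduced x
  rw [leftInversions_wordProd hω, hω.eq, Set.ncard_coe_finset,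
    List.toFinset_card_of_nodup hω.nodup_leftInvSeq, cs.length_leftInvSeq]

theorem mem_leftInversions_inv {x t : W} :
    t ∈ leftInversions cs x⁻¹ ↔ x * t * x⁻¹ ∈ leftInversions cs x := by
  have h := mem_leftInversions_mul (cs := cs) (x := x⁻¹) (y := x) (t := t)
  rw [inv_mul_cancel, leftInversions_one, inv_inv] at h
  simp only [Set.mem_empty_iff_false, false_iff, xor_iff_not_iff, not_not] at h
  exact h

theorem mem_leftInversions_inv_iff_length {x t : W} (ht : cs.IsReflection t) :
    t ∈ leftInversions cs x⁻¹ ↔ cs.length (x * t) < cs.length x := by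
  rw [leftInversions, Set.mem_ofPred_eq, cs.isLeftInversion_inv_iff, CoxeterSystem.IsRightInversion,
    and_iff_right ht]

theorem exists_eraseIdx_of_mem_leftInversions {ω : List B} {t : W}
    (h : t ∈ leftInversions cs (cs.wordProd ω)) :
    ∃ j < ω.length, t * cs.wordProd ω = cs.wordProd (ω.eraseIdx j) := by
  have hmem := mem_leftInvSeq_of_inversionParity_eq_one cs
    ((isLeftInversion_iff_inversionParity cs _ _).1 h)
  obtain ⟨j, hj, rfl⟩ := List.getElem_of_mem hmem
  refine ⟨j, by simpa using hj, ?_⟩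
  rw [← cs.getD_leftInvSeq_mul_wordProd, List.getD_eq_getElem _ _ hj]

theorem length_mul_of_disjoint {x y : W}
    (h : ∀ t ∈ leftInversions cs y, x * t * x⁻¹ ∉ leftInversions cs x) :
    cs.length (x * y) = cs.length x + cs.length y := by
  have hunion : leftInversions cs (x * y) =
      leftInversions cs x ∪ MulAut.conj x '' leftInversions cs y := by
    ext t
    have himage : t ∈ MulAut.conj x '' leftInversions cs y ↔
        x⁻¹ * t * x ∈ leftInversions cs y := by
      rw [← MulEquiv.coe_toEquiv, Equiv.image_eq_preimage_symm]
      simp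
    have hdisj : x⁻¹ * t * x ∈ leftInversions cs y → t ∉ leftInversions cs x := by
      intro hy
      simpa [mul_assoc] using h _ hy
    rw [mem_leftInversions_mul, Set.mem_union, himage, Xor]
    tauto
  have hdisjoint : Disjoint (leftInversions cs x) (MulAut.conj x '' leftInversions cs y) := by
    rw [Set.disjoint_right]
    rintro _ ⟨t, ht, rfl⟩
    exact h t ht
  rw [← ncard_leftInversions, ← ncard_leftInversions, ← ncard_leftInversions, hunion,
    Set.ncard_union_eq hdisjoint (finite_leftInversions x) ((finite_leftInversions y).image _),
    Set.ncard_image_of_injective _ (MulAut.conj x).injective]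

end Inversions

/-! ### Parabolic subgroups -/

section Parabolic

variable {cs : CoxeterSystem M W} {L : Set W}

theorem wordProd_mem_closure {ω : List B} (h : ∀ i ∈ ω, cs.simple i ∈ L) :
    cs.wordProd ω ∈ Subgroup.closure L :=
  Subgroup.list_prod_mem _ (by simpa using fun i hi => Subgroup.subset_closure (h i hi))

theorem exists_isReduced_simple_mul {i : B} (hi : cs.simple i ∈ L) {ω : List B}
    (hω : cs.IsReduced ω) (hωL : ∀ j ∈ ω, cs.simple j ∈ L) :
    ∃ ω', cs.IsReduced ω' ∧ cs.wordProd ω' = cs.simple i * cs.wordProd ω ∧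
      ∀ j ∈ ω', cs.simple j ∈ L := by
  rcases cs.length_simple_mul (cs.wordProd ω) i with hlong | hshort
  · refine ⟨i :: ω, ?_, cs.wordProd_cons i ω, ?_⟩
    · rw [CoxeterSystem.IsReduced, cs.wordProd_cons, hlong, hω.eq, List.length_cons]
    · simpa using ⟨hi, hωL⟩
  · obtain ⟨j, hj, herase⟩ := exists_eraseIdx_of_mem_leftInversions (cs := cs) (ω := ω)
      (t := cs.simple i) ⟨cs.isReflection_simple i, by omega⟩
    refine ⟨ω.eraseIdx j, ?_, herase.symm, fun k hk => hωL k (List.mem_of_mem_eraseIdx hk)⟩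
    rw [CoxeterSystem.IsReduced, ← herase, List.length_eraseIdx_of_lt hj, ← hω.eq]
    omega

theorem exists_isReduced_of_mem_closure (hL : L ⊆ Set.range cs.simple) {v : W}
    (hv : v ∈ Subgroup.closure L) :
    ∃ ω, cs.IsReduced ω ∧ cs.wordProd ω = v ∧ ∀ i ∈ ω, cs.simple i ∈ L := by
  have mul_left {s y : W} (hs : s ∈ L) :
      (∃ ω, cs.IsReduced ω ∧ cs.wordProd ω = y ∧ ∀ i ∈ ω, cs.simple i ∈ L) →
      ∃ ω, cs.IsReduced ω ∧ cs.wordProd ω = s * y ∧ ∀ i ∈ ω, cs.simple i ∈ L := by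
    rintro ⟨ω, hω, rfl, hωL⟩
    obtain ⟨i, rfl⟩ := hL hs
    exact exists_isReduced_simple_mul hs hω hωL
  induction hv using Subgroup.closure_induction_left with
  | one => exact ⟨[], by simp [CoxeterSystem.IsReduced], by simp, by simp⟩
  | mul_left s hs y _ ih => exact mul_left hs ih
  | inv_mul_cancel s hs y _ ih =>
    obtain ⟨i, rfl⟩ := hL hs
    rw [cs.inv_simple]
    exact mul_left hs ih

theorem leftInversions_subset_closure (hL : L ⊆ Set.range cs.simple) {v : W}
    (hv : v ∈ Subgroup.closure L) : leftInversions cs v ⊆ Subgroup.closure L := by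
  intro t ht
  obtain ⟨ω, -, rfl, hωL⟩ := exists_isReduced_of_mem_closure hL hv
  obtain ⟨j, -, herase⟩ := exists_eraseIdx_of_mem_leftInversions ht
  refine (Subgroup.mul_mem_cancel_right _ hv).1 ?_
  rw [herase]
  exact wordProd_mem_closure fun k hk => hωL k (List.mem_of_mem_eraseIdx hk)

theorem mem_of_mem_closure_of_length_eq_one (hL : L ⊆ Set.range cs.simple) {s : W}
    (hs : cs.length s = 1) (hmem : s ∈ Subgroup.closure L) : s ∈ L := by
  obtain ⟨ω, hω, rfl, hωL⟩ := exists_isReduced_of_mem_closure hL hmem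
  obtain ⟨j, rfl⟩ := List.length_eq_one_iff.1 (hω.eq.symm.trans hs)
  simpa using hωL j

theorem isReflection_of_mem (hL : L ⊆ Set.range cs.simple) {s : W} (hs : s ∈ L) :
    cs.IsReflection s := by
  obtain ⟨i, rfl⟩ := hL hs
  exact cs.isReflection_simple i

theorem length_eq_one_of_mem (hL : L ⊆ Set.range cs.simple) {s : W} (hs : s ∈ L) :
    cs.length s = 1 := by
  obtain ⟨i, rfl⟩ := hL hs
  exact cs.length_simple i

theorem exists_mem_leftInversions_of_ne_one (hL : L ⊆ Set.range cs.simple) {v : W}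
    (hv : v ∈ Subgroup.closure L) (hne : v ≠ 1) : ∃ s ∈ L, s ∈ leftInversions cs v := by
  obtain ⟨ω, hω, rfl, hωL⟩ := exists_isReduced_of_mem_closure hL hv
  cases ω with
  | nil => simp at hne
  | cons i ω =>
    refine ⟨cs.simple i, hωL i (by simp), cs.isReflection_simple i, ?_⟩
    rw [hω.eq, cs.wordProd_cons, cs.simple_mul_simple_cancel_left, List.length_cons]
    exact Nat.lt_succ_of_le (cs.length_wordProd_le ω)

variable (cs L) in
/-- `u` is the shortest element of its coset `u W_L`, expressed through the absence of right
descents in `L`. -/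
def IsMinimal (u : W) : Prop := ∀ s ∈ L, s ∉ leftInversions cs u⁻¹

theorem exists_mul_forall_notMem_leftInversions (w : W) :
    ∃ u, (∀ t ∈ Subgroup.closure L, t ∉ leftInversions cs u⁻¹) ∧
      ∃ v ∈ Subgroup.closure L, u * v = w := by
  obtain ⟨v, hv, hmin⟩ := exists_minimalFor_of_wellFoundedLT (· ∈ Subgroup.closure L)
    (fun v => cs.length (w * v)) ⟨1, one_mem _⟩
  refine ⟨w * v, fun t ht hinv => ?_, v⁻¹, inv_mem hv, mul_inv_cancel_right w v⟩
  have hlt := (mem_leftInversions_inv_iff_length hinv.1).1 hinv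
  rw [mul_assoc] at hlt
  exact hlt.not_ge (hmin (mul_mem hv ht) hlt.le)

theorem exists_isMinimal_mul_eq (w : W) :
    ∃ u, IsMinimal cs L u ∧ ∃ v ∈ Subgroup.closure L, u * v = w := by
  obtain ⟨u, hu, v, hv, h⟩ := exists_mul_forall_notMem_leftInversions (cs := cs) (L := L) w
  exact ⟨u, fun s hs => hu s (Subgroup.subset_closure hs), v, hv, h⟩

theorem isMinimal_one : IsMinimal cs L 1 := by
  intro s _
  simp [leftInversions_one]

namespace IsMinimal

theorem notMem_leftInversions_inv (hL : L ⊆ Set.range cs.simple) {w : W} (h : IsMinimal cs L w)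
    {t : W} (ht : t ∈ Subgroup.closure L) : t ∉ leftInversions cs w⁻¹ := by
  obtain ⟨u, hu, v, hv, rfl⟩ := exists_mul_forall_notMem_leftInversions (cs := cs) (L := L) w
  by_cases hv1 : v = 1
  · simpa [hv1] using hu t ht
  obtain ⟨s, hs, hsv⟩ := exists_mem_leftInversions_of_ne_one hL (inv_mem hv) (inv_ne_one.2 hv1)
  refine absurd ?_ (h s hs)
  rw [mul_inv_rev, mem_leftInversions_mul]
  exact Or.inl ⟨hsv, hu _ (mul_mem (mul_mem (inv_mem (inv_mem hv)) (Subgroup.subset_closure hs))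
    (inv_mem hv))⟩

theorem length_mul (hL : L ⊆ Set.range cs.simple) {u v : W} (h : IsMinimal cs L u)
    (hv : v ∈ Subgroup.closure L) : cs.length (u * v) = cs.length u + cs.length v :=
  length_mul_of_disjoint fun t ht => by
    rw [← mem_leftInversions_inv]
    exact h.notMem_leftInversions_inv hL (leftInversions_subset_closure hL hv ht)

theorem eq_of_mul_eq (hL : L ⊆ Set.range cs.simple) {u u' v v' : W} (h : IsMinimal cs L u)
    (h' : IsMinimal cs L u') (hv : v ∈ Subgroup.closure L) (hv' : v' ∈ Subgroup.closure L)
    (heq : u * v = u' * v') : u = u' ∧ v = v' := by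
  have hu' : u * (v * v'⁻¹) = u' := by rw [← mul_assoc, heq, mul_inv_cancel_right]
  have hu : u' * (v * v'⁻¹)⁻¹ = u := by rw [← hu', mul_inv_cancel_right]
  have hmem := mul_mem hv (inv_mem hv')
  have hlen := h.length_mul hL hmem
  have hlen' := h'.length_mul hL (inv_mem hmem)
  rw [hu'] at hlen
  rw [hu] at hlen'
  have hone : v * v'⁻¹ = 1 := cs.length_eq_zero_iff.1 (by omega)
  exact ⟨by rw [← hu', hone, mul_one], mul_inv_eq_one.1 hone⟩

end IsMinimal

variable (cs L) in
/-- The reflections of `W` lying in the parabolic subgroup `W_L`. -/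
def parabolicReflections : Set W := {t | cs.IsReflection t ∧ t ∈ Subgroup.closure L}

theorem conj_mem_parabolicReflections {x t : W} (hx : x ∈ Subgroup.closure L)
    (ht : t ∈ parabolicReflections cs L) : x * t * x⁻¹ ∈ parabolicReflections cs L :=
  ⟨ht.1.conj x, mul_mem (mul_mem hx ht.2) (inv_mem hx)⟩

theorem mem_parabolicReflections_of_mem (hL : L ⊆ Set.range cs.simple) {s : W} (hs : s ∈ L) :
    s ∈ parabolicReflections cs L :=
  ⟨isReflection_of_mem hL hs, Subgroup.subset_closure hs⟩

variable (cs L) in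
/-- `w` is the longest element of the parabolic subgroup `W_L`, characterised by having every
reflection of `W_L` as an inversion. -/
structure IsLongest (w : W) : Prop where
  subset_range : L ⊆ Set.range cs.simple
  mem : w ∈ Subgroup.closure L
  leftInversions_eq : leftInversions cs w = parabolicReflections cs L

theorem isLongest_of_forall_length_le (hL : L ⊆ Set.range cs.simple) {w : W}
    (hw : w ∈ Subgroup.closure L)
    (hmax : ∀ u ∈ Subgroup.closure L, cs.length u ≤ cs.length w) : IsLongest cs L w := by
  refine ⟨hL, hw, Set.Subset.antisymm
    (fun t ht => ⟨ht.1, leftInversions_subset_closure hL hw ht⟩) ?_⟩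
  rintro t ⟨ht, htL⟩
  exact ⟨ht, (hmax _ (mul_mem htL hw)).lt_of_ne (ht.length_mul_right_ne w)⟩

theorem exists_isLongest (hL : L ⊆ Set.range cs.simple)
    (hfin : (Subgroup.closure L : Set W).Finite) : ∃ w, IsLongest cs L w := by
  obtain ⟨w, hw, hmax⟩ := hfin.exists_maximalFor cs.length _ ⟨1, one_mem _⟩
  exact ⟨w, isLongest_of_forall_length_le hL hw fun u hu => (le_total _ _).elim id (hmax hu)⟩

namespace IsLongest

variable {w : W}

theorem mem_leftInversions_mul_iff (h : IsLongest cs L w) {y t : W}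
    (hy : y ∈ Subgroup.closure L) (ht : t ∈ parabolicReflections cs L) :
    t ∈ leftInversions cs (y * w) ↔ t ∉ leftInversions cs y := by
  have hconj : y⁻¹ * t * y ∈ parabolicReflections cs L := by
    simpa using conj_mem_parabolicReflections (inv_mem hy) ht
  rw [mem_leftInversions_mul, h.leftInversions_eq, Xor]
  tauto

theorem length_mul (h : IsLongest cs L w) {y : W} (hy : y ∈ Subgroup.closure L) :
    cs.length w = cs.length y + cs.length (y * w) := by
  have hadd := length_mul_of_disjoint (cs := cs) (x := y⁻¹) (y := y * w) fun t ht => by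
    have htL : t ∈ parabolicReflections cs L :=
      ⟨ht.1, leftInversions_subset_closure h.subset_range (mul_mem hy h.mem) ht⟩
    rw [← mem_leftInversions_inv, inv_inv]
    exact (h.mem_leftInversions_mul_iff hy htL).1 ht
  rwa [inv_mul_cancel_left, cs.length_inv] at hadd

theorem length_le (h : IsLongest cs L w) {y : W} (hy : y ∈ Subgroup.closure L) :
    cs.length y ≤ cs.length w :=
  (h.length_mul hy).symm ▸ Nat.le_add_right _ _

theorem length_eq (h : IsLongest cs L w) : cs.length w = (parabolicReflections cs L).ncard := by
  rw [← ncard_leftInversions, h.leftInversions_eq]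

theorem unique {w' : W} (h : IsLongest cs L w) (h' : IsLongest cs L w') : w = w' := by
  have hmul := h.length_mul (mul_mem h'.mem (inv_mem h.mem))
  rw [inv_mul_cancel_right, h.length_eq, h'.length_eq] at hmul
  have hone : w' * w⁻¹ = 1 := cs.length_eq_zero_iff.1 (by omega)
  exact (mul_inv_eq_one.1 hone).symm

theorem inv_eq (h : IsLongest cs L w) : w⁻¹ = w :=
  (isLongest_of_forall_length_le h.subset_range (inv_mem h.mem) fun u hu => by
    rw [cs.length_inv]
    exact h.length_le hu).unique h

theorem mul_self (h : IsLongest cs L w) : w * w = 1 := by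
  nth_rw 1 [← h.inv_eq]
  exact inv_mul_cancel w

theorem length_mul_right (h : IsLongest cs L w) {y : W} (hy : y ∈ Subgroup.closure L) :
    cs.length w = cs.length y + cs.length (w * y) := by
  have hmul := h.length_mul (inv_mem hy)
  rwa [cs.length_inv, ← cs.length_inv (_ * _), mul_inv_rev, h.inv_eq, inv_inv] at hmul

theorem length_conj (h : IsLongest cs L w) {y : W} (hy : y ∈ Subgroup.closure L) :
    cs.length (w * y * w) = cs.length y := by
  have hleft := h.length_mul hy
  have hright := h.length_mul_right (mul_mem hy h.mem)
  rw [← mul_assoc] at hright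
  omega

theorem conj_mem (h : IsLongest cs L w) {s : W} (hs : s ∈ L) : w * s * w ∈ L := by
  have hsL := Subgroup.subset_closure hs
  refine mem_of_mem_closure_of_length_eq_one h.subset_range ?_ (mul_mem (mul_mem h.mem hsL) h.mem)
  rw [h.length_conj hsL, length_eq_one_of_mem h.subset_range hs]

theorem eq_of_subset_leftInversions (h : IsLongest cs L w) {v : W} (hv : v ∈ Subgroup.closure L)
    (hdesc : L ⊆ leftInversions cs v) : v = w := by
  by_cases hone : v * w = 1
  · rw [← h.inv_eq]
    exact eq_inv_of_mul_eq_one_left hone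
  · obtain ⟨s, hs, hsN⟩ :=
      exists_mem_leftInversions_of_ne_one h.subset_range (mul_mem hv h.mem) hone
    exact absurd (hdesc hs) ((h.mem_leftInversions_mul_iff hv
      (mem_parabolicReflections_of_mem h.subset_range hs)).1 hsN)

theorem exists_isMinimal_mul_eq (h : IsLongest cs L w) {x : W}
    (hx : L ⊆ leftInversions cs x⁻¹) : ∃ u, IsMinimal cs L u ∧ u * w = x := by
  obtain ⟨u, hu, v, hv, rfl⟩ := LY.exists_isMinimal_mul_eq (cs := cs) (L := L) x
  have hvw : v⁻¹ = w := h.eq_of_subset_leftInversions (inv_mem hv) fun s hs => by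
    have hr := isReflection_of_mem h.subset_range hs
    have hlt := (mem_leftInversions_inv_iff_length hr).1 (hx hs)
    rw [mul_assoc, hu.length_mul h.subset_range hv,
      hu.length_mul h.subset_range (mul_mem hv (Subgroup.subset_closure hs))] at hlt
    exact (mem_leftInversions_inv_iff_length hr).2 (by omega)
  exact ⟨u, hu, by rw [← inv_inv v, hvw, h.inv_eq]⟩

end IsLongest

end Parabolic

/-! ### The Solomon identity twisted by a diagram involution -/

section RightInvariant

variable {G : Type*} [Group G] {F : Type*} [Field F]

/-- `f` is constant on the left cosets `yH`. -/
def IsRightInvariant (H : Subgroup G) (f : G → F) : Prop := ∀ h ∈ H, ∀ y, f (y * h) = f y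

variable (F) in
/-- The projection of functions on a finite group `G` onto the right `H`-invariant ones, obtained
by averaging over `H`. -/
def rightAverage (H : Subgroup G) [Fintype H] : Module.End F (G → F) :=
  (Fintype.card H : F)⁻¹ • ∑ h : H, LinearMap.funLeft F F (· * (h : G))

theorem rightAverage_apply (H : Subgroup G) [Fintype H] (f : G → F) (y : G) :
    rightAverage F H f y = (Fintype.card H : F)⁻¹ * ∑ h : H, f (y * h) := by
  simp [rightAverage, LinearMap.sum_apply, LinearMap.funLeft_apply]

theorem isRightInvariant_rightAverage (H : Subgroup G) [Fintype H] (f : G → F) :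
    IsRightInvariant H (rightAverage F H f) := by
  intro h hh y
  rw [rightAverage_apply, rightAverage_apply,
    ← Equiv.sum_comp (Equiv.mulLeft (⟨h, hh⟩ : H)) fun k : H => f (y * k)]
  simp [mul_assoc]

theorem rightAverage_eq_self [CharZero F] {H : Subgroup G} [Fintype H] {f : G → F}
    (hf : IsRightInvariant H f) : rightAverage F H f = f := by
  funext y
  have hsum : ∑ h : H, f (y * h) = Fintype.card H * f y := by
    simp [hf _ (Subtype.coe_prop _) y]
  rw [rightAverage_apply, hsum, inv_mul_cancel_left₀ (Nat.cast_ne_zero.2 Fintype.card_ne_zero)]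

theorem trace_funLeft_mul_rightAverage [Fintype G] (σ : Equiv.Perm G) (H : Subgroup G)
    [Fintype H] :
    LinearMap.trace F _ (LinearMap.funLeft F F σ.symm * rightAverage F H) =
      (Fintype.card H : F)⁻¹ * (Finset.univ.filter fun z => z⁻¹ * σ z ∈ H).card := by
  have hinner (z : G) : ∑ h : H, (Pi.single (σ z) 1 : G → F) (z * h) =
      if z⁻¹ * σ z ∈ H then 1 else 0 := by
    have heq (h : H) : z * h = σ z ↔ (h : G) = z⁻¹ * σ z := eq_inv_mul_iff_mul_eq.symm
    simp only [Pi.single_apply, heq]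
    split_ifs with hz
    · rw [Finset.sum_eq_single ⟨z⁻¹ * σ z, hz⟩
        (fun h _ hne => if_neg fun hh => hne (Subtype.ext hh)) (by simp), if_pos rfl]
    · exact Finset.sum_eq_zero fun h _ => if_neg fun hh => hz (by rw [← hh]; exact h.2)
  rw [LinearMap.trace_eq_matrix_trace F (Pi.basisFun F G), Matrix.trace, ← Equiv.sum_comp σ]
  simp only [Matrix.diag_apply, LinearMap.toMatrix_apply, Pi.basisFun_apply, Pi.basisFun_repr,
    Module.End.mul_apply, LinearMap.funLeft_apply, rightAverage_apply, Equiv.symm_apply_apply,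
    hinner, ← Finset.mul_sum, Finset.sum_boole]

theorem sum_mul_card_twisted_fixed [Fintype G] (τ : MulAut G) (H : Subgroup G) {φ : G → F}
    (hφ : ∀ z v, φ (z * v * (τ z)⁻¹) = φ v) :
    ∑ x, φ x * (Finset.univ.filter fun z => z⁻¹ * (x * τ z) ∈ H).card =
      Fintype.card G * ∑ v with v ∈ H, φ v := by
  simp only [Finset.card_filter, Nat.cast_sum, Nat.cast_ite, Nat.cast_one, Nat.cast_zero,
    Finset.mul_sum, mul_ite, mul_one, mul_zero]
  rw [Finset.sum_comm]
  have hinner (z : G) : ∑ x, (if z⁻¹ * (x * τ z) ∈ H then φ x else 0) =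
      ∑ v with v ∈ H, φ v := by
    rw [← Equiv.sum_comp ((Equiv.mulRight (τ z)⁻¹).trans (Equiv.mulLeft z)), Finset.sum_filter]
    refine Finset.sum_congr rfl fun v _ => ?_
    have hv : z⁻¹ * (z * (v * (τ z)⁻¹) * τ z) = v := by group
    have hφv : φ (z * (v * (τ z)⁻¹)) = φ v := by rw [← mul_assoc, hφ]
    simp only [Equiv.trans_apply, Equiv.coe_mulRight, Equiv.coe_mulLeft, hv, hφv]
  simp only [hinner, Finset.sum_const, Finset.card_univ, nsmul_eq_mul, Finset.mul_sum]

end RightInvariant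

section DescentBasis

variable {cs : CoxeterSystem M W} {L : Set W} {F : Type*} [Field F]

theorem length_mul_add_length (hL : L ⊆ Set.range cs.simple)
    (hfin : (Subgroup.closure L : Set W).Finite) {x y : W} (hx : L ⊆ leftInversions cs x⁻¹)
    (hy : y ∈ Subgroup.closure L) : cs.length (x * y) + cs.length y = cs.length x := by
  obtain ⟨w, hw⟩ := exists_isLongest hL hfin
  obtain ⟨u, hu, rfl⟩ := hw.exists_isMinimal_mul_eq hx
  rw [mul_assoc, hu.length_mul hL (mul_mem hw.mem hy), hu.length_mul hL hw.mem,
    hw.length_mul_right hy]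
  ring

variable (cs L) in
/-- The right descents of `w` in `L`. -/
def rightDescents (w : W) : Set W := {s ∈ L | s ∈ leftInversions cs w⁻¹}

theorem rightDescents_subset (w : W) : rightDescents cs L w ⊆ L := Set.sep_subset _ _

theorem rightDescents_nonempty (hL : L ⊆ Set.range cs.simple) {w : W}
    (hw : w ∈ Subgroup.closure L) (hne : w ≠ 1) : (rightDescents cs L w).Nonempty :=
  exists_mem_leftInversions_of_ne_one hL (inv_mem hw) (inv_ne_one.2 hne)

theorem rightDescents_one : rightDescents cs L 1 = ∅ := by
  simp [rightDescents, leftInversions_one]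

variable (cs F) in
/-- The indicator function of the coset `w W_D`, where `D` is the set of right descents of `w`.
These functions are unitriangular with respect to length. -/
def descentIndicator (w : Subgroup.closure L) : Subgroup.closure L → F :=
  fun y => if (w : W)⁻¹ * y ∈ Subgroup.closure (rightDescents cs L w) then 1 else 0

theorem descentIndicator_self (w : Subgroup.closure L) : descentIndicator cs F w w = 1 := by
  simp [descentIndicator]

theorem descentIndicator_one (y : Subgroup.closure L) :
    descentIndicator cs F 1 y = if y = 1 then 1 else 0 := by
  simp [descentIndicator, rightDescents_one]

theorem isRightInvariant_descentIndicator {K : Set W} {w : Subgroup.closure L}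
    (hK : K ⊆ rightDescents cs L w) :
    IsRightInvariant ((Subgroup.closure K).subgroupOf (Subgroup.closure L))
      (descentIndicator cs F w) := by
  intro h hh y
  have hmem := Subgroup.closure_mono hK (Subgroup.mem_subgroupOf.1 hh)
  simp only [descentIndicator, Subgroup.coe_mul, ← mul_assoc, Subgroup.mul_mem_cancel_right _ hmem]

theorem descentIndicator_eq_zero [Finite (Subgroup.closure L)] (hL : L ⊆ Set.range cs.simple)
    {w y : Subgroup.closure L}
    (hlen : cs.length (w : W) ≤ cs.length (y : W)) (hne : y ≠ w) :
    descentIndicator cs F w y = 0 := by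
  refine if_neg fun hmem => hne ?_
  have hfin : (Subgroup.closure (rightDescents cs L w) : Set W).Finite :=
    (Set.toFinite (Subgroup.closure L : Set W)).subset
      (Subgroup.closure_mono (rightDescents_subset _))
  have hadd := length_mul_add_length ((rightDescents_subset _).trans hL) hfin
    (x := w) (fun s hs => hs.2) hmem
  rw [mul_inv_cancel_left] at hadd
  exact Subtype.ext (inv_mul_eq_one.1 (cs.length_eq_zero_iff.1 (by omega))).symm

theorem exists_length_maximal_of_ne_zero [Finite (Subgroup.closure L)]
    {c : Subgroup.closure L → F} (hc : c ≠ 0) :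
    ∃ w, c w ≠ 0 ∧
      ∀ v : Subgroup.closure L, cs.length (w : W) < cs.length (v : W) → c v = 0 := by
  have := Fintype.ofFinite (Subgroup.closure L)
  obtain ⟨v, hv⟩ := Function.ne_iff.1 hc
  obtain ⟨w, hw, hmax⟩ := Finset.exists_max_image (Finset.univ.filter (c · ≠ 0))
    (fun w => cs.length (w : W)) ⟨v, by simpa using hv⟩
  refine ⟨w, (Finset.mem_filter.1 hw).2, fun v hlt => ?_⟩
  by_contra hne
  exact hlt.not_ge (hmax v (by simpa using hne))

theorem sum_smul_descentIndicator_apply [Fintype (Subgroup.closure L)]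
    (hL : L ⊆ Set.range cs.simple)
    {c : Subgroup.closure L → F} {y : Subgroup.closure L}
    (hc : ∀ w : Subgroup.closure L, cs.length (y : W) < cs.length (w : W) → c w = 0) :
    (∑ w, c w • descentIndicator cs F w) y = c y := by
  rw [Finset.sum_apply, Finset.sum_eq_single y]
  · simp [descentIndicator_self]
  · intro w _ hw
    rcases lt_or_ge (cs.length (y : W)) (cs.length (w : W)) with hlt | hle
    · simp [hc w hlt]
    · simp [descentIndicator_eq_zero hL hle hw.symm]
  · simp

theorem linearIndependent_descentIndicator [Finite (Subgroup.closure L)]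
    (hL : L ⊆ Set.range cs.simple) : LinearIndependent F (descentIndicator (L := L) cs F) := by
  have := Fintype.ofFinite (Subgroup.closure L)
  rw [Fintype.linearIndependent_iff]
  intro c hc
  refine congrFun (by_contra fun hne => ?_ : c = 0)
  obtain ⟨w, hw, hmax⟩ := exists_length_maximal_of_ne_zero (cs := cs) hne
  have happly := sum_smul_descentIndicator_apply hL hmax
  rw [hc] at happly
  exact hw happly.symm

variable [Fintype (Subgroup.closure L)]

theorem coeff_eq_zero_of_isRightInvariant (hL : L ⊆ Set.range cs.simple) {K : Set W} (hK : K ⊆ L)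
    {c : Subgroup.closure L → F}
    (hinv : IsRightInvariant ((Subgroup.closure K).subgroupOf (Subgroup.closure L))
      (∑ w, c w • descentIndicator cs F w))
    {w : Subgroup.closure L} (hw : ¬ K ⊆ rightDescents cs L w) : c w = 0 := by
  set c' : Subgroup.closure L → F := fun v => if K ⊆ rightDescents cs L v then 0 else c v
    with hc'
  have hinv' : IsRightInvariant ((Subgroup.closure K).subgroupOf (Subgroup.closure L))
      (∑ w, c' w • descentIndicator cs F w) := by
    intro h hh y
    have hsub := hinv h hh y
    simp only [Finset.sum_apply, Pi.smul_apply, smul_eq_mul] at hsub ⊢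
    rw [← sub_eq_zero, ← Finset.sum_sub_distrib] at hsub ⊢
    rw [← hsub]
    refine Finset.sum_congr rfl fun v _ => ?_
    by_cases hv : K ⊆ rightDescents cs L v
    · simp [isRightInvariant_descentIndicator hv h hh y]
    · simp [hc', hv]
  suffices c' = 0 by simpa [hc', hw] using congrFun this w
  by_contra hne
  obtain ⟨v, hv, hmax⟩ := exists_length_maximal_of_ne_zero (cs := cs) hne
  obtain ⟨s, hsK, hsv⟩ := Set.not_subset.1 fun hKv => hv (if_pos hKv)
  have hsr := isReflection_of_mem hL (hK hsK)
  have hlt : cs.length (v : W) < cs.length ((v : W) * s) := by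
    refine lt_of_not_ge fun hle => hsv ⟨hK hsK, ?_⟩
    exact (mem_leftInversions_inv_iff_length hsr).2 (hle.lt_of_ne (hsr.length_mul_left_ne _))
  set s' : Subgroup.closure L := ⟨s, Subgroup.subset_closure (hK hsK)⟩
  have hvs := hinv' s' (Subgroup.mem_subgroupOf.2 (Subgroup.subset_closure hsK)) v
  rw [sum_smul_descentIndicator_apply hL hmax,
    sum_smul_descentIndicator_apply hL fun w hw => hmax w (hlt.trans hw)] at hvs
  exact hv (hvs ▸ hmax (v * s') hlt)

/-- The basis of the space of functions on a finite parabolic subgroup formed by the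
`descentIndicator`s; the right `W_K`-invariant functions are spanned by those of its members
whose descent set contains `K`. -/
def descentBasis (hL : L ⊆ Set.range cs.simple) :
    Module.Basis (Subgroup.closure L) F (Subgroup.closure L → F) :=
  basisOfLinearIndependentOfCardEqFinrank (linearIndependent_descentIndicator hL)
    (Module.finrank_fintype_fun_eq_card F).symm

theorem descentBasis_apply (hL : L ⊆ Set.range cs.simple) (w : Subgroup.closure L) :
    descentBasis (F := F) hL w = descentIndicator cs F w := by
  simp [descentBasis]

theorem descentBasis_repr_eq_zero (hL : L ⊆ Set.range cs.simple) {K : Set W} (hK : K ⊆ L)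
    {f : Subgroup.closure L → F}
    (hinv : IsRightInvariant ((Subgroup.closure K).subgroupOf (Subgroup.closure L)) f)
    {w : Subgroup.closure L} (hw : ¬ K ⊆ rightDescents cs L w) :
    (descentBasis hL).repr f w = 0 := by
  refine coeff_eq_zero_of_isRightInvariant hL hK ?_ hw
  rw [← (descentBasis hL).sum_repr f] at hinv
  simpa only [descentBasis_apply] using hinv

theorem sum_sign_mul_descentIndicator [CharZero F] (hL : L ⊆ Set.range cs.simple)
    {w : Subgroup.closure L} (hw : w ≠ 1) :
    ∑ y : Subgroup.closure L, (-1) ^ cs.length (y : W) * descentIndicator cs F w y = 0 := by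
  obtain ⟨s, hs⟩ := rightDescents_nonempty (cs := cs) hL w.2
    fun h => hw (Subtype.ext h)
  set s' : Subgroup.closure L := ⟨s, Subgroup.subset_closure hs.1⟩
  have hinv (y) : descentIndicator cs F w (y * s') = descentIndicator cs F w y :=
    isRightInvariant_descentIndicator subset_rfl s'
      (Subgroup.mem_subgroupOf.2 (Subgroup.subset_closure hs)) y
  have hsign (y : W) : (-1 : F) ^ cs.length (y * s) = -(-1) ^ cs.length y := by
    rw [neg_one_pow_eq_pow_mod_two, cs.length_mul_mod_two, ← neg_one_pow_eq_pow_mod_two,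
      length_eq_one_of_mem hL hs.1, pow_succ, mul_neg_one]
  refine neg_eq_self.1 ?_
  rw [← Finset.sum_neg_distrib, ← Equiv.sum_comp (Equiv.mulRight s')
    fun y : Subgroup.closure L => (-1) ^ cs.length (y : W) * descentIndicator cs F w y]
  refine Finset.sum_congr rfl fun y _ => ?_
  rw [Equiv.coe_mulRight, hinv, Subgroup.coe_mul, hsign, neg_mul]

theorem descentBasis_repr_one [CharZero F] (hL : L ⊆ Set.range cs.simple)
    (f : Subgroup.closure L → F) :
    (descentBasis hL).repr f 1 = ∑ y : Subgroup.closure L, (-1) ^ cs.length (y : W) * f y := by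
  let signSum : (Subgroup.closure L → F) →ₗ[F] F :=
    ∑ y : Subgroup.closure L, (-1) ^ cs.length (y : W) • LinearMap.proj y
  have happly (f : Subgroup.closure L → F) :
      signSum f = ∑ y : Subgroup.closure L, (-1) ^ cs.length (y : W) * f y := by
    simp [signSum, LinearMap.sum_apply]
  rw [← happly, ← Module.Basis.coord_apply]
  refine LinearMap.congr_fun ((descentBasis hL).ext fun w => ?_) f
  rw [happly, Module.Basis.coord_apply, Module.Basis.repr_self, descentBasis_apply]
  by_cases hw : w = 1
  · simp [hw, descentIndicator_one]
  · rw [sum_sign_mul_descentIndicator hL hw, Finsupp.single_eq_of_ne (Ne.symm hw)]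

end DescentBasis

section Parabolic

/-- The elements of the parabolic subgroup `W_L`, as a finset; it is empty if `W_L` is infinite. -/
def parabolicFinset (L : Set W) : Finset W :=
  if h : (Subgroup.closure L : Set W).Finite then h.toFinset else ∅

theorem mem_parabolicFinset {L : Set W} (hfin : (Subgroup.closure L : Set W).Finite) {w : W} :
    w ∈ parabolicFinset L ↔ w ∈ Subgroup.closure L := by
  simp [parabolicFinset, hfin]

theorem card_parabolicFinset_ne_zero {F : Type*} [Field F] [CharZero F] {L : Set W}
    (hfin : (Subgroup.closure L : Set W).Finite) : ((parabolicFinset L).card : F) ≠ 0 :=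
  Nat.cast_ne_zero.2 (Finset.card_ne_zero_of_mem ((mem_parabolicFinset hfin).2 (one_mem _)))

theorem sum_parabolicFinset {V : Type*} [AddCommMonoid V] {L : Set W} [Fintype (Subgroup.closure L)]
    (f : W → V) : ∑ w ∈ parabolicFinset L, f w = ∑ w : Subgroup.closure L, f w :=
  Finset.sum_subtype _ (fun _ => mem_parabolicFinset (Set.toFinite _)) f

theorem card_parabolicFinset {L : Set W} [Fintype (Subgroup.closure L)] :
    (parabolicFinset L).card = Fintype.card (Subgroup.closure L) := by
  rw [Finset.card_eq_sum_ones, sum_parabolicFinset, ← Finset.card_eq_sum_ones, Finset.card_univ]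

/-- The smallest `τ`-stable set containing `A`, for an involution `τ`. -/
def stableHull (τ : MulAut W) (A : Finset W) : Set W := {s | s ∈ A ∨ τ s ∈ A}

theorem stableHull_mono (τ : MulAut W) {A A' : Finset W} (h : A ⊆ A') :
    stableHull τ A ⊆ stableHull τ A' :=
  fun _ => Or.imp (@h _) (@h _)

theorem stableHull_subset_iff {τ : MulAut W} (hτ : Function.Involutive τ) {A : Finset W}
    {D : Set W} : stableHull τ A ⊆ D ↔ ∀ s ∈ A, s ∈ D ∧ τ s ∈ D := by
  refine ⟨fun h s hs => ⟨h (Or.inl hs), h (Or.inr (by rwa [hτ s]))⟩, fun h s hs => ?_⟩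
  rcases hs with hs | hs
  · exact (h s hs).1
  · simpa only [hτ s] using (h _ hs).2

theorem apply_mem_stableHull_iff {τ : MulAut W} (hτ : Function.Involutive τ) {A : Finset W}
    {s : W} : τ s ∈ stableHull τ A ↔ s ∈ stableHull τ A := by
  simp only [stableHull, Set.mem_ofPred_eq, hτ s, or_comm]

theorem map_closure_stableHull {τ : MulAut W} (hτ : Function.Involutive τ) (A : Finset W) :
    (Subgroup.closure (stableHull τ A)).map τ.toMonoidHom =
      Subgroup.closure (stableHull τ A) := by
  rw [MonoidHom.map_closure]
  congr 1
  ext s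
  refine ⟨?_, fun hs => ⟨τ s, (apply_mem_stableHull_iff hτ).2 hs, hτ s⟩⟩
  rintro ⟨t, ht, rfl⟩
  exact (apply_mem_stableHull_iff hτ).2 ht

theorem sum_powerset_stableHull_subset {R : Type*} [CommRing R] {τ : MulAut W}
    (hτ : Function.Involutive τ) (A : Finset W) (D : Set W) (c : R) :
    ∑ A' ∈ A.powerset, (-1) ^ A'.card * (if stableHull τ A' ⊆ D then c else 0) =
      if ∃ s ∈ A, s ∈ D ∧ τ s ∈ D then 0 else c := by
  have hpow : A.powerset.filter (stableHull τ · ⊆ D) =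
      (A.filter fun s => s ∈ D ∧ τ s ∈ D).powerset := by
    ext A'
    simp only [Finset.mem_filter, Finset.mem_powerset, stableHull_subset_iff hτ,
      Finset.subset_iff, forall_and]
  have hsum := congrArg (Int.cast : ℤ → R)
    (Finset.sum_powerset_neg_one_pow_card (x := A.filter fun s => s ∈ D ∧ τ s ∈ D))
  simp only [mul_ite, mul_zero]
  rw [← Finset.sum_filter, hpow, ← Finset.sum_mul]
  push_cast at hsum
  rw [hsum]
  by_cases hex : ∃ s ∈ A, s ∈ D ∧ τ s ∈ D
  · rw [if_pos hex, if_neg (by simpa [Finset.filter_eq_empty_iff] using hex), zero_mul]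
  · rw [if_neg hex, if_pos (by simpa [Finset.filter_eq_empty_iff] using hex), one_mul]

end Parabolic

section Solomon

variable {cs : CoxeterSystem M W} {L : Set W} {F : Type*} [Field F]

/-- The restriction of an automorphism to a stable subgroup. -/
def restrictAut {H : Subgroup W} {τ : MulAut W} (h : H.map τ.toMonoidHom = H) : MulAut H :=
  (τ.subgroupMap H).trans (MulEquiv.subgroupCongr h)

/-- The map `y ↦ x * τ y` on a subgroup stable under `τ`, for `x` in this subgroup. -/
def twistedLeftMul {H : Subgroup W} {τ : MulAut W} (h : H.map τ.toMonoidHom = H) (x : H) :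
    Equiv.Perm H :=
  (restrictAut h).toEquiv.trans (Equiv.mulLeft x)

theorem coe_twistedLeftMul {H : Subgroup W} {τ : MulAut W} (h : H.map τ.toMonoidHom = H)
    (x y : H) : (twistedLeftMul h x y : W) = x * τ y := rfl

theorem IsRightInvariant.comp_twistedLeftMul_symm {H K : Subgroup W} {τ : MulAut W}
    (h : H.map τ.toMonoidHom = H) (x : H) {f : H → F} (hKH : K ≤ H)
    (hf : IsRightInvariant (K.subgroupOf H) f) :
    IsRightInvariant ((K.map τ.toMonoidHom).subgroupOf H)
      (LinearMap.funLeft F F (twistedLeftMul h x).symm f) := by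
  intro v hv y
  obtain ⟨k, hk, hkv⟩ := Subgroup.mem_map.1 (Subgroup.mem_subgroupOf.1 hv)
  obtain ⟨z, rfl⟩ := (twistedLeftMul h x).surjective y
  have hzk : twistedLeftMul h x z * v = twistedLeftMul h x (z * ⟨k, hKH hk⟩) := by
    ext
    simp only [Subgroup.coe_mul, coe_twistedLeftMul, ← hkv, map_mul, mul_assoc]
    rfl
  rw [hzk, LinearMap.funLeft_apply, LinearMap.funLeft_apply, Equiv.symm_apply_apply,
    Equiv.symm_apply_apply, hf _ (Subgroup.mem_subgroupOf.2 hk)]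

variable [Fintype (Subgroup.closure L)]

theorem trace_mul_rightAverage_eq_sum [CharZero F] (hL : L ⊆ Set.range cs.simple)
    {K : Set W} (hK : K ⊆ L)
    (T : Module.End F (Subgroup.closure L → F))
    (hT : ∀ f, IsRightInvariant ((Subgroup.closure K).subgroupOf (Subgroup.closure L)) f →
      IsRightInvariant ((Subgroup.closure K).subgroupOf (Subgroup.closure L)) (T f)) :
    LinearMap.trace F _
        (T * rightAverage F ((Subgroup.closure K).subgroupOf (Subgroup.closure L))) =
      ∑ w : Subgroup.closure L, if K ⊆ rightDescents cs L w then
        (descentBasis hL).repr (T (descentIndicator cs F w)) w else 0 := by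
  rw [LinearMap.trace_eq_matrix_trace F (descentBasis hL), Matrix.trace]
  refine Finset.sum_congr rfl fun w _ => ?_
  rw [Matrix.diag_apply, LinearMap.toMatrix_apply, Module.End.mul_apply, descentBasis_apply]
  split_ifs with hw
  · rw [rightAverage_eq_self (isRightInvariant_descentIndicator hw)]
  · exact descentBasis_repr_eq_zero hL hK (hT _ (isRightInvariant_rightAverage _ _)) hw

theorem trace_twistedLeftMul_mul_rightAverage {K : Set W} (hK : K ⊆ L) {τ : MulAut W}
    (h : (Subgroup.closure L).map τ.toMonoidHom = Subgroup.closure L) (x : Subgroup.closure L) :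
    LinearMap.trace F _ (LinearMap.funLeft F F (twistedLeftMul h x).symm *
        rightAverage F ((Subgroup.closure K).subgroupOf (Subgroup.closure L))) =
      ((parabolicFinset K).card : F)⁻¹ * (Finset.univ.filter fun z : Subgroup.closure L =>
        (z : W)⁻¹ * (x * τ z) ∈ Subgroup.closure K).card := by
  have hle : Subgroup.closure K ≤ Subgroup.closure L := Subgroup.closure_mono hK
  have : Fintype (Subgroup.closure K) :=
    ((Set.toFinite (Subgroup.closure L : Set W)).subset hle).fintype
  rw [trace_funLeft_mul_rightAverage, card_parabolicFinset,
    Fintype.card_congr (Subgroup.subgroupOfEquivOfLe hle).toEquiv]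
  rfl

theorem descentBasis_repr_twistedLeftMul_eq_zero (hL : L ⊆ Set.range cs.simple) {τ : MulAut W}
    (hτL : ∀ s ∈ L, τ s ∈ L) (h : (Subgroup.closure L).map τ.toMonoidHom = Subgroup.closure L)
    (x w : Subgroup.closure L) {s : W} (hs : s ∈ rightDescents cs L w)
    (hτs : τ s ∉ rightDescents cs L w) :
    (descentBasis hL).repr
      (LinearMap.funLeft F F (twistedLeftMul h x).symm (descentIndicator cs F w)) w = 0 := by
  have hinv := (isRightInvariant_descentIndicator (F := F) (cs := cs)
    (subset_refl (rightDescents cs L (w : W)))).comp_twistedLeftMul_symm h x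
      (Subgroup.closure_mono (rightDescents_subset _))
  rw [MonoidHom.map_closure] at hinv
  refine descentBasis_repr_eq_zero hL ?_ hinv fun hsub => hτs (hsub ⟨s, hs, rfl⟩)
  rintro _ ⟨t, ht, rfl⟩
  exact hτL t ht.1

theorem descentBasis_repr_twistedLeftMul_one [CharZero F] (hL : L ⊆ Set.range cs.simple)
    {τ : MulAut W} (h : (Subgroup.closure L).map τ.toMonoidHom = Subgroup.closure L)
    (x : Subgroup.closure L) :
    (descentBasis hL).repr
      (LinearMap.funLeft F F (twistedLeftMul h x).symm (descentIndicator cs F 1)) 1 =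
        (-1) ^ cs.length (x : W) := by
  have hone : twistedLeftMul h x 1 = x := Subtype.ext (by simp [coe_twistedLeftMul])
  rw [descentBasis_repr_one, ← Equiv.sum_comp (twistedLeftMul h x)]
  simp [LinearMap.funLeft_apply, descentIndicator_one, hone]

/-- A twisted form of Solomon's identity for the permutation characters of the parabolic
subgroups. The multiplicities are traces of the projections onto the right `W_A`-invariant
functions; in the descent basis only `w = 1` survives the alternating sum. -/
theorem sum_sign_mul_card_twisted_fixed [CharZero F] (hL : L ⊆ Set.range cs.simple)
    {τ : MulAut W} (hτ : Function.Involutive τ) {A₀ : Finset W} (hA₀ : stableHull τ A₀ = L)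
    (h : (Subgroup.closure L).map τ.toMonoidHom = Subgroup.closure L) (x : Subgroup.closure L) :
    ∑ A ∈ A₀.powerset, (-1 : F) ^ A.card * ((parabolicFinset (stableHull τ A)).card : F)⁻¹ *
      (Finset.univ.filter fun z : Subgroup.closure L =>
        (z : W)⁻¹ * (x * τ z) ∈ Subgroup.closure (stableHull τ A)).card =
      (-1) ^ cs.length (x : W) := by
  have hτL : ∀ s ∈ L, τ s ∈ L := hA₀ ▸ fun s => (apply_mem_stableHull_iff hτ).2
  let c (w : Subgroup.closure L) : F := (descentBasis hL).repr
    (LinearMap.funLeft F F (twistedLeftMul h x).symm (descentIndicator cs F w)) w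
  have hterm (A) (hA : A ∈ A₀.powerset) :
      (-1 : F) ^ A.card * ((parabolicFinset (stableHull τ A)).card : F)⁻¹ *
        (Finset.univ.filter fun z : Subgroup.closure L =>
          (z : W)⁻¹ * (x * τ z) ∈ Subgroup.closure (stableHull τ A)).card =
      ∑ w : Subgroup.closure L, (-1) ^ A.card *
        if stableHull τ A ⊆ rightDescents cs L w then c w else 0 := by
    have hAL : stableHull τ A ⊆ L := hA₀ ▸ stableHull_mono τ (Finset.mem_powerset.1 hA)
    rw [mul_assoc, ← trace_twistedLeftMul_mul_rightAverage hAL h x,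
      trace_mul_rightAverage_eq_sum hL hAL _ fun f hf => by
        simpa only [map_closure_stableHull hτ] using
          hf.comp_twistedLeftMul_symm h x (Subgroup.closure_mono hAL), Finset.mul_sum]
  rw [Finset.sum_congr rfl hterm, Finset.sum_comm]
  simp only [sum_powerset_stableHull_subset hτ]
  rw [Finset.sum_eq_single 1 ?_ (by simp)]
  · simp [rightDescents_one, descentBasis_repr_twistedLeftMul_one, c]
  · intro w _ hw
    obtain ⟨s, hs⟩ := rightDescents_nonempty (cs := cs) hL w.2 fun h1 => hw (Subtype.ext h1)
    by_cases hτs : τ s ∈ rightDescents cs L w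
    · refine if_pos ?_
      rcases hA₀.symm.subset hs.1 with hsA | hsA
      · exact ⟨s, hsA, hs, hτs⟩
      · exact ⟨τ s, hsA, hτs, by rwa [hτ s]⟩
    · rw [show c w = 0 from descentBasis_repr_twistedLeftMul_eq_zero hL hτL h x w hs hτs,
        ite_self]

end Solomon

theorem sum_mul_card_twisted_fixed_closure {F : Type*} [Field F] {L K : Set W} (hK : K ⊆ L)
    [Fintype (Subgroup.closure L)] {τ : MulAut W}
    (h : (Subgroup.closure L).map τ.toMonoidHom = Subgroup.closure L) {φ : W → F}
    (hφ : ∀ z ∈ Subgroup.closure L, ∀ v ∈ Subgroup.closure L, φ (z * v * (τ z)⁻¹) = φ v) :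
    ∑ x : Subgroup.closure L, φ x * (Finset.univ.filter fun z : Subgroup.closure L =>
        (z : W)⁻¹ * (x * τ z) ∈ Subgroup.closure K).card =
      (parabolicFinset L).card * ∑ v ∈ parabolicFinset K, φ v := by
  have hfin : (Subgroup.closure K : Set W).Finite :=
    (Set.toFinite (Subgroup.closure L : Set W)).subset (Subgroup.closure_mono hK)
  have hsum := sum_mul_card_twisted_fixed (restrictAut h)
    ((Subgroup.closure K).subgroupOf (Subgroup.closure L)) (φ := fun v => φ v)
    fun z v => hφ z z.2 v v.2
  rw [card_parabolicFinset]
  refine hsum.trans (congrArg _ (Finset.sum_bij (fun v _ => (v : W)) ?_ ?_ ?_ fun _ _ => rfl))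
  · exact fun v hv => (mem_parabolicFinset hfin).2 (Finset.mem_filter.1 hv).2
  · exact fun _ _ _ _ => Subtype.ext
  · intro v hv
    rw [mem_parabolicFinset hfin] at hv
    exact ⟨⟨v, Subgroup.closure_mono hK hv⟩, by simpa [Subgroup.mem_subgroupOf] using hv, rfl⟩

theorem sum_sign_mul_mean {F : Type*} [Field F] [CharZero F] {cs : CoxeterSystem M W} {L : Set W}
    (hL : L ⊆ Set.range cs.simple) (hfin : (Subgroup.closure L : Set W).Finite) {τ : MulAut W}
    (hτ : Function.Involutive τ) {A₀ : Finset W} (hA₀ : stableHull τ A₀ = L) {φ : W → F}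
    (hφ : ∀ z ∈ Subgroup.closure L, ∀ v ∈ Subgroup.closure L, φ (z * v * (τ z)⁻¹) = φ v) :
    ∑ A ∈ A₀.powerset, (-1 : F) ^ A.card * (((parabolicFinset (stableHull τ A)).card : F)⁻¹ *
        ∑ v ∈ parabolicFinset (stableHull τ A), φ v) =
      ((parabolicFinset L).card : F)⁻¹ *
        ∑ v ∈ parabolicFinset L, (-1) ^ cs.length v * φ v := by
  have : Fintype (Subgroup.closure L) := hfin.fintype
  have h : (Subgroup.closure L).map τ.toMonoidHom = Subgroup.closure L :=
    hA₀ ▸ map_closure_stableHull hτ A₀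
  rw [eq_inv_mul_iff_mul_eq₀ (card_parabolicFinset_ne_zero hfin), Finset.mul_sum,
    sum_parabolicFinset (L := L)]
  simp only [← sum_sign_mul_card_twisted_fixed (F := F) hL hτ hA₀ h, Finset.sum_mul]
  rw [Finset.sum_comm]
  refine Finset.sum_congr rfl fun A hA => ?_
  have hAL : stableHull τ A ⊆ L := hA₀ ▸ stableHull_mono τ (Finset.mem_powerset.1 hA)
  calc (parabolicFinset L).card * ((-1) ^ A.card *
        (((parabolicFinset (stableHull τ A)).card : F)⁻¹ *
          ∑ v ∈ parabolicFinset (stableHull τ A), φ v))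
      = (-1) ^ A.card * ((parabolicFinset (stableHull τ A)).card : F)⁻¹ *
          ((parabolicFinset L).card * ∑ v ∈ parabolicFinset (stableHull τ A), φ v) := by ring
    _ = _ := by
      rw [← sum_mul_card_twisted_fixed_closure hAL h hφ, Finset.mul_sum]
      exact Finset.sum_congr rfl fun x _ => by ring

/-! ### Twisted Poincaré polynomials -/

section TwistedPoincare

variable {cs : CoxeterSystem M W} {L : Set W} {τ : MulAut W}

theorem apply_mem_closure (hτL : ∀ s ∈ L, τ s ∈ L) {x : W} (hx : x ∈ Subgroup.closure L) :
    τ x ∈ Subgroup.closure L :=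
  (Subgroup.closure_le ((Subgroup.closure L).comap τ.toMonoidHom)).2
    (fun s hs => Subgroup.subset_closure (hτL s hs)) hx

theorem length_apply_wordProd_le (hτL : ∀ s ∈ L, τ s ∈ L) (hL : L ⊆ Set.range cs.simple)
    {ω : List B} (hω : ∀ i ∈ ω, cs.simple i ∈ L) :
    cs.length (τ (cs.wordProd ω)) ≤ ω.length := by
  induction ω with
  | nil => simp
  | cons i ω ih =>
    rw [List.forall_mem_cons] at hω
    rw [cs.wordProd_cons, map_mul, List.length_cons]
    have hi := length_eq_one_of_mem hL (hτL _ hω.1)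
    have hle := cs.length_mul_le (τ (cs.simple i)) (τ (cs.wordProd ω))
    have := ih hω.2
    omega

theorem length_apply (hτ : Function.Involutive τ) (hL : L ⊆ Set.range cs.simple)
    (hτL : ∀ s ∈ L, τ s ∈ L) {x : W} (hx : x ∈ Subgroup.closure L) :
    cs.length (τ x) = cs.length x := by
  have hle {y : W} (hy : y ∈ Subgroup.closure L) : cs.length (τ y) ≤ cs.length y := by
    obtain ⟨ω, hω, rfl, hωL⟩ := exists_isReduced_of_mem_closure hL hy
    exact (length_apply_wordProd_le hτL hL hωL).trans_eq hω.eq.symm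
  refine (hle hx).antisymm ?_
  simpa only [hτ x] using hle (apply_mem_closure hτL hx)

theorem apply_mem_leftInversions_inv_iff (hτ : Function.Involutive τ)
    (hL : L ⊆ Set.range cs.simple) (hτL : ∀ s ∈ L, τ s ∈ L) {x s : W}
    (hx : x ∈ Subgroup.closure L) (hs : s ∈ L) :
    τ s ∈ leftInversions cs (τ x)⁻¹ ↔ s ∈ leftInversions cs x⁻¹ := by
  rw [mem_leftInversions_inv_iff_length (isReflection_of_mem hL hs),
    mem_leftInversions_inv_iff_length (isReflection_of_mem hL (hτL s hs)), ← map_mul,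
    length_apply hτ hL hτL hx,
    length_apply hτ hL hτL (mul_mem hx (Subgroup.subset_closure hs))]

variable {R : Type*} [CommRing R]

variable (cs) in
/-- The Poincaré polynomial `P_{L,τ}(q) = ∑ q ^ ℓ(x)`, over the elements `x` of `W_L` fixed by
`τ`. -/
def twistedPoincare (τ : MulAut W) (L : Set W) (q : R) : R :=
  ∑ x ∈ parabolicFinset L with τ x = x, q ^ cs.length x

variable (cs) in
/-- The quotient `P_{L,τ}(q) / P_{K,τ}(q)` for `K ⊆ L`, as a sum over the minimal representatives
of the `τ`-fixed cosets of `W_K` in `W_L`. -/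
def twistedPoincareQuotient (τ : MulAut W) (L K : Set W) (q : R) : R :=
  ∑ x ∈ parabolicFinset L with τ x = x ∧ IsMinimal cs K x, q ^ cs.length x

theorem twistedPoincareQuotient_self (hL : L ⊆ Set.range cs.simple)
    (hfin : (Subgroup.closure L : Set W).Finite) (q : R) :
    twistedPoincareQuotient cs τ L L q = 1 := by
  rw [twistedPoincareQuotient, Finset.sum_eq_single 1]
  · simp
  · intro x hx hne
    rw [Finset.mem_filter, mem_parabolicFinset hfin] at hx
    obtain ⟨s, hs, hmem⟩ :=
      exists_mem_leftInversions_of_ne_one hL (inv_mem hx.1) (inv_ne_one.2 hne)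
    exact absurd hmem (hx.2.2 s hs)
  · intro h
    rw [Finset.mem_filter, mem_parabolicFinset hfin] at h
    exact absurd ⟨one_mem _, map_one _, isMinimal_one⟩ h

theorem isMinimal_apply (hτ : Function.Involutive τ) (hL : L ⊆ Set.range cs.simple)
    (hτL : ∀ s ∈ L, τ s ∈ L) {K : Set W} (hK : K ⊆ L) (hτK : ∀ s ∈ K, τ s ∈ K) {u : W}
    (huL : u ∈ Subgroup.closure L) (hu : IsMinimal cs K u) : IsMinimal cs K (τ u) := by
  intro s hs
  rw [← hτ s, apply_mem_leftInversions_inv_iff hτ hL hτL huL (hK (hτK s hs))]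
  exact hu _ (hτK s hs)

theorem twistedPoincare_eq_mul_quotient (hτ : Function.Involutive τ)
    (hL : L ⊆ Set.range cs.simple) (hfin : (Subgroup.closure L : Set W).Finite)
    (hτL : ∀ s ∈ L, τ s ∈ L) {K : Set W} (hK : K ⊆ L) (hτK : ∀ s ∈ K, τ s ∈ K) (q : R) :
    twistedPoincare cs τ L q = twistedPoincareQuotient cs τ L K q * twistedPoincare cs τ K q := by
  have hKL : Subgroup.closure K ≤ Subgroup.closure L := Subgroup.closure_mono hK
  have hKS := hK.trans hL
  have memL {x : W} := mem_parabolicFinset (w := x) hfin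
  have memK {x : W} := mem_parabolicFinset (w := x) (hfin.subset hKL)
  rw [twistedPoincare, twistedPoincare, twistedPoincareQuotient, Finset.sum_mul_sum,
    ← Finset.sum_product']
  refine (Finset.sum_bij (fun p _ => p.1 * p.2) ?_ ?_ ?_ ?_).symm
  · rintro ⟨u, v⟩ h
    simp only [Finset.mem_product, Finset.mem_filter, memL, memK] at h ⊢
    exact ⟨mul_mem h.1.1 (hKL h.2.1), by rw [map_mul, h.1.2.1, h.2.2]⟩
  · rintro ⟨u, v⟩ h ⟨u', v'⟩ h' heq
    simp only [Finset.mem_product, Finset.mem_filter, memL, memK] at h h'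
    exact Prod.ext_iff.2 (h.1.2.2.eq_of_mul_eq hKS h'.1.2.2 h.2.1 h'.2.1 heq)
  · intro x hx
    rw [Finset.mem_filter, memL] at hx
    obtain ⟨u, hu, v, hv, rfl⟩ := exists_isMinimal_mul_eq (cs := cs) (L := K) x
    have huL : u ∈ Subgroup.closure L := (Subgroup.mul_mem_cancel_right _ (hKL hv)).1 hx.1
    obtain ⟨hτu, hτv⟩ := (isMinimal_apply hτ hL hτL hK hτK huL hu).eq_of_mul_eq hKS hu
      (apply_mem_closure hτK hv) hv (by rw [← map_mul, hx.2])
    refine ⟨(u, v), ?_, rfl⟩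
    simp only [Finset.mem_product, Finset.mem_filter, memL, memK]
    exact ⟨⟨huL, hτu, hu⟩, hv, hτv⟩
  · rintro ⟨u, v⟩ h
    simp only [Finset.mem_product, Finset.mem_filter, memL, memK] at h
    rw [h.1.2.2.length_mul hKS h.2.1, pow_add]

theorem IsLongest.apply_eq {w : W} (hw : IsLongest cs L w) (hτ : Function.Involutive τ)
    (hτL : ∀ s ∈ L, τ s ∈ L) : τ w = w := by
  refine (hw.unique (isLongest_of_forall_length_le hw.subset_range
    (apply_mem_closure hτL hw.mem) fun u hu => ?_)).symm
  rw [length_apply hτ hw.subset_range hτL hw.mem]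
  exact hw.length_le hu

theorem IsLongest.eq_iff_leftInversions_inv {w : W} (hw : IsLongest cs L w)
    (hτ : Function.Involutive τ) {A₀ : Finset W} (hA₀ : stableHull τ A₀ = L) {x : W}
    (hx : x ∈ Subgroup.closure L) (hτx : τ x = x) :
    x = w ↔ ∀ s ∈ A₀, s ∈ leftInversions cs x⁻¹ := by
  have hτL : ∀ s ∈ L, τ s ∈ L := hA₀ ▸ fun s => (apply_mem_stableHull_iff hτ).2
  constructor
  · rintro rfl s hs
    rw [hw.inv_eq, hw.leftInversions_eq]
    exact mem_parabolicReflections_of_mem hw.subset_range (hA₀ ▸ Or.inl hs)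
  · intro h
    rw [← hw.inv_eq, ← inv_eq_iff_eq_inv]
    refine hw.eq_of_subset_leftInversions (inv_mem hx) fun s hs => ?_
    rcases hA₀.symm.subset hs with hsA | hsA
    · exact h s hsA
    · rw [← apply_mem_leftInversions_inv_iff hτ hw.subset_range hτL hx hs, hτx]
      exact h _ hsA

theorem sum_sign_mul_twistedPoincareQuotient {w : W} (hw : IsLongest cs L w)
    (hfin : (Subgroup.closure L : Set W).Finite) (hτ : Function.Involutive τ) {A₀ : Finset W}
    (hA₀ : stableHull τ A₀ = L) (q : R) :
    ∑ A ∈ A₀.powerset, (-1) ^ A.card * twistedPoincareQuotient cs τ L (stableHull τ A) q =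
      q ^ cs.length w := by
  have hτL : ∀ s ∈ L, τ s ∈ L := hA₀ ▸ fun s => (apply_mem_stableHull_iff hτ).2
  have hterm (A : Finset W) :
      (-1) ^ A.card * twistedPoincareQuotient cs τ L (stableHull τ A) q =
        ∑ x ∈ parabolicFinset L with τ x = x, (-1) ^ A.card *
          if stableHull τ A ⊆ (leftInversions cs x⁻¹)ᶜ then q ^ cs.length x else 0 := by
    rw [twistedPoincareQuotient, ← Finset.filter_filter, Finset.sum_filter, Finset.mul_sum]
    rfl
  have hfixed (x) (hx : x ∈ (parabolicFinset L).filter fun x => τ x = x) :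
      (if ∃ s ∈ A₀, s ∈ (leftInversions cs x⁻¹)ᶜ ∧ τ s ∈ (leftInversions cs x⁻¹)ᶜ then 0
        else q ^ cs.length x) = if x = w then q ^ cs.length x else 0 := by
    rw [Finset.mem_filter, mem_parabolicFinset hfin] at hx
    rw [← ite_not (p := x = w), hw.eq_iff_leftInversions_inv hτ hA₀ hx.1 hx.2]
    push Not
    refine if_congr ?_ rfl rfl
    refine exists_congr fun s => and_congr_right fun hs => and_iff_left_of_imp fun hsx => ?_
    rwa [Set.mem_compl_iff, ← hx.2, apply_mem_leftInversions_inv_iff hτ hw.subset_range hτL hx.1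
      (hA₀ ▸ Or.inl hs)]
  rw [Finset.sum_congr rfl fun A _ => hterm A, Finset.sum_comm]
  simp only [sum_powerset_stableHull_subset hτ]
  refine (Finset.sum_congr rfl fun x hx => ?_).trans
    ((Finset.sum_ite_eq' _ w fun x => q ^ cs.length x).trans ?_)
  · convert hfixed x hx
  rw [if_pos]
  exact Finset.mem_filter.2 ⟨(mem_parabolicFinset hfin).2 hw.mem, hw.apply_eq hτ hτL⟩

end TwistedPoincare

/-! ### Traces on homogeneous polynomials -/

section Diagonal

variable {F V ι : Type*} [Field F] [AddCommGroup V] [Module F V]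

theorem toMatrix_eq_diagonal [Fintype ι] [DecidableEq ι] (b : Module.Basis ι F V)
    {T : Module.End F V} {c : ι → F}
    (hb : ∀ i, T (b i) = c i • b i) : LinearMap.toMatrix b b T = Matrix.diagonal c := by
  ext i j
  rw [LinearMap.toMatrix_apply, hb, map_smul, b.repr_self, Matrix.diagonal_apply]
  rcases eq_or_ne i j with rfl | hij
  · simp
  · simp [hij]

theorem isCompl_eigenspace_of_mul_self_eq_one [CharZero F] {T : Module.End F V} (hT : T * T = 1) :
    IsCompl (T.eigenspace 1) (T.eigenspace (-1)) := by
  have hTT (v : V) : T (T v) = v := LinearMap.congr_fun hT v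
  refine ⟨Submodule.disjoint_def.2 fun x h₁ h₂ => ?_,
    codisjoint_iff.2 (eq_top_iff.2 fun x _ => Submodule.mem_sup.2
      ⟨(2 : F)⁻¹ • (x + T x), ?_, (2 : F)⁻¹ • (x - T x), ?_, ?_⟩)⟩
  · rw [Module.End.mem_eigenspace_iff, one_smul] at h₁
    rw [Module.End.mem_eigenspace_iff, neg_one_smul, h₁] at h₂
    rw [eq_neg_iff_add_eq_zero, ← two_smul F x] at h₂
    exact (smul_eq_zero.1 h₂).resolve_left two_ne_zero
  · rw [Module.End.mem_eigenspace_iff, map_smul, map_add, hTT, one_smul, add_comm]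
  · rw [Module.End.mem_eigenspace_iff, map_smul, map_sub, hTT, neg_one_smul, ← smul_neg, neg_sub]
  · rw [← smul_add, add_add_sub_cancel, ← two_smul F x, smul_smul,
      inv_mul_cancel₀ two_ne_zero, one_smul]

theorem exists_eigenbasis_of_mul_self_eq_one [CharZero F] [FiniteDimensional F V]
    {T : Module.End F V} (hT : T * T = 1) :
    ∃ b : Module.Basis (Fin (Module.finrank F (T.eigenspace 1)) ⊕
        Fin (Module.finrank F (T.eigenspace (-1)))) F V,
      ∀ i, T (b i) = Sum.elim (fun _ => (1 : F)) (fun _ => -1) i • b i := by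
  let b := ((Module.finBasis F (T.eigenspace 1)).prod (Module.finBasis F (T.eigenspace (-1)))).map
    (Submodule.prodEquivOfIsCompl _ _ (isCompl_eigenspace_of_mul_self_eq_one hT))
  refine ⟨b, Sum.forall.2 ⟨fun j => ?_, fun j => ?_⟩⟩
  · simpa [b] using Module.End.mem_eigenspace_iff.1 (Module.finBasis F (T.eigenspace 1) j).2
  · simpa [b] using Module.End.mem_eigenspace_iff.1 (Module.finBasis F (T.eigenspace (-1)) j).2

theorem det_eq_neg_one_pow_finrank_eigenspace [CharZero F] [FiniteDimensional F V]
    {T : Module.End F V} (hT : T * T = 1) :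
    LinearMap.det T = (-1) ^ Module.finrank F (T.eigenspace (-1)) := by
  obtain ⟨b, hb⟩ := exists_eigenbasis_of_mul_self_eq_one hT
  rw [← LinearMap.det_toMatrix b T, toMatrix_eq_diagonal b hb, Matrix.det_diagonal,
    Fintype.prod_sum_type]
  simp

theorem trace_eq_trace_of_apply_injective {U : Type*} [AddCommGroup U] [Module F U]
    [FiniteDimensional F U] [FiniteDimensional F V] {m : U →ₗ[F] V} (hm : Function.Injective m)
    {X : Module.End F V} {Y : Module.End F U} (hXY : ∀ u, X (m u) = m (Y u))
    (hX : ∀ v, ∃ u, X v = m u) : LinearMap.trace F V X = LinearMap.trace F U Y := by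
  obtain ⟨g, hg⟩ := m.exists_leftInverse_of_injective (LinearMap.ker_eq_bot.2 hm)
  have hgm (u : U) : g (m u) = u := LinearMap.congr_fun hg u
  have hXm : m ∘ₗ (g ∘ₗ X) = X := LinearMap.ext fun v => by
    obtain ⟨u, hu⟩ := hX v
    rw [LinearMap.comp_apply, LinearMap.comp_apply, hu, hgm]
  have hYm : (g ∘ₗ X) ∘ₗ m = Y := LinearMap.ext fun u => by
    rw [LinearMap.comp_apply, LinearMap.comp_apply, hXY, hgm]
  rw [← hYm, LinearMap.trace_comp_comm', hXm]

end Diagonal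

section Molien

open MvPolynomial

variable {F ι : Type*} [Field F]

theorem eq_zero_of_isHomogeneous_of_dvd {Δ p : MvPolynomial ι F} {N n : ℕ}
    (hΔ : Δ.IsHomogeneous N) (hp : p.IsHomogeneous n) (hn : n < N) (hdvd : Δ ∣ p) : p = 0 := by
  let _ := gradedAlgebra (σ := ι) (R := F)
  obtain ⟨g, rfl⟩ := hdvd
  rw [← homogeneousComponent_eq_self hp, ← decomposition.decompose'_apply]
  exact DirectSum.coe_decompose_mul_of_left_mem_of_not_le (homogeneousSubmodule ι F) hΔ hn.not_ge

theorem exists_isHomogeneous_eq_mul_of_dvd {Δ p : MvPolynomial ι F} {N n : ℕ}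
    (hΔ : Δ.IsHomogeneous N) (hp : p.IsHomogeneous (N + n)) (hdvd : Δ ∣ p) :
    ∃ g : MvPolynomial ι F, g.IsHomogeneous n ∧ p = Δ * g := by
  let _ := gradedAlgebra (σ := ι) (R := F)
  obtain ⟨g, rfl⟩ := hdvd
  refine ⟨homogeneousComponent n g, homogeneousComponent_isHomogeneous n g, ?_⟩
  rw [← decomposition.decompose'_apply]
  conv_lhs => rw [← homogeneousComponent_eq_self hp, ← decomposition.decompose'_apply]
  refine (DirectSum.coe_decompose_mul_of_left_mem_of_le (homogeneousSubmodule ι F) hΔ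
    (Nat.le_add_right N n)).trans ?_
  rw [Nat.add_sub_cancel_left]
  rfl

variable [Fintype ι]

/-- The linear polynomial `∑ vᵢ Xᵢ` attached to a vector `v`. -/
def linearForm : (ι → F) →ₗ[F] MvPolynomial ι F :=
  Fintype.linearCombination F X

theorem linearForm_single (i : ι) : linearForm (Pi.single i 1) = (X i : MvPolynomial ι F) := by
  rw [linearForm, Fintype.linearCombination_apply_single, one_smul]

theorem coeff_linearForm (v : ι → F) (i : ι) :
    (linearForm v).coeff (Finsupp.single i 1) = v i := by
  rw [linearForm, Fintype.linearCombination_apply, coeff_sum, Finset.sum_eq_single i]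
  · simp
  · intro j _ hj
    rw [coeff_smul, coeff_X, if_neg (by rwa [Finsupp.single_left_inj one_ne_zero]), smul_zero]
  · simp

theorem linearForm_injective :
    Function.Injective (linearForm : (ι → F) →ₗ[F] MvPolynomial ι F) := fun v w h => by
  funext i
  rw [← coeff_linearForm v, h, coeff_linearForm]

theorem isHomogeneous_linearForm (v : ι → F) : (linearForm v).IsHomogeneous 1 := by
  rw [linearForm, Fintype.linearCombination_apply]
  refine IsHomogeneous.sum _ _ _ fun i _ => ?_
  rw [smul_eq_C_mul]
  exact isHomogeneous_C_mul_X _ _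

theorem irreducible_linearForm {v : ι → F} (hv : v ≠ 0) : Irreducible (linearForm v) := by
  have hne : linearForm v ≠ 0 := (map_ne_zero_iff _ linearForm_injective).2 hv
  refine irreducible_of_totalDegree_eq_one ((isHomogeneous_linearForm v).totalDegree hne)
    fun x hx => isUnit_iff_ne_zero.2 ?_
  rintro rfl
  refine hv (funext fun i => ?_)
  rw [← coeff_linearForm v]
  exact zero_dvd_iff.1 (hx _)

theorem mem_span_singleton_of_linearForm_dvd {v w : ι → F} (h : linearForm v ∣ linearForm w) :
    w ∈ Submodule.span F {v} := by
  obtain ⟨g, hg, hmul⟩ := exists_isHomogeneous_eq_mul_of_dvd (n := 0) (isHomogeneous_linearForm v)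
    (isHomogeneous_linearForm w) h
  obtain ⟨c, rfl⟩ : ∃ c, g = C c :=
    ⟨_, (homogeneousComponent_eq_self hg).symm.trans (homogeneousComponent_zero g)⟩
  refine Submodule.mem_span_singleton.2 ⟨c, linearForm_injective ?_⟩
  rw [hmul, map_smul, smul_eq_C_mul, mul_comm]

/-- The action of an endomorphism `A` of `F^ι` on the polynomial ring, viewed as the symmetric
algebra of `F^ι`. -/
def linearSubst (A : Module.End F (ι → F)) : MvPolynomial ι F →ₐ[F] MvPolynomial ι F :=
  aeval fun i => linearForm (A (Pi.single i 1))

theorem linearSubst_linearForm (A : Module.End F (ι → F)) (v : ι → F) :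
    linearSubst A (linearForm v) = linearForm (A v) := by
  suffices (linearSubst A).toLinearMap ∘ₗ linearForm = linearForm ∘ₗ A from
    LinearMap.congr_fun this v
  refine (Pi.basisFun F ι).ext fun i => ?_
  simp only [Pi.basisFun_apply, LinearMap.comp_apply, linearForm_single,
    AlgHom.toLinearMap_apply]
  rw [linearSubst, aeval_X]

theorem linearSubst_one (p : MvPolynomial ι F) : linearSubst 1 p = p := by
  simp only [linearSubst, Module.End.one_apply, linearForm_single, aeval_X_left, AlgHom.id_apply]

theorem linearSubst_mul (A A' : Module.End F (ι → F)) (p : MvPolynomial ι F) :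
    linearSubst (A * A') p = linearSubst A (linearSubst A' p) := by
  suffices linearSubst (A * A') = (linearSubst A).comp (linearSubst A') from
    AlgHom.congr_fun this p
  refine algHom_ext fun i => ?_
  rw [AlgHom.comp_apply, ← linearForm_single, linearSubst_linearForm, linearSubst_linearForm,
    linearSubst_linearForm]
  rfl

theorem isHomogeneous_linearSubst (A : Module.End F (ι → F)) {n : ℕ} {p : MvPolynomial ι F}
    (hp : p.IsHomogeneous n) : (linearSubst A p).IsHomogeneous n := by
  simpa only [one_mul, linearSubst] using
    IsHomogeneous.aeval (n := 1) hp _ fun i => isHomogeneous_linearForm (A (Pi.single i 1))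

theorem linearSubst_monomial {A : Module.End F (ι → F)} {c : ι → F}
    (hA : ∀ i, A (Pi.single i 1) = c i • Pi.single i 1) (d : ι →₀ ℕ) (a : F) :
    linearSubst A (monomial d a) = (∏ i, c i ^ d i) • monomial d a := by
  rw [linearSubst, aeval_monomial, Finsupp.prod_fintype _ _ fun _ => pow_zero _]
  simp only [hA, map_smul, linearForm_single, smul_pow]
  rw [Finset.prod_smul, monomial_eq, Finsupp.prod_fintype _ _ fun _ => pow_zero _, mul_smul_comm]
  rfl

/-- The action of `A` on homogeneous polynomials of degree `n`. -/
def homogeneousSubst (n : ℕ) (A : Module.End F (ι → F)) :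
    Module.End F (homogeneousSubmodule ι F n) :=
  (linearSubst A).toLinearMap.restrict fun _ => isHomogeneous_linearSubst A

theorem coe_homogeneousSubst (n : ℕ) (A : Module.End F (ι → F))
    (p : homogeneousSubmodule ι F n) :
    (homogeneousSubst n A p : MvPolynomial ι F) = linearSubst A p :=
  rfl

theorem homogeneousSubst_mul (n : ℕ) (A A' : Module.End F (ι → F)) :
    homogeneousSubst n (A * A') = homogeneousSubst n A * homogeneousSubst n A' :=
  LinearMap.ext fun p => Subtype.ext (linearSubst_mul A A' p)

variable (F ι) in
/-- The monomials of degree `n` form a basis of the space of homogeneous polynomials. -/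
def monomialBasis (n : ℕ) :
    Module.Basis ((Finset.univ.finsuppAntidiag n : Finset (ι →₀ ℕ)) : Set (ι →₀ ℕ)) F
      (homogeneousSubmodule ι F n) :=
  (basisRestrictSupport F _).map (LinearEquiv.ofEq _ _ (by
    rw [homogeneousSubmodule_eq_finsupp_supported, restrictSupport]
    congr
    ext d
    simp [Finsupp.degree_eq_sum]))

theorem coe_monomialBasis {n : ℕ} (d : (Finset.univ.finsuppAntidiag n : Finset (ι →₀ ℕ))) :
    (monomialBasis F ι n d : MvPolynomial ι F) = monomial d.1 1 := by
  have hd : monomial d.1 (1 : F) ∈ restrictSupport F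
      ((Finset.univ.finsuppAntidiag n : Finset (ι →₀ ℕ)) : Set (ι →₀ ℕ)) :=
    (monomial_mem_restrictSupport F).2 (Or.inl d.2)
  have : basisRestrictSupport F _ d = ⟨monomial d.1 (1 : F), hd⟩ := by
    refine Module.Basis.apply_eq_iff.2 (Finsupp.ext fun e => ?_)
    refine (coeff_monomial e.1 d.1 (1 : F)).trans ?_
    simp only [Finsupp.single_apply, Subtype.ext_iff]
  exact congrArg Subtype.val this

/-- The trace of `A` on homogeneous polynomials of degree `n`, the `n`-th symmetric power of
`F^ι`. -/
def symTrace (n : ℕ) (A : Module.End F (ι → F)) : F :=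
  LinearMap.trace F _ (homogeneousSubst n A)

theorem symTrace_mul_comm (n : ℕ) (A A' : Module.End F (ι → F)) :
    symTrace n (A * A') = symTrace n (A' * A) := by
  rw [symTrace, symTrace, homogeneousSubst_mul, homogeneousSubst_mul, LinearMap.trace_mul_comm]

theorem symTrace_eq_sum_of_single {A : Module.End F (ι → F)} {c : ι → F}
    (hA : ∀ i, A (Pi.single i 1) = c i • Pi.single i 1) (n : ℕ) :
    symTrace n A = ∑ d ∈ Finset.univ.finsuppAntidiag n, ∏ i, c i ^ d i := by
  have hdiag (d) : homogeneousSubst n A (monomialBasis F ι n d) =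
      (∏ i, c i ^ d.1 i) • monomialBasis F ι n d := by
    refine Subtype.ext ?_
    rw [coe_homogeneousSubst, Submodule.coe_smul, coe_monomialBasis, linearSubst_monomial hA]
  rw [symTrace, LinearMap.trace_eq_matrix_trace F (monomialBasis F ι n),
    toMatrix_eq_diagonal _ hdiag, Matrix.trace_diagonal]
  exact Finset.sum_coe_sort (Finset.univ.finsuppAntidiag n) fun d => ∏ i, c i ^ d i

theorem symTrace_neg (n : ℕ) (A : Module.End F (ι → F)) :
    symTrace n (-A) = (-1) ^ n * symTrace n A := by
  suffices homogeneousSubst n (-A) = (-1 : F) ^ n • homogeneousSubst n A by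
    rw [symTrace, this, map_smul, smul_eq_mul, symTrace]
  have hscalar : homogeneousSubst n (-1 : Module.End F (ι → F)) = (-1 : F) ^ n • 1 := by
    refine (monomialBasis F ι n).ext fun d => Subtype.ext ?_
    rw [coe_homogeneousSubst, coe_monomialBasis, linearSubst_monomial (c := fun _ => -1)
      fun i => (neg_one_smul F _).symm, Finset.prod_pow_eq_pow_sum,
      (Finset.mem_finsuppAntidiag.1 d.2).1]
    exact congrArg _ (coe_monomialBasis d).symm
  rw [← neg_one_mul A, homogeneousSubst_mul, hscalar, smul_one_mul]

/-- The generating function of the traces of `A` on the symmetric powers of `F^ι`; this is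
`1 / det (1 - X A)`. -/
def molienSeries (A : Module.End F (ι → F)) : PowerSeries F :=
  PowerSeries.mk fun n => symTrace n A

theorem molienSeries_mul_comm (A A' : Module.End F (ι → F)) :
    molienSeries (A * A') = molienSeries (A' * A) := by
  simp only [molienSeries, symTrace_mul_comm _ A A']

theorem molienSeries_neg (A : Module.End F (ι → F)) :
    molienSeries (-A) = PowerSeries.evalNegHom (molienSeries A) := by
  ext n
  simp [molienSeries, PowerSeries.evalNegHom, symTrace_neg]

theorem molienSeries_mul_prod_of_single {A : Module.End F (ι → F)} {c : ι → F}
    (hA : ∀ i, A (Pi.single i 1) = c i • Pi.single i 1) :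
    molienSeries A * ∏ i, (1 - PowerSeries.C (c i) * PowerSeries.X) = 1 := by
  have hgeom : molienSeries A = ∏ i, PowerSeries.mk fun n => c i ^ n := by
    ext n
    simp only [molienSeries, PowerSeries.coeff_mk, PowerSeries.coeff_prod,
      symTrace_eq_sum_of_single hA]
  rw [hgeom, ← Finset.prod_mul_distrib]
  refine Finset.prod_eq_one fun i _ => ?_
  have := congrArg (PowerSeries.rescale (c i)) (PowerSeries.mk_one_mul_one_sub_eq_one F)
  simpa [PowerSeries.rescale_mk, PowerSeries.rescale_X] using this

theorem molienSeries_mul_prod {κ : Type*} [Fintype κ] (b : Module.Basis κ F (ι → F))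
    {A : Module.End F (ι → F)} {c : κ → F} (hA : ∀ i, A (b i) = c i • b i) :
    molienSeries A * ∏ i, (1 - PowerSeries.C (c i) * PowerSeries.X) = 1 := by
  let e : ι ≃ κ := (Pi.basisFun F ι).indexEquiv b
  let P : (ι → F) ≃ₗ[F] ι → F := (Pi.basisFun F ι).equiv b e
  have hP (i) : P (Pi.single i 1) = b (e i) := by
    rw [← Pi.basisFun_apply, Module.Basis.equiv_apply]
  have hconj : molienSeries A = molienSeries (P.symm.toLinearMap * (A * P.toLinearMap)) := by
    rw [molienSeries_mul_comm, mul_assoc]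
    refine congrArg molienSeries (LinearMap.ext fun v => ?_)
    rw [Module.End.mul_apply, Module.End.mul_apply, LinearEquiv.coe_coe, LinearEquiv.coe_coe,
      P.apply_symm_apply]
  rw [hconj, ← e.prod_comp]
  refine molienSeries_mul_prod_of_single fun i => ?_
  rw [Module.End.mul_apply, Module.End.mul_apply, LinearEquiv.coe_coe, LinearEquiv.coe_coe, hP,
    hA, map_smul, ← hP, P.symm_apply_apply]

theorem molienSeries_mul_of_mul_self_eq_one [CharZero F] {T : Module.End F (ι → F)}
    (hT : T * T = 1) :
    molienSeries T *
      ((1 - PowerSeries.X) ^ Module.finrank F (T.eigenspace 1) *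
        (1 + PowerSeries.X) ^ Module.finrank F (T.eigenspace (-1))) = 1 := by
  obtain ⟨b, hb⟩ := exists_eigenbasis_of_mul_self_eq_one hT
  have := molienSeries_mul_prod b hb
  rw [Fintype.prod_sum_type] at this
  simpa using this

end Molien

/-! ### Reflection representations and discriminants -/

section ReflectionRep

variable {cs : CoxeterSystem M W} {L K : Set W} {F V : Type*} [Field F] [AddCommGroup V]
  [Module F V] {ρ : W →* Module.End F V} {α : W → V}

variable (cs) in
/-- `ρ` maps the reflections `t` of `W_L` to reflections of `V`, with pairwise non-proportional
roots `α t`. No invariant form and no choice of positive roots is part of the notion. -/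
structure IsReflectionRep (L : Set W) (ρ : W →* Module.End F V) (α : W → V) : Prop where
  root_ne_zero : ∀ t ∈ parabolicReflections cs L, α t ≠ 0
  apply_root : ∀ t ∈ parabolicReflections cs L, ρ t (α t) = -α t
  apply_sub_mem : ∀ t ∈ parabolicReflections cs L, ∀ v, ρ t v - v ∈ Submodule.span F {α t}
  root_notMem_span : ∀ t ∈ parabolicReflections cs L, ∀ t' ∈ parabolicReflections cs L,
    t ≠ t' → α t' ∉ Submodule.span F {α t}

theorem parabolicReflections_mono (h : K ⊆ L) :
    parabolicReflections cs K ⊆ parabolicReflections cs L :=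
  fun _ ht => ⟨ht.1, Subgroup.closure_mono h ht.2⟩

theorem IsReflectionRep.mono (h : IsReflectionRep cs L ρ α) (hK : K ⊆ L) :
    IsReflectionRep cs K ρ α where
  root_ne_zero t ht := h.root_ne_zero t (parabolicReflections_mono hK ht)
  apply_root t ht := h.apply_root t (parabolicReflections_mono hK ht)
  apply_sub_mem t ht := h.apply_sub_mem t (parabolicReflections_mono hK ht)
  root_notMem_span t ht t' ht' := h.root_notMem_span t (parabolicReflections_mono hK ht) t'
    (parabolicReflections_mono hK ht')

theorem IsReflectionRep.mem_span_of_apply_eq_neg [CharZero F] (h : IsReflectionRep cs L ρ α)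
    {t : W} (ht : t ∈ parabolicReflections cs L) {v : V} (hv : ρ t v = -v) :
    v ∈ Submodule.span F {α t} := by
  have hmem := h.apply_sub_mem t ht v
  rw [hv, ← neg_add', ← two_smul F v, neg_mem_iff] at hmem
  exact (Submodule.smul_mem_iff _ two_ne_zero).1 hmem

theorem IsReflectionRep.map_root_mem_span [CharZero F] (h : IsReflectionRep cs L ρ α) {t t' : W}
    (ht : t ∈ parabolicReflections cs L) (ht' : t' ∈ parabolicReflections cs L)
    {T : Module.End F V} (hT : T * ρ t = ρ t' * T) : T (α t) ∈ Submodule.span F {α t'} := by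
  refine h.mem_span_of_apply_eq_neg ht' ?_
  rw [← Module.End.mul_apply, ← hT, Module.End.mul_apply, h.apply_root t ht, map_neg]

variable (cs) in
/-- `T` is an involution of `V` inducing the involution `τ` of `W`, such that `T` acts on the
roots of `W_L` without reversing any of them. -/
structure IsTwist (L : Set W) (ρ : W →* Module.End F V) (α : W → V) (τ : MulAut W)
    (T : Module.End F V) : Prop where
  involutive : Function.Involutive τ
  isReflection_apply : ∀ t, cs.IsReflection t → cs.IsReflection (τ t)
  mul_self : T * T = 1
  mul_apply : ∀ x, T * ρ x = ρ (τ x) * T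
  apply_root_ne : ∀ t ∈ parabolicReflections cs L, T (α t) ≠ -α t

theorem IsTwist.mono {τ : MulAut W} {T : Module.End F V} (h : IsTwist cs L ρ α τ T)
    (hK : K ⊆ L) : IsTwist cs K ρ α τ T :=
  { h with apply_root_ne := fun t ht => h.apply_root_ne t (parabolicReflections_mono hK ht) }

end ReflectionRep

section Discriminant

open MvPolynomial

variable {F ι : Type*} [Field F] [Fintype ι]

theorem linearForm_dvd_of_linearSubst_eq_neg [CharZero F] {A : Module.End F (ι → F)} {a : ι → F}
    (hA : ∀ v, A v - v ∈ Submodule.span F {a}) {p : MvPolynomial ι F}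
    (hp : linearSubst A p = -p) : linearForm a ∣ p := by
  let I : Ideal (MvPolynomial ι F) := Ideal.span {linearForm a}
  have hmk : (Ideal.Quotient.mkₐ F I).comp (linearSubst A) = Ideal.Quotient.mkₐ F I := by
    refine algHom_ext fun i => ?_
    obtain ⟨c, hc⟩ := Submodule.mem_span_singleton.1 (hA (Pi.single i 1))
    rw [AlgHom.comp_apply, ← linearForm_single, linearSubst_linearForm, ← sub_eq_zero, ← map_sub,
      ← map_sub, ← hc, map_smul, map_smul, Ideal.Quotient.mkₐ_eq_mk,
      Ideal.Quotient.eq_zero_iff_mem.2 (Ideal.mem_span_singleton_self _), smul_zero]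
  have hmem : (2 : F) • p ∈ I := by
    have := AlgHom.congr_fun hmk p
    rw [AlgHom.comp_apply, hp, Ideal.Quotient.mkₐ_eq_mk, Ideal.Quotient.eq, ← neg_add',
      ← two_smul F p, neg_mem_iff] at this
    exact this
  rw [Ideal.mem_span_singleton, smul_eq_C_mul] at hmem
  exact ((two_ne_zero.isUnit.map C).dvd_mul_left).1 hmem

theorem prod_comp_eq_of_injOn {R κ : Type*} [CommMonoid R] {S : Finset κ} {σ : κ → κ}
    (hσ : Set.MapsTo σ S S) (hinj : Set.InjOn σ S) (φ : κ → R) :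
    ∏ t ∈ S, φ (σ t) = ∏ t ∈ S, φ t :=
  Finset.prod_nbij σ hσ hinj (Finset.surjOn_of_injOn_of_card_le σ hσ hinj le_rfl) fun _ _ => rfl

/- If `T` is an involution, there are linear functionals `f` with `f ∘ T = f` not vanishing on any
`a t`; comparing `∏ f (a t)` before and after `T` shows that the scalar is `1`. -/
theorem linearSubst_prod_linearForm_eq_self [CharZero F] {κ : Type*} {T : Module.End F (ι → F)}
    (hT : T * T = 1) {S : Finset κ} {a : κ → ι → F} {σ : κ → κ} (hσ : Set.MapsTo σ S S)
    (hinj : Set.InjOn σ S) (hspan : ∀ t ∈ S, T (a t) ∈ Submodule.span F {a (σ t)})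
    (hne : ∀ t ∈ S, T (a t) ≠ -a t) :
    linearSubst T (∏ t ∈ S, linearForm (a t)) = ∏ t ∈ S, linearForm (a t) := by
  obtain ⟨g, hg⟩ := Module.exists_dual_forall_apply_ne_zero (K := F)
    (fun t : S => a t + T (a t)) fun t h => hne t t.2 (eq_neg_of_add_eq_zero_right h)
  let f : Module.Dual F (ι → F) := g ∘ₗ (1 + T)
  have hfT (v) : f (T v) = f v := by
    have hTv : T (T v) = v := LinearMap.congr_fun hT v
    simp only [f, LinearMap.comp_apply, LinearMap.add_apply, Module.End.one_apply, hTv, add_comm]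
  have hf : ∏ t ∈ S, f (a t) ≠ 0 := Finset.prod_ne_zero_iff.2 fun t ht => hg ⟨t, ht⟩
  choose! c hc using fun t ht => Submodule.mem_span_singleton.1 (hspan t ht)
  have hc1 : ∏ t ∈ S, c t = 1 := by
    refine mul_right_cancel₀ hf ?_
    rw [one_mul]
    conv_lhs => rw [← prod_comp_eq_of_injOn hσ hinj fun t => f (a t), ← Finset.prod_mul_distrib]
    refine Finset.prod_congr rfl fun t ht => ?_
    rw [← smul_eq_mul, ← map_smul, hc t ht, hfT]
  calc linearSubst T (∏ t ∈ S, linearForm (a t))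
      = ∏ t ∈ S, c t • linearForm (a (σ t)) := by
        rw [map_prod]
        refine Finset.prod_congr rfl fun t ht => ?_
        rw [linearSubst_linearForm, ← hc t ht, map_smul]
    _ = ∏ t ∈ S, linearForm (a t) := by
        rw [Finset.prod_smul, hc1, one_smul,
          prod_comp_eq_of_injOn hσ hinj fun t => linearForm (a t)]

variable {cs : CoxeterSystem M W} {L K : Set W} {ρ : W →* Module.End F (ι → F)} {α : W → ι → F}

variable (cs) in
/-- The finset of reflections of a finite parabolic subgroup `W_L`. -/
def reflectionFinset (L : Set W) : Finset W := (parabolicFinset L).filter cs.IsReflection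

theorem mem_reflectionFinset (hfin : (Subgroup.closure L : Set W).Finite) {t : W} :
    t ∈ reflectionFinset cs L ↔ t ∈ parabolicReflections cs L := by
  rw [reflectionFinset, Finset.mem_filter, mem_parabolicFinset hfin]
  exact and_comm

theorem IsLongest.card_reflectionFinset {w : W} (hw : IsLongest cs L w)
    (hfin : (Subgroup.closure L : Set W).Finite) :
    (reflectionFinset cs L).card = cs.length w := by
  rw [hw.length_eq, ← Set.ncard_coe_finset]
  congr 1
  ext t
  exact mem_reflectionFinset hfin

variable (cs) in
/-- The product of the roots of `W_L`, in the polynomial ring. -/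
def rootProduct (L : Set W) (α : W → ι → F) : MvPolynomial ι F :=
  ∏ t ∈ reflectionFinset cs L, linearForm (α t)

theorem isHomogeneous_rootProduct (L : Set W) (α : W → ι → F) :
    (rootProduct cs L α).IsHomogeneous (reflectionFinset cs L).card := by
  simpa [rootProduct] using IsHomogeneous.prod (reflectionFinset cs L) (fun t => linearForm (α t))
    (fun _ => 1) fun t _ => isHomogeneous_linearForm (α t)

theorem IsReflectionRep.rootProduct_ne_zero (h : IsReflectionRep cs L ρ α)
    (hfin : (Subgroup.closure L : Set W).Finite) : rootProduct cs L α ≠ 0 :=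
  Finset.prod_ne_zero_iff.2 fun t ht => (map_ne_zero_iff _ linearForm_injective).2
    (h.root_ne_zero t ((mem_reflectionFinset hfin).1 ht))

theorem IsReflectionRep.linearSubst_twist_rootProduct [CharZero F]
    (h : IsReflectionRep cs L ρ α) (hfin : (Subgroup.closure L : Set W).Finite) {τ : MulAut W}
    {T : Module.End F (ι → F)} (hT : IsTwist cs L ρ α τ T) (hτL : ∀ s ∈ L, τ s ∈ L) :
    linearSubst T (rootProduct cs L α) = rootProduct cs L α := by
  have mem {t : W} := mem_reflectionFinset (cs := cs) (t := t) hfin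
  have hτ {t : W} (ht : t ∈ parabolicReflections cs L) : τ t ∈ parabolicReflections cs L :=
    ⟨hT.isReflection_apply t ht.1, apply_mem_closure hτL ht.2⟩
  exact linearSubst_prod_linearForm_eq_self hT.mul_self (fun t ht => mem.2 (hτ (mem.1 ht)))
    τ.injective.injOn (fun t ht => h.map_root_mem_span (mem.1 ht) (hτ (mem.1 ht)) (hT.mul_apply t))
    fun t ht => hT.apply_root_ne t (mem.1 ht)

theorem IsReflectionRep.linearSubst_reflection_rootProduct [CharZero F]
    (h : IsReflectionRep cs L ρ α) (hfin : (Subgroup.closure L : Set W).Finite) {s : W}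
    (hs : s ∈ parabolicReflections cs L) :
    linearSubst (ρ s) (rootProduct cs L α) = -rootProduct cs L α := by
  have mem {t : W} := mem_reflectionFinset (cs := cs) (t := t) hfin
  have hfix : linearSubst (ρ s) (∏ t ∈ (reflectionFinset cs L).erase s, linearForm (α t)) =
      ∏ t ∈ (reflectionFinset cs L).erase s, linearForm (α t) := by
    have mem_erase {t : W} : t ∈ (reflectionFinset cs L).erase s ↔
        t ≠ s ∧ t ∈ parabolicReflections cs L := by rw [Finset.mem_erase, mem]
    refine linearSubst_prod_linearForm_eq_self (σ := MulAut.conj s)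
      (by rw [← map_mul, hs.1.mul_self, map_one]) (fun t ht => ?_) (MulAut.conj s).injective.injOn
      (fun t ht => ?_) fun t ht hneg => ?_
    · rw [Finset.mem_coe, mem_erase] at ht ⊢
      refine ⟨fun heq => ht.1 ?_, conj_mem_parabolicReflections hs.2 ht.2⟩
      rwa [MulAut.conj_apply, mul_inv_eq_iff_eq_mul, mul_right_inj] at heq
    · rw [mem_erase] at ht
      refine h.map_root_mem_span ht.2 (conj_mem_parabolicReflections hs.2 ht.2) ?_
      rw [← map_mul, ← map_mul, inv_mul_cancel_right]
    · rw [mem_erase] at ht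
      exact h.root_notMem_span s hs t ht.2 ht.1.symm (h.mem_span_of_apply_eq_neg hs hneg)
  rw [rootProduct, ← Finset.mul_prod_erase _ _ (mem.2 hs), map_mul, hfix, linearSubst_linearForm,
    h.apply_root s hs, map_neg, neg_mul]

theorem neg_one_pow_length_mul {R : Type*} [Ring R] (x y : W) :
    (-1 : R) ^ cs.length (x * y) = (-1) ^ cs.length x * (-1) ^ cs.length y := by
  rw [← pow_add]
  exact neg_one_pow_congr (by rw [Nat.even_iff, Nat.even_iff, cs.length_mul_mod_two])

theorem IsReflectionRep.linearSubst_rootProduct [CharZero F] (h : IsReflectionRep cs L ρ α)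
    (hL : L ⊆ Set.range cs.simple) (hfin : (Subgroup.closure L : Set W).Finite) {x : W}
    (hx : x ∈ Subgroup.closure L) :
    linearSubst (ρ x) (rootProduct cs L α) = (-1 : F) ^ cs.length x • rootProduct cs L α := by
  obtain ⟨ω, -, rfl, hω⟩ := exists_isReduced_of_mem_closure hL hx
  clear hx
  induction ω with
  | nil => simp [linearSubst_one]
  | cons i ω ih =>
    rw [List.forall_mem_cons] at hω
    rw [cs.wordProd_cons, map_mul, linearSubst_mul, ih hω.2, map_smul,
      h.linearSubst_reflection_rootProduct hfin (mem_parabolicReflections_of_mem hL hω.1),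
      neg_one_pow_length_mul, cs.length_simple, pow_one, neg_one_mul, neg_smul, smul_neg]

/- The roots are pairwise non-associated irreducible linear forms. -/
theorem IsReflectionRep.rootProduct_dvd [CharZero F] (h : IsReflectionRep cs L ρ α)
    (hfin : (Subgroup.closure L : Set W).Finite) {p : MvPolynomial ι F}
    (hp : ∀ t ∈ parabolicReflections cs L, linearSubst (ρ t) p = -p) :
    rootProduct cs L α ∣ p := by
  have mem {t : W} := mem_reflectionFinset (cs := cs) (t := t) hfin
  refine Finset.prod_dvd_of_isRelPrime (fun t ht t' ht' hne => ?_) fun t ht =>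
    linearForm_dvd_of_linearSubst_eq_neg (h.apply_sub_mem t (mem.1 ht)) (hp t (mem.1 ht))
  rw [Finset.mem_coe, mem] at ht ht'
  exact (irreducible_linearForm (h.root_ne_zero t ht)).isRelPrime_iff_not_dvd.2 fun hdvd =>
    h.root_notMem_span t ht t' ht' hne (mem_span_singleton_of_linearForm_dvd hdvd)

end Discriminant

section MeanMolien

open MvPolynomial

variable {F ι : Type*} [Field F] [Fintype ι] {cs : CoxeterSystem M W} {L K : Set W}
  {ρ : W →* Module.End F (ι → F)} {α : W → ι → F} {T : Module.End F (ι → F)}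

variable (cs) in
/-- The action of `∑ (-1) ^ ℓ(x) x T`, over the elements `x` of `W_L`, on homogeneous polynomials
of degree `n`. -/
def antisymmetrizer (L : Set W) (ρ : W →* Module.End F (ι → F)) (T : Module.End F (ι → F))
    (n : ℕ) : Module.End F (homogeneousSubmodule ι F n) :=
  ∑ x ∈ parabolicFinset L, (-1 : F) ^ cs.length x • homogeneousSubst n (ρ x * T)

theorem coe_antisymmetrizer (n : ℕ) (p : homogeneousSubmodule ι F n) :
    (antisymmetrizer cs L ρ T n p : MvPolynomial ι F) =
      ∑ x ∈ parabolicFinset L, (-1 : F) ^ cs.length x • linearSubst (ρ x * T) p := by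
  rw [antisymmetrizer, LinearMap.sum_apply, Submodule.coe_sum]
  rfl

theorem trace_antisymmetrizer (n : ℕ) :
    LinearMap.trace F _ (antisymmetrizer cs L ρ T n) =
      ∑ x ∈ parabolicFinset L, (-1) ^ cs.length x * symTrace n (ρ x * T) := by
  simp only [antisymmetrizer, map_sum, map_smul, smul_eq_mul, symTrace]

theorem linearSubst_antisymmetrizer (hfin : (Subgroup.closure L : Set W).Finite) (n : ℕ)
    (p : homogeneousSubmodule ι F n) {t : W} (ht : t ∈ parabolicReflections cs L) :
    linearSubst (ρ t) (antisymmetrizer cs L ρ T n p) =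
      -(antisymmetrizer cs L ρ T n p : MvPolynomial ι F) := by
  have hmem (x) (hx : x ∈ parabolicFinset L) : t * x ∈ parabolicFinset L := by
    rw [mem_parabolicFinset hfin] at hx ⊢
    exact mul_mem ht.2 hx
  have hinv (x) : t * (t * x) = x := by rw [← mul_assoc, ht.1.mul_self, one_mul]
  rw [coe_antisymmetrizer, map_sum, ← Finset.sum_neg_distrib]
  refine Finset.sum_nbij' (t * ·) (t * ·) hmem hmem (fun x _ => hinv x) (fun x _ => hinv x)
    fun x _ => ?_
  rw [map_smul, ← linearSubst_mul, ← mul_assoc, ← map_mul, neg_one_pow_length_mul,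
    ht.1.odd_length.neg_one_pow, neg_one_mul, neg_smul, neg_neg]

theorem IsReflectionRep.rootProduct_dvd_antisymmetrizer [CharZero F]
    (h : IsReflectionRep cs L ρ α) (hfin : (Subgroup.closure L : Set W).Finite) (n : ℕ)
    (p : homogeneousSubmodule ι F n) :
    rootProduct cs L α ∣ antisymmetrizer cs L ρ T n p :=
  h.rootProduct_dvd hfin fun _ => linearSubst_antisymmetrizer hfin n p

theorem IsReflectionRep.sum_sign_symTrace_of_lt [CharZero F] (h : IsReflectionRep cs L ρ α)
    (hfin : (Subgroup.closure L : Set W).Finite) {n : ℕ}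
    (hn : n < (reflectionFinset cs L).card) :
    ∑ x ∈ parabolicFinset L, (-1) ^ cs.length x * symTrace n (ρ x * T) = 0 := by
  rw [← trace_antisymmetrizer]
  convert map_zero (LinearMap.trace F (homogeneousSubmodule ι F n))
  exact LinearMap.ext fun p => Subtype.ext <| eq_zero_of_isHomogeneous_of_dvd
    (isHomogeneous_rootProduct L α) (antisymmetrizer cs L ρ T n p).2 hn
    (h.rootProduct_dvd_antisymmetrizer hfin n p)

/- Multiplication by the product of the roots intertwines the symmetrizer in degree `n` with the
antisymmetrizer in degree `N + n`, whose image consists of multiples of that product. -/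
theorem IsReflectionRep.sum_sign_symTrace_add [CharZero F] (h : IsReflectionRep cs L ρ α)
    (hL : L ⊆ Set.range cs.simple) (hfin : (Subgroup.closure L : Set W).Finite)
    (hT : linearSubst T (rootProduct cs L α) = rootProduct cs L α) (n : ℕ) :
    ∑ x ∈ parabolicFinset L,
        (-1) ^ cs.length x * symTrace ((reflectionFinset cs L).card + n) (ρ x * T) =
      ∑ x ∈ parabolicFinset L, symTrace n (ρ x * T) := by
  have hΔ := isHomogeneous_rootProduct (cs := cs) L α
  let m : homogeneousSubmodule ι F n →ₗ[F]
      homogeneousSubmodule ι F ((reflectionFinset cs L).card + n) :=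
    (LinearMap.mulLeft F (rootProduct cs L α)).restrict fun p hp => hΔ.mul hp
  have hm : Function.Injective m := fun p p' hpp => Subtype.ext <|
    mul_left_cancel₀ (h.rootProduct_ne_zero hfin) (congrArg Subtype.val hpp)
  have hsym : LinearMap.trace F _ (∑ x ∈ parabolicFinset L, homogeneousSubst n (ρ x * T)) =
      ∑ x ∈ parabolicFinset L, symTrace n (ρ x * T) := map_sum _ _ _
  have hfinite (k : ℕ) : FiniteDimensional F (homogeneousSubmodule ι F k) :=
    .of_basis (monomialBasis F ι k)
  rw [← hsym, ← trace_antisymmetrizer]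
  refine trace_eq_trace_of_apply_injective hm (fun p => Subtype.ext ?_) fun p => ?_
  · have hright : (m ((∑ x ∈ parabolicFinset L, homogeneousSubst n (ρ x * T)) p) :
        MvPolynomial ι F) =
          ∑ x ∈ parabolicFinset L, rootProduct cs L α * linearSubst (ρ x * T) p := by
      change rootProduct cs L α * _ = _
      rw [LinearMap.sum_apply, map_sum, Finset.mul_sum]
      rfl
    rw [coe_antisymmetrizer, hright]
    refine Finset.sum_congr rfl fun x hx => ?_
    change _ • linearSubst (ρ x * T) (rootProduct cs L α * p) = _
    rw [map_mul, linearSubst_mul, hT,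
      h.linearSubst_rootProduct hL hfin ((mem_parabolicFinset hfin).1 hx), smul_mul_assoc,
      smul_smul, ← mul_pow, neg_one_mul, neg_neg, one_pow, one_smul]
  · obtain ⟨g, hg, hmul⟩ := exists_isHomogeneous_eq_mul_of_dvd hΔ
      (antisymmetrizer cs L ρ T _ p).2 (h.rootProduct_dvd_antisymmetrizer hfin _ p)
    exact ⟨⟨g, hg⟩, Subtype.ext hmul⟩

/-- The mean of the Molien series of `x T`, over the elements `x` of `W_L`. -/
def meanMolienSeries (ρ : W →* Module.End F (ι → F)) (T : Module.End F (ι → F)) (L : Set W) :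
    PowerSeries F :=
  PowerSeries.mk fun n =>
    ((parabolicFinset L).card : F)⁻¹ * ∑ x ∈ parabolicFinset L, symTrace n (ρ x * T)

theorem IsTwist.symTrace_mul {τ : MulAut W} (hT : IsTwist cs L ρ α τ T) (n : ℕ) (z x : W) :
    symTrace n (ρ (z * x * (τ z)⁻¹) * T) = symTrace n (ρ x * T) := by
  rw [← map_inv τ, map_mul, mul_assoc, ← hT.mul_apply, ← mul_assoc, symTrace_mul_comm, map_mul,
    mul_assoc, ← mul_assoc, ← map_mul, inv_mul_cancel, map_one, one_mul]

theorem IsReflectionRep.sum_sign_mul_meanMolienSeries [CharZero F] (h : IsReflectionRep cs L ρ α)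
    {w : W} (hw : IsLongest cs L w) (hfin : (Subgroup.closure L : Set W).Finite) {τ : MulAut W}
    (hT : IsTwist cs L ρ α τ T) {A₀ : Finset W} (hA₀ : stableHull τ A₀ = L) :
    ∑ A ∈ A₀.powerset, (-1) ^ A.card * meanMolienSeries ρ T (stableHull τ A) =
      PowerSeries.X ^ cs.length w * meanMolienSeries ρ T L := by
  have hΔ := h.linearSubst_twist_rootProduct hfin hT
    fun s => hA₀ ▸ (apply_mem_stableHull_iff hT.involutive).2
  ext n
  have hcoeff (A : Finset W) : PowerSeries.coeff n
      ((-1) ^ A.card * meanMolienSeries ρ T (stableHull τ A)) =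
        (-1) ^ A.card * (((parabolicFinset (stableHull τ A)).card : F)⁻¹ *
          ∑ x ∈ parabolicFinset (stableHull τ A), symTrace n (ρ x * T)) := by
    rw [show (-1 : PowerSeries F) = PowerSeries.C (-1) by simp, ← map_pow, PowerSeries.coeff_C_mul,
      meanMolienSeries, PowerSeries.coeff_mk]
  rw [map_sum, Finset.sum_congr rfl fun A _ => hcoeff A,
    sum_sign_mul_mean hw.subset_range hfin hT.involutive hA₀
      (φ := fun x => symTrace n (ρ x * T)) fun z _ x _ => hT.symTrace_mul n z x,
    ← hw.card_reflectionFinset hfin, PowerSeries.coeff_X_pow_mul']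
  split_ifs with hn
  · obtain ⟨k, rfl⟩ := Nat.exists_eq_add_of_le hn
    rw [h.sum_sign_symTrace_add hw.subset_range hfin hΔ, Nat.add_sub_cancel_left,
      meanMolienSeries, PowerSeries.coeff_mk]
  · rw [h.sum_sign_symTrace_of_lt hfin (not_le.1 hn), mul_zero]

theorem parabolicFinset_empty : parabolicFinset (∅ : Set W) = {1} := by
  ext x
  rw [mem_parabolicFinset (by simp)]
  simp

theorem twistedPoincare_empty {R : Type*} [CommRing R] (τ : MulAut W) (q : R) :
    twistedPoincare cs τ ∅ q = 1 := by
  simp [twistedPoincare, parabolicFinset_empty, Finset.filter_singleton]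

theorem meanMolienSeries_empty : meanMolienSeries ρ T ∅ = molienSeries T := by
  simp [meanMolienSeries, molienSeries, parabolicFinset_empty]

theorem IsReflectionRep.twistedPoincare_stableHull_mul_meanMolienSeries [CharZero F]
    {τ : MulAut W} {A₀ : Finset W} (h : IsReflectionRep cs (stableHull τ A₀) ρ α)
    (hL : stableHull τ A₀ ⊆ Set.range cs.simple)
    (hfin : (Subgroup.closure (stableHull τ A₀) : Set W).Finite)
    (hT : IsTwist cs (stableHull τ A₀) ρ α τ T) :
    twistedPoincare cs τ (stableHull τ A₀) PowerSeries.X *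
      meanMolienSeries ρ T (stableHull τ A₀) = molienSeries T := by
  induction A₀ using Finset.strongInduction with
  | H A₀ ih =>
  rcases A₀.eq_empty_or_nonempty with rfl | ⟨s, hs⟩
  · rw [show stableHull τ ∅ = ∅ by ext; simp [stableHull], twistedPoincare_empty,
      meanMolienSeries_empty, one_mul]
  obtain ⟨w, hw⟩ := exists_isLongest hL hfin
  have hτL (A : Finset W) : ∀ s ∈ stableHull τ A, τ s ∈ stableHull τ A :=
    fun s => (apply_mem_stableHull_iff hT.involutive).2
  have hQ := sum_sign_mul_twistedPoincareQuotient hw hfin hT.involutive rfl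
    (PowerSeries.X : PowerSeries F)
  have hmean := h.sum_sign_mul_meanMolienSeries hw hfin hT rfl
  rw [← Finset.add_sum_erase _ _ (Finset.mem_powerset_self _)] at hQ hmean
  rw [twistedPoincareQuotient_self hL hfin] at hQ
  have hproper : twistedPoincare cs τ (stableHull τ A₀) PowerSeries.X *
      ∑ A ∈ A₀.powerset.erase A₀, (-1) ^ A.card * meanMolienSeries ρ T (stableHull τ A) =
      (∑ A ∈ A₀.powerset.erase A₀, (-1) ^ A.card *
        twistedPoincareQuotient cs τ (stableHull τ A₀) (stableHull τ A) PowerSeries.X) *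
          molienSeries T := by
    rw [Finset.mul_sum, Finset.sum_mul]
    refine Finset.sum_congr rfl fun A hA => ?_
    rw [Finset.mem_erase, Finset.mem_powerset] at hA
    have hAL := stableHull_mono τ hA.2
    rw [twistedPoincare_eq_mul_quotient hT.involutive hL hfin (hτL A₀) hAL (hτL A),
      ← ih A (hA.2.ssubset_of_ne hA.1) (h.mono hAL) (hAL.trans hL)
        (hfin.subset (Subgroup.closure_mono hAL)) (hT.mono hAL)]
    ring
  have hw0 : cs.length w ≠ 0 := fun h0 => by
    have hle := hw.length_le (Subgroup.subset_closure (Or.inl hs))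
    rw [length_eq_one_of_mem hL (Or.inl hs)] at hle
    omega
  have hne : (-1 : PowerSeries F) ^ A₀.card - PowerSeries.X ^ cs.length w ≠ 0 := fun h0 => by
    have := congrArg PowerSeries.constantCoeff h0
    simp [zero_pow hw0] at this
  refine mul_left_cancel₀ hne ?_
  linear_combination twistedPoincare cs τ (stableHull τ A₀) PowerSeries.X * hmean - hproper -
    molienSeries T * hQ

theorem IsReflectionRep.twistedPoincare_mul_meanMolienSeries [CharZero F]
    (h : IsReflectionRep cs L ρ α) (hL : L ⊆ Set.range cs.simple)
    (hfin : (Subgroup.closure L : Set W).Finite) {τ : MulAut W} (hτL : ∀ s ∈ L, τ s ∈ L)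
    (hT : IsTwist cs L ρ α τ T) :
    twistedPoincare cs τ L PowerSeries.X * meanMolienSeries ρ T L = molienSeries T := by
  let A₀ : Finset W := (hfin.subset Subgroup.subset_closure).toFinset
  have hA₀ : stableHull τ A₀ = L := by
    refine Set.Subset.antisymm ((stableHull_subset_iff hT.involutive).2 fun s hs => ?_)
      fun s hs => Or.inl ((Set.Finite.mem_toFinset _).2 hs)
    rw [Set.Finite.mem_toFinset] at hs
    exact ⟨hs, hτL s hs⟩
  rw [← hA₀] at h hL hfin hT ⊢
  exact h.twistedPoincare_stableHull_mul_meanMolienSeries hL hfin hT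

end MeanMolien

section TwistedPoincareEval

variable {cs : CoxeterSystem M W} {L : Set W} {R : Type*} [CommRing R]

theorem map_twistedPoincare {R' G : Type*} [CommRing R'] [FunLike G R R'] [RingHomClass G R R']
    (f : G) (τ : MulAut W) (L : Set W) (q : R) :
    f (twistedPoincare cs τ L q) = twistedPoincare cs τ L (f q) := by
  simp only [twistedPoincare, map_sum, map_pow]

theorem twistedPoincare_zero (hfin : (Subgroup.closure L : Set W).Finite) (τ : MulAut W) :
    twistedPoincare cs τ L (0 : R) = 1 := by
  rw [twistedPoincare, Finset.sum_eq_single 1]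
  · rw [cs.length_one, pow_zero]
  · exact fun x _ hx => zero_pow (cs.length_eq_zero_iff.not.2 hx)
  · intro h
    rw [Finset.mem_filter, mem_parabolicFinset hfin] at h
    exact absurd ⟨one_mem _, map_one τ⟩ h

theorem twistedPoincare_ne_zero [Nontrivial R] {A : Type*} [CommRing A] [Algebra R A] {q : A}
    (hq : Transcendental R q) (hfin : (Subgroup.closure L : Set W).Finite) (τ : MulAut W) :
    twistedPoincare cs τ L q ≠ 0 := by
  intro h
  have hX : twistedPoincare cs τ L (Polynomial.X : Polynomial R) = 0 := by
    refine transcendental_iff.1 hq _ ?_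
    rw [map_twistedPoincare, Polynomial.aeval_X, h]
  have heval := congrArg (Polynomial.evalRingHom 0) hX
  rw [map_twistedPoincare, map_zero, Polynomial.coe_evalRingHom, Polynomial.eval_X,
    twistedPoincare_zero hfin] at heval
  exact one_ne_zero heval

theorem finsum_eq_twistedPoincare (hfin : (Subgroup.closure L : Set W).Finite) {τ : MulAut W}
    {p : W → Prop} (hp : ∀ x ∈ Subgroup.closure L, p x ↔ τ x = x) (q : R) :
    (∑ᶠ x : W, if x ∈ Subgroup.closure L ∧ p x then q ^ cs.length x else 0) =
      twistedPoincare cs τ L q := by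
  rw [finsum_eq_sum_of_support_subset (s := parabolicFinset L), twistedPoincare,
    Finset.sum_filter]
  · refine Finset.sum_congr rfl fun x hx => ?_
    have hxL := (mem_parabolicFinset hfin).1 hx
    simp only [hxL, true_and, hp x hxL]
  · exact fun x hx => (mem_parabolicFinset hfin).2 (of_not_not fun hxL => hx (if_neg (by tauto)))

theorem finsum_eq_twistedPoincare_one (hfin : (Subgroup.closure L : Set W).Finite) (q : R) :
    (∑ᶠ x : W, if x ∈ Subgroup.closure L then q ^ cs.length x else 0) =
      twistedPoincare cs 1 L q := by
  simpa only [and_true] using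
    finsum_eq_twistedPoincare (cs := cs) hfin (τ := 1) (p := fun _ => True) (by simp) q

end TwistedPoincareEval

section LongestTwist

variable {F V : Type*} [Field F] [AddCommGroup V] [Module F V] {cs : CoxeterSystem M W}
  {L : Set W} {ρ : W →* Module.End F V} {α : W → V} {w : W}

theorem IsReflectionRep.isTwist_one [CharZero F] (h : IsReflectionRep cs L ρ α) :
    IsTwist cs L ρ α 1 1 where
  involutive _ := rfl
  isReflection_apply _ ht := ht
  mul_self := one_mul 1
  mul_apply _ := (one_mul _).trans (mul_one _).symm
  apply_root_ne t ht ht' := by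
    have htwo : (2 : F) • α t = 0 := by rw [two_smul, ← eq_neg_iff_add_eq_zero]; exact ht'
    exact h.root_ne_zero t ht ((smul_eq_zero_iff_right two_ne_zero).1 htwo)

theorem IsLongest.isTwist_conj (hw : IsLongest cs L w)
    (hne : ∀ t ∈ parabolicReflections cs L, ρ w (α t) ≠ α t) :
    IsTwist cs L ρ α (MulAut.conj w) (-ρ w) where
  involutive x := by
    simp only [MulAut.conj_apply, hw.inv_eq, mul_assoc, hw.mul_self, mul_one]
    rw [← mul_assoc, hw.mul_self, one_mul]
  isReflection_apply t ht := ht.conj w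
  mul_self := (neg_mul_neg (ρ w) (ρ w)).trans (by rw [← map_mul, hw.mul_self, map_one])
  mul_apply x := by
    refine (neg_mul (ρ w) (ρ x)).trans (Eq.trans ?_ (mul_neg _ (ρ w)).symm)
    rw [← map_mul, ← map_mul, MulAut.conj_apply, inv_mul_cancel_right]
  apply_root_ne t ht ht' := hne t ht (neg_injective ht')

end LongestTwist

section TwistedPoincareIdentity

variable {F ι : Type*} [Field F] {cs : CoxeterSystem M W} {L : Set W}
  {ρ : W →* Module.End F (ι → F)} {α : W → ι → F} {w : W}

theorem IsLongest.meanMolienSeries_neg [Fintype ι] (hw : IsLongest cs L w)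
    (hfin : (Subgroup.closure L : Set W).Finite) :
    meanMolienSeries ρ (-ρ w) L = PowerSeries.evalNegHom (meanMolienSeries ρ 1 L) := by
  have hmem (x) (hx : x ∈ parabolicFinset L) : x * w ∈ parabolicFinset L := by
    rw [mem_parabolicFinset hfin] at hx ⊢
    exact mul_mem hx hw.mem
  have hinv (x) : x * w * w = x := by rw [mul_assoc, hw.mul_self, mul_one]
  ext n
  rw [PowerSeries.evalNegHom, PowerSeries.coeff_rescale, meanMolienSeries, meanMolienSeries,
    PowerSeries.coeff_mk, PowerSeries.coeff_mk, mul_left_comm]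
  congr 1
  rw [Finset.mul_sum]
  refine Finset.sum_nbij' (· * w) (· * w) hmem hmem (fun x _ => hinv x) (fun x _ => hinv x)
    fun x _ => ?_
  rw [← symTrace_neg, mul_one]
  refine congrArg (symTrace n) ((mul_neg (ρ x) (ρ w)).trans ?_)
  rw [← map_mul]

theorem molienSeries_neg_one [CharZero F] [Fintype ι] :
    molienSeries (-1 : Module.End F (ι → F)) * (1 + PowerSeries.X) ^ Fintype.card ι = 1 := by
  have htop : (-1 : Module.End F (ι → F)).eigenspace (-1) = ⊤ :=
    eq_top_iff.2 fun v _ => Module.End.mem_eigenspace_iff.2 (neg_one_smul F v).symm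
  have hbot : (-1 : Module.End F (ι → F)).eigenspace 1 = ⊥ := by
    refine (Submodule.eq_bot_iff _).2 fun v hv => ?_
    exact neg_eq_self.1 ((Module.End.mem_eigenspace_iff.1 hv).trans (one_smul F v))
  have := molienSeries_mul_of_mul_self_eq_one
    ((neg_mul_neg (1 : Module.End F (ι → F)) 1).trans (one_mul 1))
  rwa [htop, hbot, finrank_bot, finrank_top, Module.finrank_fintype_fun_eq_card, pow_zero,
    one_mul] at this

theorem molienSeries_neg_mul [CharZero F] [Fintype ι] {T : Module.End F (ι → F)} (hT : T * T = 1) :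
    ∃ k, Module.finrank F (T.eigenspace (-1)) + k = Fintype.card ι ∧
      molienSeries (-T) * ((1 - PowerSeries.X) ^ Module.finrank F (T.eigenspace (-1)) *
        (1 + PowerSeries.X) ^ k) = 1 := by
  have hneg (μ : F) : (-T).eigenspace μ = T.eigenspace (-μ) := by
    ext v
    rw [Module.End.mem_eigenspace_iff, Module.End.mem_eigenspace_iff, LinearMap.neg_apply,
      neg_smul, neg_eq_iff_eq_neg]
  have hcard := Submodule.finrank_add_eq_of_isCompl (isCompl_eigenspace_of_mul_self_eq_one hT)
  have := molienSeries_mul_of_mul_self_eq_one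
    ((neg_mul_neg T T).trans hT)
  rw [hneg, hneg, neg_neg] at this
  rw [Module.finrank_fintype_fun_eq_card, add_comm] at hcard
  exact ⟨_, hcard, this⟩

theorem IsReflectionRep.twistedPoincare_X_mul [CharZero F] [Finite ι] (h : IsReflectionRep cs L ρ α)
    (hfin : (Subgroup.closure L : Set W).Finite)
    (hw : IsLongest cs L w) (hne : ∀ t ∈ parabolicReflections cs L, ρ w (α t) ≠ α t) :
    twistedPoincare cs (MulAut.conj w) L (PowerSeries.X : PowerSeries F) *
        (1 - PowerSeries.X) ^ Module.finrank F ((ρ w).eigenspace (-1)) =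
      twistedPoincare cs 1 L (-PowerSeries.X : PowerSeries F) *
        (1 + PowerSeries.X) ^ Module.finrank F ((ρ w).eigenspace (-1)) := by
  have := Fintype.ofFinite ι
  have htwisted := h.twistedPoincare_mul_meanMolienSeries hw.subset_range hfin
    (fun s hs => by rw [MulAut.conj_apply, hw.inv_eq]; exact hw.conj_mem hs) (hw.isTwist_conj hne)
  have huntwisted := congrArg PowerSeries.evalNegHom
    (h.twistedPoincare_mul_meanMolienSeries hw.subset_range hfin (fun s hs => hs) h.isTwist_one)
  rw [map_mul, map_twistedPoincare, PowerSeries.evalNegHom_X, ← hw.meanMolienSeries_neg hfin,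
    ← molienSeries_neg] at huntwisted
  obtain ⟨k, hk, hmolien⟩ := molienSeries_neg_mul (T := ρ w)
    (by rw [← map_mul, hw.mul_self, map_one])
  have hmolien' := molienSeries_neg_one (F := F) (ι := ι)
  rw [← htwisted] at hmolien
  rw [← huntwisted, ← hk, pow_add] at hmolien'
  refine mul_left_cancel₀ (a := meanMolienSeries ρ (-ρ w) L * (1 + PowerSeries.X) ^ k)
    (fun h0 => one_ne_zero (α := PowerSeries F) ?_) ?_
  · linear_combination -hmolien + twistedPoincare cs (MulAut.conj w) L PowerSeries.X *
      (1 - PowerSeries.X) ^ Module.finrank F ((ρ w).eigenspace (-1)) * h0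
  · linear_combination hmolien - hmolien'

theorem IsReflectionRep.twistedPoincare_mul_one_sub_pow [CharZero F] [Finite ι] {A : Type*}
    [CommRing A] [Algebra F A] (h : IsReflectionRep cs L ρ α)
    (hfin : (Subgroup.closure L : Set W).Finite) (hw : IsLongest cs L w)
    (hne : ∀ t ∈ parabolicReflections cs L, ρ w (α t) ≠ α t) (q : A) :
    twistedPoincare cs (MulAut.conj w) L q *
        (1 - q) ^ Module.finrank F ((ρ w).eigenspace (-1)) =
      twistedPoincare cs 1 L (-q) *
        (1 + q) ^ Module.finrank F ((ρ w).eigenspace (-1)) := by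
  suffices twistedPoincare cs (MulAut.conj w) L (Polynomial.X : Polynomial F) *
        (1 - Polynomial.X) ^ Module.finrank F ((ρ w).eigenspace (-1)) =
      twistedPoincare cs 1 L (-Polynomial.X) *
        (1 + Polynomial.X) ^ Module.finrank F ((ρ w).eigenspace (-1)) by
    simpa [map_twistedPoincare] using congrArg (Polynomial.aeval (R := F) q) this
  refine Polynomial.coe_injective F ?_
  have hcoe (τ : MulAut W) (p : Polynomial F) :
      ((twistedPoincare cs τ L p : Polynomial F) : PowerSeries F) =
        twistedPoincare cs τ L (p : PowerSeries F) :=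
    map_twistedPoincare (Polynomial.coeToPowerSeries.ringHom (R := F)) τ L p
  simpa [hcoe] using h.twistedPoincare_X_mul hfin hw hne

end TwistedPoincareIdentity

/-! ### Group elements inverted by a reflection -/

section Inverted

open Filter

variable {cs : CoxeterSystem M W} {t : W}

section Family

variable {ι : Type*} {f : ι → W}

/- Since `t` inverts `f i`, the conjugate of `t` deciding whether `t` changes sides is
`t * f i ^ 2`, which lies in the finite set of inversions of `d` for finitely many `i` only. -/
theorem eventually_mem_leftInversions_mul_iff (hf : ∀ i, SemiconjBy t (f i) (f i)⁻¹)
    (hinj : Function.Injective fun i => f i ^ 2) (d : W) :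
    ∀ᶠ i in cofinite, t ∈ leftInversions cs (f i * d) ↔ t ∈ leftInversions cs (f i) := by
  have hconj (i : ι) : (f i)⁻¹ * t * f i = t * f i ^ 2 := by
    rw [← (hf i).eq, pow_two, mul_assoc]
  refine eventually_cofinite.2 (((finite_leftInversions (cs := cs) d).preimage
    ((mul_right_injective t).comp hinj).injOn).subset fun i hi => ?_)
  rw [Set.mem_ofPred_eq, mem_leftInversions_mul, hconj, Xor] at hi
  rw [Set.mem_preimage, Function.comp_apply]
  tauto

theorem eventually_mem_leftInversions_inv_iff (ht : cs.IsReflection t)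
    (hf : ∀ i, SemiconjBy t (f i) (f i)⁻¹) (hinj : Function.Injective fun i => f i ^ 2) :
    ∀ᶠ i in cofinite, t ∈ leftInversions cs (f i)⁻¹ ↔ t ∉ leftInversions cs (f i) := by
  filter_upwards [eventually_mem_leftInversions_mul_iff (cs := cs) hf hinj t] with i hi
  have hself : t ∈ leftInversions cs t :=
    (isLeftInversion_iff_inversionParity cs t t).2 (inversionParity_self cs ht)
  have hcomm : f i * t = t * (f i)⁻¹ := ((hf i).inv_right.eq.trans (by rw [inv_inv])).symm
  rw [hcomm, mem_leftInversions_mul, inv_mul_cancel, one_mul, Xor] at hi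
  tauto

end Family

theorem exists_nat_forall_of_eventually_cofinite {p : ℤ × ℤ → Prop} (hp : ∀ᶠ x in cofinite, p x) :
    ∃ n : ℕ, ∀ x, (n : ℤ) ≤ |x.1| ∨ (n : ℤ) ≤ |x.2| → p x := by
  obtain ⟨n, hn⟩ := ((eventually_cofinite.1 hp).image fun x => max x.1.natAbs x.2.natAbs).bddAbove
  refine ⟨n + 1, fun x hx => ?_⟩
  by_contra hpx
  have hle : max x.1.natAbs x.2.natAbs ≤ n := hn ⟨x, hpx, rfl⟩
  rw [Int.abs_eq_natAbs, Int.abs_eq_natAbs] at hx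
  omega

/- `ℤ × ℤ` has one end: a predicate which is almost invariant under translation is almost
constant, whereas `p (-x) ↔ ¬p x` separates the two sides. -/
theorem not_eventually_neg_iff_not {p : ℤ × ℤ → Prop}
    (hfst : ∀ᶠ x in cofinite, p (x + (1, 0)) ↔ p x)
    (hsnd : ∀ᶠ x in cofinite, p (x + (0, 1)) ↔ p x) :
    ¬∀ᶠ x in cofinite, p (-x) ↔ ¬p x := by
  intro hneg
  obtain ⟨n, hn⟩ := exists_nat_forall_of_eventually_cofinite (hfst.and (hsnd.and hneg))
  have hrow (j : ℤ) (hj : (n : ℤ) ≤ |j|) (i : ℤ) : p (i, j) = p (0, j) := by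
    have hper : Function.Periodic (fun i => p (i, j)) 1 := fun i => by
      simpa using (hn (i, j) (Or.inr hj)).1
    simpa using hper.int_mul_eq i
  have hcol (i : ℤ) (hi : (n : ℤ) ≤ |i|) (j : ℤ) : p (i, j) = p (i, 0) := by
    have hper : Function.Periodic (fun j => p (i, j)) 1 := fun j => by
      simpa using (hn (i, j) (Or.inl hi)).2.1
    simpa using hper.int_mul_eq j
  have hpath : p (-n, 0) = p (n, 0) :=
    calc p (-n, 0) = p (-n, n) := (hcol (-n) (by simp) n).symm
      _ = p (0, n) := hrow n (by simp) (-n)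
      _ = p (n, n) := (hrow n (by simp) n).symm
      _ = p (n, 0) := hcol n (by simp) n
  have hflip := (hn (n, 0) (Or.inl (by simp))).2.2
  rw [Prod.neg_mk, neg_zero, hpath] at hflip
  exact iff_not_self hflip

theorem not_injective_zpow_mul_zpow (ht : cs.IsReflection t) {a b : W} (hab : Commute a b)
    (ha : SemiconjBy t a a⁻¹) (hb : SemiconjBy t b b⁻¹) :
    ¬Function.Injective fun x : ℤ × ℤ => a ^ x.1 * b ^ x.2 := by
  intro hinj
  set f : ℤ × ℤ → W := fun x => a ^ x.1 * b ^ x.2 with hfdef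
  have hcomm (i j : ℤ) : Commute (a ^ i) (b ^ j) := hab.zpow_zpow i j
  have hf (x : ℤ × ℤ) : SemiconjBy t (f x) (f x)⁻¹ := by
    have h := (ha.zpow_right x.1).mul_right (hb.zpow_right x.2)
    rwa [inv_zpow, inv_zpow, ← mul_inv_rev, ← (hcomm x.1 x.2).eq] at h
  have hsq : Function.Injective fun x => f x ^ 2 := by
    have hdouble (x : ℤ × ℤ) : f x ^ 2 = f (2 • x) := by
      rw [(hcomm x.1 x.2).mul_pow, ← zpow_natCast, ← zpow_natCast, ← zpow_mul, ← zpow_mul]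
      simp [hfdef, mul_comm]
    simpa only [hdouble, Function.comp_def] using hinj.comp (nsmul_right_injective two_ne_zero)
  refine not_eventually_neg_iff_not (p := fun x => t ∈ leftInversions cs (f x)) ?_ ?_ ?_
  · have hshift (x : ℤ × ℤ) : f (x + (1, 0)) = f x * a := by
      simp only [hfdef, Prod.fst_add, Prod.snd_add, add_zero, zpow_add_one, mul_assoc,
        (hab.zpow_right x.2).eq]
    simpa only [hshift] using eventually_mem_leftInversions_mul_iff hf hsq a
  · have hshift (x : ℤ × ℤ) : f (x + (0, 1)) = f x * b := by
      simp only [hfdef, Prod.fst_add, Prod.snd_add, add_zero, zpow_add_one, mul_assoc]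
    simpa only [hshift] using eventually_mem_leftInversions_mul_iff hf hsq b
  · have hneg (x : ℤ × ℤ) : f (-x) = (f x)⁻¹ := by
      simp only [hfdef, Prod.fst_neg, Prod.snd_neg, zpow_neg, mul_inv_rev,
        ((hcomm x.1 x.2).inv_inv).eq]
    simpa only [hneg] using eventually_mem_leftInversions_inv_iff ht hf hsq

/- Compare the sides of `t` on which `g ^ k * w = w * g ^ k` lies, for large `k`. -/
theorem not_commute_of_mem_leftInversions {w g : W} (htw : t ∈ leftInversions cs w)
    (hwt : Commute w t) (hg : SemiconjBy t g g⁻¹) (hfin : ¬IsOfFinOrder g) : ¬Commute w g := by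
  intro hwg
  have hinj := injective_zpow_iff_not_isOfFinOrder.2 hfin
  have hf (k : ℤ) : SemiconjBy t (g ^ k) (g ^ k)⁻¹ := by
    simpa only [inv_zpow] using hg.zpow_right k
  have hsq : Function.Injective fun k : ℤ => (g ^ k) ^ 2 := by
    have hdouble (k : ℤ) : (g ^ k) ^ 2 = g ^ (k * 2) := by rw [zpow_mul, zpow_ofNat]
    simpa only [hdouble, Function.comp_def] using hinj.comp (mul_left_injective₀ two_ne_zero)
  obtain ⟨k, hk⟩ := (eventually_mem_leftInversions_mul_iff (cs := cs) hf hsq w).exists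
  rw [← (hwg.zpow_right k).eq, mem_leftInversions_mul, mul_assoc, ← hwt.eq, inv_mul_cancel_left,
    Xor] at hk
  tauto

end Inverted

/-! ### The reflection representation on translations -/

section LinearInvolution

variable {F V : Type*} [Field F] [AddCommGroup V] [Module F V]

theorem exists_apply_eq_neg_of_mul_self_eq_one {T : Module.End F V} (hT : T * T = 1)
    (hne : T ≠ 1) : ∃ v ≠ 0, T v = -v := by
  obtain ⟨v, hv⟩ : ∃ v, T v ≠ v := by
    by_contra! h
    exact hne (LinearMap.ext h)
  refine ⟨T v - v, sub_ne_zero.2 hv, ?_⟩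
  rw [map_sub, ← Module.End.mul_apply, hT, Module.End.one_apply, neg_sub]

theorem eq_one_of_pow_eq_one_of_sub_one_mul_self [CharZero F] {T : Module.End F V} {n : ℕ}
    (hn : n ≠ 0) (hT : (T - 1) * (T - 1) = 0) (hpow : T ^ n = 1) : T = 1 := by
  have hbinom (k : ℕ) : T ^ k = 1 + k • (T - 1) := by
    induction k with
    | zero => simp
    | succ k ih =>
      have hmul : k • (T - 1) * T = k • (T - 1) := by
        rw [smul_mul_assoc, ← sub_eq_zero, ← smul_sub, ← mul_sub_one, hT, smul_zero]
      rw [pow_succ, ih, add_mul, hmul, one_mul, succ_nsmul]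
      abel
  have hzero : n • (T - 1) = 0 := by
    rw [← add_eq_left (a := (1 : Module.End F V)), ← hbinom, hpow]
  rw [← Nat.cast_smul_eq_nsmul F, smul_eq_zero_iff_right (Nat.cast_ne_zero.2 hn)] at hzero
  exact sub_eq_zero.1 hzero

end LinearInvolution

namespace AffineData

variable {cs : CoxeterSystem M W} (D : AffineData cs)

instance : D.Lam.Normal := D.hLam_normal

instance : IsMulTorsionFree D.Lam :=
  D.freeIso.injective.isMulTorsionFree D.freeIso.toMonoidHom

theorem iota_one : D.iota 1 = 0 := by
  ext i
  simp [iota]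

theorem iota_mul (a b : D.Lam) : D.iota (a * b) = D.iota a + D.iota b := by
  ext i
  simp [iota]

theorem iota_inv (a : D.Lam) : D.iota a⁻¹ = -D.iota a := by
  ext i
  simp [iota]

theorem iota_zpow (a : D.Lam) (n : ℤ) : D.iota (a ^ n) = n • D.iota a := by
  ext i
  simp [iota]

theorem iota_injective : Function.Injective D.iota := fun a b h =>
  D.freeIso.injective (Multiplicative.toAdd.injective
    (funext fun i => by simpa [iota] using congrFun h i))

theorem exists_nsmul_eq_iota (v : Fin D.rank → ℚ) : ∃ n : ℕ, n ≠ 0 ∧ ∃ l, n • v = D.iota l := by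
  refine ⟨∏ i, (v i).den, Finset.prod_ne_zero_iff.2 fun i _ => (v i).den_ne_zero, ?_⟩
  have hint (i : Fin D.rank) : ∃ z : ℤ, ((∏ j, (v j).den : ℕ) : ℚ) * v i = z := by
    obtain ⟨c, hc⟩ := Finset.dvd_prod_of_mem (fun j => (v j).den) (Finset.mem_univ i)
    refine ⟨c * (v i).num, ?_⟩
    rw [hc, Nat.cast_mul, Int.cast_mul, ← Rat.den_mul_eq_num, Int.cast_natCast]
    ring
  choose z hz using hint
  refine ⟨D.freeIso.symm (Multiplicative.ofAdd z), funext fun i => ?_⟩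
  simp only [iota, MulEquiv.apply_symm_apply, toAdd_ofAdd, Pi.smul_apply, nsmul_eq_mul, hz]

variable {D} in
theorem linearMap_ext_iota {f g : Module.End ℚ (Fin D.rank → ℚ)}
    (h : ∀ l, f (D.iota l) = g (D.iota l)) : f = g := by
  refine LinearMap.ext fun v => ?_
  obtain ⟨n, hn, l, hl⟩ := D.exists_nsmul_eq_iota v
  have hv := h l
  rw [← hl, map_nsmul, map_nsmul] at hv
  exact nsmul_right_injective hn hv

theorem rho_iota (w : W) (l : D.Lam) : D.rho w (D.iota l) = D.iota (MulAut.conjNormal w l) :=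
  D.hrho w l

/-- The linear representation of `W` on `Λ_ℚ` by conjugation. -/
def translationRep : W →* Module.End ℚ (Fin D.rank → ℚ) where
  toFun := D.rho
  map_one' := linearMap_ext_iota fun l => by
    rw [rho_iota, map_one, MulAut.one_apply, Module.End.one_apply]
  map_mul' x y := linearMap_ext_iota fun l => by
    rw [Module.End.mul_apply, rho_iota, rho_iota, rho_iota, map_mul, MulAut.mul_apply]

theorem translationRep_iota (w : W) (l : D.Lam) :
    D.translationRep w (D.iota l) = D.iota (MulAut.conjNormal w l) := D.rho_iota w l

variable {D}

theorem translationRep_iota_eq_iota_iff {w : W} {l : D.Lam} :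
    D.translationRep w (D.iota l) = D.iota l ↔ Commute w l := by
  rw [translationRep_iota, D.iota_injective.eq_iff, Subtype.ext_iff, MulAut.conjNormal_apply,
    mul_inv_eq_iff_eq_mul]
  rfl

theorem translationRep_iota_eq_neg_iff {w : W} {l : D.Lam} :
    D.translationRep w (D.iota l) = -D.iota l ↔ SemiconjBy w (l : W) (l : W)⁻¹ := by
  rw [translationRep_iota, ← iota_inv, D.iota_injective.eq_iff, Subtype.ext_iff,
    MulAut.conjNormal_apply, mul_inv_eq_iff_eq_mul]
  rfl

theorem mem_Lam_of_forall_commute {x : W} (hx : ∀ l ∈ D.Lam, Commute x l) : x ∈ D.Lam := by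
  have := D.hLam_index
  rw [D.hLam_mem]
  refine (Set.finite_range fun c : W ⧸ D.Lam => c.out * x * c.out⁻¹).subset fun y hy => ?_
  obtain ⟨g, rfl⟩ := isConj_iff.1 hy
  obtain ⟨l, hl⟩ := QuotientGroup.mk_out_eq_mul D.Lam g
  refine ⟨g, ?_⟩
  simp only [hl, mul_inv_rev]
  rw [mul_assoc g, ← (hx l l.2).eq, ← mul_assoc g, mul_assoc, mul_inv_cancel_left]

theorem translationRep_eq_one_iff {x : W} : D.translationRep x = 1 ↔ x ∈ D.Lam := by
  refine ⟨fun h => mem_Lam_of_forall_commute fun l hl => ?_, fun hx => ?_⟩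
  · exact (translationRep_iota_eq_iota_iff (l := ⟨l, hl⟩)).1 (by rw [h, Module.End.one_apply])
  · exact linearMap_ext_iota fun l => translationRep_iota_eq_iota_iff.2 (D.hLam_comm x hx l l.2)

theorem eq_one_of_isOfFinOrder {x : W} (hx : x ∈ D.Lam) (h : IsOfFinOrder x) : x = 1 := by
  by_contra hne
  refine not_isOfFinOrder_of_isMulTorsionFree (a := (⟨x, hx⟩ : D.Lam)) ?_ ?_
  · simpa [Subtype.ext_iff] using hne
  · exact Submonoid.isOfFinOrder_coe.1 h

theorem exists_semiconjBy_of_translationRep_eq_neg {x : W} {v : Fin D.rank → ℚ}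
    (hv : D.translationRep x v = -v) :
    ∃ n : ℕ, n ≠ 0 ∧ ∃ l : D.Lam, n • v = D.iota l ∧ SemiconjBy x (l : W) (l : W)⁻¹ := by
  obtain ⟨n, hn, l, hl⟩ := D.exists_nsmul_eq_iota v
  refine ⟨n, hn, l, hl, translationRep_iota_eq_neg_iff.1 ?_⟩
  rw [← hl, map_nsmul, hv, smul_neg]

theorem injective_zpow_mul_zpow {a b : D.Lam} (hab : LinearIndependent ℚ ![D.iota a, D.iota b]) :
    Function.Injective fun x : ℤ × ℤ => (a : W) ^ x.1 * (b : W) ^ x.2 := by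
  intro x y hxy
  have hLam : a ^ x.1 * b ^ x.2 = a ^ y.1 * b ^ y.2 := Subtype.ext (by simpa using hxy)
  have hiota := congrArg D.iota hLam
  simp only [iota_mul, iota_zpow] at hiota
  exact Prod.ext_iff.2 ((hab.restrict_scalars' ℤ).eq_of_pair hiota)

theorem mem_span_of_translationRep_eq_neg {t : W} (ht : cs.IsReflection t)
    {u v : Fin D.rank → ℚ} (hu0 : u ≠ 0) (hu : D.translationRep t u = -u)
    (hv : D.translationRep t v = -v) : v ∈ Submodule.span ℚ {u} := by
  by_contra hspan
  obtain ⟨m, hm, a, ha, hta⟩ := exists_semiconjBy_of_translationRep_eq_neg hu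
  obtain ⟨n, hn, b, hb, htb⟩ := exists_semiconjBy_of_translationRep_eq_neg hv
  refine not_injective_zpow_mul_zpow ht (D.hLam_comm a a.2 b b.2) hta htb
    (injective_zpow_mul_zpow ?_)
  rw [← ha, ← hb]
  refine (LinearIndependent.pair_iff' (smul_ne_zero hm hu0)).2 fun c hc => hspan ?_
  rw [← Nat.cast_smul_eq_nsmul ℚ n] at hc
  refine (Submodule.smul_mem_iff _ (Nat.cast_ne_zero.2 hn : (n : ℚ) ≠ 0)).1 ?_
  rw [← hc]
  exact Submodule.smul_mem _ c (nsmul_mem (Submodule.mem_span_singleton_self u) m)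

variable (D) in
/-- A nonzero vector of `Λ_ℚ` negated by `t`. For a reflection `t` such a vector exists and is
unique up to a scalar; its direction is all that matters, so no positivity is imposed. -/
def root (t : W) : Fin D.rank → ℚ :=
  Classical.epsilon fun v => v ≠ 0 ∧ D.translationRep t v = -v

theorem root_spec {t : W} (ht : cs.IsReflection t) :
    D.root t ≠ 0 ∧ D.translationRep t (D.root t) = -D.root t := by
  refine Classical.epsilon_spec (exists_apply_eq_neg_of_mul_self_eq_one ?_ fun h => ?_)
  · rw [← map_mul, ht.mul_self, map_one]
  · have hone := eq_one_of_isOfFinOrder (translationRep_eq_one_iff.1 h)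
      (isOfFinOrder_iff_pow_eq_one.2 ⟨2, two_pos, ht.pow_two⟩)
    exact absurd ht.odd_length (by simp [hone])

theorem translationRep_sub_mem_span_root {t : W} (ht : cs.IsReflection t) (v : Fin D.rank → ℚ) :
    D.translationRep t v - v ∈ Submodule.span ℚ {D.root t} := by
  refine mem_span_of_translationRep_eq_neg ht (root_spec ht).1 (root_spec ht).2 ?_
  rw [map_sub, ← Module.End.mul_apply, ← map_mul, ht.mul_self, map_one, Module.End.one_apply,
    neg_sub]

theorem translationRep_eq_neg_of_mem_span_root {t : W} (ht : cs.IsReflection t)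
    {v : Fin D.rank → ℚ} (hv : v ∈ Submodule.span ℚ {D.root t}) : D.translationRep t v = -v := by
  obtain ⟨c, rfl⟩ := Submodule.mem_span_singleton.1 hv
  rw [map_smul, (root_spec ht).2, smul_neg]

theorem span_root_eq_of_mem {t t' : W} (ht' : cs.IsReflection t')
    (h : D.root t' ∈ Submodule.span ℚ {D.root t}) :
    Submodule.span ℚ {D.root t'} = Submodule.span ℚ {D.root t} := by
  obtain ⟨c, hc⟩ := Submodule.mem_span_singleton.1 h
  have hc0 : c ≠ 0 := fun h0 => (root_spec ht').1 (by rw [← hc, h0, zero_smul])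
  rw [← hc, Submodule.span_singleton_smul_eq (isUnit_iff_ne_zero.2 hc0)]

/- If the roots were proportional, `t * t'` would act unipotently, hence trivially because it has
finite order; it would then be a torsion translation. -/
theorem eq_of_root_mem_span {t t' : W} (ht : cs.IsReflection t) (ht' : cs.IsReflection t')
    (hfin : IsOfFinOrder (t * t')) (h : D.root t' ∈ Submodule.span ℚ {D.root t}) : t = t' := by
  have hspan := span_root_eq_of_mem ht' h
  obtain ⟨n, hn, hpow⟩ := isOfFinOrder_iff_pow_eq_one.1 hfin
  set U := D.translationRep (t * t') with hU
  have hU_apply (v : Fin D.rank → ℚ) : U v = D.translationRep t (D.translationRep t' v) := by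
    rw [hU, map_mul, Module.End.mul_apply]
  have hfix : ∀ v ∈ Submodule.span ℚ {D.root t}, U v = v := fun v hv => by
    rw [hU_apply, translationRep_eq_neg_of_mem_span_root ht' (hspan ▸ hv), map_neg,
      translationRep_eq_neg_of_mem_span_root ht hv, neg_neg]
  have hmem (v : Fin D.rank → ℚ) : U v - v ∈ Submodule.span ℚ {D.root t} := by
    rw [hU_apply, ← sub_add_sub_cancel _ (D.translationRep t' v) v]
    exact add_mem (translationRep_sub_mem_span_root ht _)
      (hspan ▸ translationRep_sub_mem_span_root ht' v)
  have hunip : (U - 1) * (U - 1) = 0 := LinearMap.ext fun v => by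
    rw [Module.End.mul_apply, LinearMap.sub_apply U, LinearMap.sub_apply, Module.End.one_apply,
      Module.End.one_apply, hfix _ (hmem v), sub_self, LinearMap.zero_apply]
  have hone : U = 1 := eq_one_of_pow_eq_one_of_sub_one_mul_self hn.ne' hunip
    (by rw [hU, ← map_pow, hpow, map_one])
  have hmul := eq_one_of_isOfFinOrder (translationRep_eq_one_iff.1 hone) hfin
  rw [mul_eq_one_iff_eq_inv.1 hmul, ht'.inv]

theorem isReflectionRep {L : Set W} (hfin : (Subgroup.closure L : Set W).Finite) :
    IsReflectionRep cs L D.translationRep D.root where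
  root_ne_zero _ ht := (root_spec ht.1).1
  apply_root _ ht := (root_spec ht.1).2
  apply_sub_mem _ ht := translationRep_sub_mem_span_root ht.1
  root_notMem_span t ht t' ht' hne hmem := by
    have : Finite (Subgroup.closure L) := hfin
    refine hne (eq_of_root_mem_span ht.1 ht'.1 ?_ hmem)
    exact Submonoid.isOfFinOrder_coe.2
      (isOfFinOrder_of_finite (⟨t * t', mul_mem ht.2 ht'.2⟩ : Subgroup.closure L))

theorem det_translationRep_of_isReflection {t : W} (ht : cs.IsReflection t) :
    LinearMap.det (D.translationRep t) = -1 := by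
  have heigen : (D.translationRep t).eigenspace (-1) = Submodule.span ℚ {D.root t} := by
    ext v
    rw [Module.End.mem_eigenspace_iff, neg_one_smul]
    exact ⟨mem_span_of_translationRep_eq_neg ht (root_spec ht).1 (root_spec ht).2,
      translationRep_eq_neg_of_mem_span_root ht⟩
  rw [det_eq_neg_one_pow_finrank_eigenspace (by rw [← map_mul, ht.mul_self, map_one]), heigen,
    finrank_span_singleton (root_spec ht).1, pow_one]

theorem det_translationRep (x : W) :
    LinearMap.det (D.translationRep x) = (-1) ^ cs.length x := by
  induction x using cs.simple_induction_left with
  | one => rw [map_one, map_one, cs.length_one, pow_zero]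
  | mul_simple_left x i ih =>
    rw [map_mul, map_mul, det_translationRep_of_isReflection (cs.isReflection_simple i), ih,
      neg_one_pow_length_mul, cs.length_simple, pow_one]

theorem det_translationRep_eq_neg_one_pow_eNeg {w : W} (hw : w * w = 1) :
    LinearMap.det (D.translationRep w) = (-1) ^ D.eNeg (D.translationRep w) :=
  det_eq_neg_one_pow_finrank_eigenspace (by rw [← map_mul, hw, map_one])

theorem translationRep_root_ne {L : Set W} {t w : W}
    (hfin : (Subgroup.closure L : Set W).Finite) (hw : IsLongest cs L w)
    (ht : t ∈ parabolicReflections cs L) : D.translationRep w (D.root t) ≠ D.root t := by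
  intro hfix
  obtain ⟨n, hn, l, hl, hinv⟩ := exists_semiconjBy_of_translationRep_eq_neg (root_spec ht.1).2
  have hfixl : D.translationRep w (D.iota l) = D.iota l := by rw [← hl, map_nsmul, hfix]
  have hwl : Commute w (l : W) := translationRep_iota_eq_iota_iff.1 hfixl
  have hne : l ≠ 1 := by
    rintro rfl
    exact smul_ne_zero hn (root_spec ht.1).1 (hl.trans D.iota_one)
  have hrep := isReflectionRep (D := D) hfin
  have hwt : w * t * w⁻¹ = t := by
    by_contra hconj
    refine hrep.root_notMem_span _ (conj_mem_parabolicReflections hw.mem ht) t ht hconj ?_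
    have := hrep.map_root_mem_span ht (conj_mem_parabolicReflections hw.mem ht)
      (T := D.translationRep w) (by rw [← map_mul, ← map_mul, inv_mul_cancel_right])
    rwa [hfix] at this
  refine not_commute_of_mem_leftInversions (hw.leftInversions_eq ▸ ht)
    (mul_inv_eq_iff_eq_mul.1 hwt) hinv ?_ hwl
  exact fun h => not_isOfFinOrder_of_isMulTorsionFree hne (Submonoid.isOfFinOrder_coe.1 h)

variable (D) in
theorem twistedPoincare_longest_mul_one_sub_pow {L : Set W} {w : W} {A : Type*} [CommRing A]
    [Algebra ℚ A] (hfin : (Subgroup.closure L : Set W).Finite) (hw : IsLongest cs L w) (q : A) :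
    twistedPoincare cs (MulAut.conj w) L q * (1 - q) ^ D.eNeg (D.translationRep w) =
      twistedPoincare cs 1 L (-q) * (1 + q) ^ D.eNeg (D.translationRep w) :=
  (isReflectionRep hfin).twistedPoincare_mul_one_sub_pow hfin hw
    (fun _ ht => translationRep_root_ne hfin hw ht) q

end AffineData

/-! ### Double cosets of a parabolic subgroup -/

section DoubleCoset

variable {cs : CoxeterSystem M W} {L : Set W} {b : W}

/-- The set `L ∩ b L b⁻¹`; it generates `W_L ∩ b W_L b⁻¹` when `b` is the shortest element of
`W_L b W_L`. -/
def interConj (L : Set W) (b : W) : Set W := L ∩ (fun s => b * s * b⁻¹) '' L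

theorem interConj_subset : interConj L b ⊆ L := Set.inter_subset_left

theorem conj_inv_mem_closure {h : W} (hh : h ∈ Subgroup.closure (interConj L b)) :
    b⁻¹ * h * b ∈ Subgroup.closure L := by
  have hle : Subgroup.closure (interConj L b) ≤
      (Subgroup.closure L).comap (MulAut.conj b⁻¹).toMonoidHom := by
    rw [Subgroup.closure_le]
    rintro _ ⟨-, s, hs, rfl⟩
    simpa [mul_assoc] using Subgroup.subset_closure hs
  simpa using hle hh

theorem IsMinimal.length_conj_eq_one (hL : L ⊆ Set.range cs.simple) {x s : W}
    (hx : IsMinimal cs L x) (hs : s ∈ L) (hmem : x⁻¹ * s * x ∈ Subgroup.closure L) :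
    cs.length (x⁻¹ * s * x) = 1 := by
  have hodd : Odd (cs.length (x⁻¹ * s * x)) := by
    simpa using ((isReflection_of_mem hL hs).conj x⁻¹).odd_length
  have hadd := hx.length_mul hL hmem
  have hle := cs.length_mul_le s x
  rw [← mul_assoc x, mul_inv_cancel_left] at hadd
  rw [length_eq_one_of_mem hL hs] at hle
  obtain ⟨k, hk⟩ := hodd
  omega

variable (cs L b) in
/-- `b` is the shortest element of its double coset `W_L b W_L`, expressed through the absence of
descents in `L` on either side. -/
structure IsBiminimal : Prop where
  right : IsMinimal cs L b
  left : IsMinimal cs L b⁻¹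

theorem isBiminimal_of_forall_length_le (hL : L ⊆ Set.range cs.simple)
    (h : ∀ u ∈ Subgroup.closure L, ∀ v ∈ Subgroup.closure L,
      cs.length b ≤ cs.length (u * b * v)) : IsBiminimal cs L b where
  right s hs hinv := by
    have hlt := (mem_leftInversions_inv_iff_length (isReflection_of_mem hL hs)).1 hinv
    refine hlt.not_ge ?_
    simpa using h 1 (one_mem _) s (Subgroup.subset_closure hs)
  left s hs hinv := by
    rw [inv_inv] at hinv
    refine hinv.2.not_ge ?_
    simpa using h s (Subgroup.subset_closure hs) 1 (one_mem _)

namespace IsBiminimal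

theorem notMem_leftInversions (hL : L ⊆ Set.range cs.simple) (hb : IsBiminimal cs L b) {t : W}
    (ht : t ∈ Subgroup.closure L) : t ∉ leftInversions cs b := by
  simpa using hb.left.notMem_leftInversions_inv hL ht

theorem mem_leftInversions_mul_iff (hL : L ⊆ Set.range cs.simple) (hb : IsBiminimal cs L b)
    {u t : W} (hu : u ∈ Subgroup.closure L) (ht : t ∈ Subgroup.closure L) :
    t ∈ leftInversions cs (u * b) ↔ t ∈ leftInversions cs u := by
  have hconj := hb.notMem_leftInversions hL (mul_mem (mul_mem (inv_mem hu) ht) hu)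
  rw [mem_leftInversions_mul, Xor]
  tauto

theorem mem_interConj (hL : L ⊆ Set.range cs.simple) (hb : IsBiminimal cs L b) {s : W}
    (hs : s ∈ L) (hconj : b * s * b⁻¹ ∈ Subgroup.closure L) :
    b * s * b⁻¹ ∈ interConj L b := by
  refine ⟨mem_of_mem_closure_of_length_eq_one hL ?_ hconj, s, hs, rfl⟩
  have hleft := hb.left.length_mul hL (inv_mem hconj)
  have hright := hb.right.length_mul hL (Subgroup.subset_closure hs)
  rw [← mul_inv_rev, cs.length_inv, cs.length_inv, cs.length_inv, inv_mul_cancel_right, hright,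
    length_eq_one_of_mem hL hs] at hleft
  exact (Nat.add_left_cancel hleft).symm

theorem isMinimal_mul (hL : L ⊆ Set.range cs.simple) (hb : IsBiminimal cs L b) {u : W}
    (hu : u ∈ Subgroup.closure L) (hmin : IsMinimal cs (interConj L b) u) :
    IsMinimal cs L (u * b) := by
  intro s hs hinv
  have hconj : u * b * s * (u * b)⁻¹ = u * (b * s * b⁻¹) * u⁻¹ := by group
  have hsb : b * s * b⁻¹ ∉ leftInversions cs b := by
    rw [← mem_leftInversions_inv]
    exact hb.right s hs
  rw [mem_leftInversions_inv, hconj, mem_leftInversions_mul] at hinv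
  obtain ⟨hinv, -⟩ | ⟨hinv, -⟩ := hinv
  · have hmem : b * s * b⁻¹ ∈ Subgroup.closure L := by
      have := mul_mem (mul_mem (inv_mem hu) (leftInversions_subset_closure hL hu hinv)) hu
      simpa [mul_assoc] using this
    exact hmin _ (hb.mem_interConj hL hs hmem) (mem_leftInversions_inv.2 hinv)
  · exact hsb (by simpa [mul_assoc] using hinv)

theorem exists_isMinimal_mul_eq (hL : L ⊆ Set.range cs.simple) (hb : IsBiminimal cs L b)
    {x p v : W} (hx : IsMinimal cs L x) (hp : p ∈ Subgroup.closure L)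
    (hv : v ∈ Subgroup.closure L) (heq : p * b * v = x) :
    ∃ u ∈ Subgroup.closure L, IsMinimal cs (interConj L b) u ∧ u * b = x := by
  obtain ⟨u, hmin, h, hh, rfl⟩ := LY.exists_isMinimal_mul_eq (cs := cs) (L := interConj L b) p
  have hu : u ∈ Subgroup.closure L :=
    (Subgroup.mul_mem_cancel_right _ (Subgroup.closure_mono interConj_subset hh)).1 hp
  refine ⟨u, hu, hmin, ((hb.isMinimal_mul hL hu hmin).eq_of_mul_eq hL hx
    (mul_mem (conj_inv_mem_closure hh) hv) (one_mem _) ?_).1⟩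
  rw [mul_one, ← heq]
  group

theorem conj_inv_mem_interConj (hL : L ⊆ Set.range cs.simple) (hb : IsBiminimal cs L b)
    {u s : W} (hu : u ∈ Subgroup.closure L) (hmin : IsMinimal cs L (u * b)) (hs : s ∈ L)
    (hmem : (u * b)⁻¹ * s * (u * b) ∈ Subgroup.closure L) :
    u⁻¹ * s * u ∈ interConj L b := by
  have hconj : b * ((u * b)⁻¹ * s * (u * b)) * b⁻¹ = u⁻¹ * s * u := by group
  rw [← hconj]
  refine hb.mem_interConj hL
    (mem_of_mem_closure_of_length_eq_one hL (hmin.length_conj_eq_one hL hs hmem) hmem) ?_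
  rw [hconj]
  exact mul_mem (mul_mem (inv_mem hu) (Subgroup.subset_closure hs)) hu

theorem mul_eq_longest (hb : IsBiminimal cs L b) {u w wH : W} (hw : IsLongest cs L w)
    (hH : IsLongest cs (interConj L b) wH) (hu : u ∈ Subgroup.closure L)
    (hmin : IsMinimal cs (interConj L b) u) (hdesc : L ⊆ leftInversions cs (u * b * w)) :
    u * wH = w := by
  have hL := hw.subset_range
  refine hw.eq_of_subset_leftInversions
    (mul_mem hu (Subgroup.closure_mono interConj_subset hH.mem)) fun s hs => ?_
  have hs' := Subgroup.subset_closure hs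
  have hs_desc := hdesc hs
  rw [mem_leftInversions_mul, hw.leftInversions_eq,
    hb.mem_leftInversions_mul_iff hL hu hs'] at hs_desc
  rw [mem_leftInversions_mul, hH.leftInversions_eq]
  have hu_iff : s ∈ leftInversions cs u ↔ u⁻¹ * s * u ∈ leftInversions cs u⁻¹ := by
    rw [mem_leftInversions_inv]
    simp [mul_assoc]
  obtain ⟨hsu, -⟩ | ⟨hsx, hsu⟩ := hs_desc
  · exact Or.inl ⟨hsu, fun hsH =>
      hmin.notMem_leftInversions_inv hH.subset_range hsH.2 (hu_iff.1 hsu)⟩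
  · exact Or.inr ⟨mem_parabolicReflections_of_mem hH.subset_range
      (hb.conj_inv_mem_interConj hL hu (hb.isMinimal_mul hL hu hmin) hs hsx.2), hsu⟩

theorem eq_longest_mul_longest_mul (hb : IsBiminimal cs L b) {x p v w wH : W}
    (hw : IsLongest cs L w) (hH : IsLongest cs (interConj L b) wH) (hx : IsMinimal cs L x)
    (hdesc : L ⊆ leftInversions cs (x * w)) (hp : p ∈ Subgroup.closure L)
    (hv : v ∈ Subgroup.closure L) (heq : p * b * v = x) : x = w * wH * b := by
  obtain ⟨u, hu, hmin, rfl⟩ := hb.exists_isMinimal_mul_eq hw.subset_range hx hp hv heq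
  rw [← hb.mul_eq_longest hw hH hu hmin hdesc, mul_assoc u, hH.mul_self, mul_one]

end IsBiminimal

end DoubleCoset

theorem transcendental_qK : Transcendental ℚ qK := by
  rw [Subsingleton.elim (DivisionRing.toRatAlgebra : Algebra ℚ K)
    (RatFunc.instAlgebraOfPolynomial ℚ ℚ)]
  exact RatFunc.transcendental_X

theorem one_sub_ne_zero_of_transcendental {R A : Type*} [CommRing R] [Nontrivial R] [Ring A]
    [Algebra R A] {q : A} (hq : Transcendental R q) : 1 - q ≠ 0 :=
  sub_ne_zero.2 fun h => hq (h ▸ isAlgebraic_one)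

section FieldIdentity

variable {F : Type*} [Field F]

/- With `z = (1 - q) / (1 + q)` the hypotheses say `NJ = PJ z ^ a` and `NH = PH z ^ c`, and the
base `(q - 1) / (q + 1)` is `-z`. -/
theorem pow_mul_zpow_mul_div_eq {q PJ PH NJ NH : F} {l a c : ℕ} (hm : 1 - q ≠ 0)
    (hp : 1 + q ≠ 0) (hNH : NH ≠ 0) (hJ : PJ * (1 - q) ^ a = NJ * (1 + q) ^ a)
    (hH : PH * (1 - q) ^ c = NH * (1 + q) ^ c) (hsign : (-1 : F) ^ l = (-1) ^ (a + c)) :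
    q ^ l * ((q - 1) / (q + 1)) ^ ((a : ℤ) - c) * PJ / PH = (-q) ^ l * NJ / NH := by
  have hbase : (q - 1) / (q + 1) = -1 * ((1 - q) / (1 + q)) := by
    rw [add_comm q 1]
    ring
  have hz : (1 - q) / (1 + q) ≠ 0 := div_ne_zero hm hp
  have hNJ : NJ = PJ * ((1 - q) / (1 + q)) ^ a := by
    rw [div_pow, ← mul_div_assoc, hJ, mul_div_cancel_right₀ _ (pow_ne_zero _ hp)]
  have hNH' : NH = PH * ((1 - q) / (1 + q)) ^ c := by
    rw [div_pow, ← mul_div_assoc, hH, mul_div_cancel_right₀ _ (pow_ne_zero _ hp)]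
  have hPH : PH ≠ 0 := left_ne_zero_of_mul (hNH' ▸ hNH)
  have hsq : ((-1 : F) ^ c) ^ 2 = 1 := by rw [← pow_mul, mul_comm, pow_mul, neg_one_sq, one_pow]
  have hsq0 : (-1 : F) ^ c ≠ 0 := pow_ne_zero _ (neg_ne_zero.2 one_ne_zero)
  rw [hbase, zpow_sub₀ (mul_ne_zero (neg_ne_zero.2 one_ne_zero) hz), zpow_natCast, zpow_natCast,
    hNJ, hNH', neg_pow q, hsign, mul_pow, mul_pow, pow_add]
  field_simp
  linear_combination (-(q ^ l * PJ)) * hsq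

end FieldIdentity

/-! ### The shortest element of the double coset of a dominant translation -/

namespace AffineData

variable {cs : CoxeterSystem M W} (D : AffineData cs) {mu b wH x y : W}

theorem Jset_subset_range : D.Jset ⊆ Set.range cs.simple := Set.sdiff_subset

theorem isLongest_wJ : IsLongest cs D.Jset D.wJ :=
  isLongest_of_forall_length_le D.Jset_subset_range D.hwJ_mem D.hwJ_max

theorem length_st (x : W) : cs.length (D.st x) = cs.length x :=
  length_apply D.hst_inv subset_rfl D.hst_S (by simp [cs.subgroup_closure_range_simple])

variable {D}

theorem IsDominant.isMinimal (hmu : D.IsDominant mu) : IsMinimal cs D.Jset mu := by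
  intro s hs hinv
  have hrefl := isReflection_of_mem D.Jset_subset_range hs
  have hlt := (mem_leftInversions_inv_iff_length hrefl).1 hinv
  have hle := cs.length_mul_le (mu * s) (s * D.wJ)
  have hmax := D.isLongest_wJ.length_le (mul_mem (Subgroup.subset_closure hs) D.hwJ_mem)
  rw [← mul_assoc, mul_assoc mu, hrefl.mul_self, mul_one, hmu.2] at hle
  omega

theorem IsDominant.st_mul_wJ (hmu : D.IsDominant mu) : D.st (mu * D.wJ) = (mu * D.wJ)⁻¹ := by
  have hw := D.isLongest_wJ
  rw [map_mul, D.hst_Lam mu hmu.1, D.hst_J _ hw.mem, hw.mul_self, one_mul]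
  simp only [mul_inv_rev, hw.inv_eq, mul_assoc, hw.mul_self, mul_one]

theorem IsDominant.Jset_subset_leftInversions (hmu : D.IsDominant mu) :
    D.Jset ⊆ leftInversions cs (mu * D.wJ) := by
  intro s hs
  have hw := D.isLongest_wJ
  have hs' := Subgroup.subset_closure hs
  have hst : D.st s ∈ Subgroup.closure D.Jset := by
    rw [D.hst_J s hs']
    exact mul_mem (mul_mem hw.mem hs') hw.mem
  have hinv : s * (mu * D.wJ) = D.st (mu * (D.wJ * D.st s))⁻¹ := by
    rw [map_inv, ← mul_assoc mu, map_mul, D.hst_inv, hmu.st_mul_wJ, mul_inv_rev, inv_inv,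
      (isReflection_of_mem D.Jset_subset_range hs).inv]
  refine ⟨isReflection_of_mem D.Jset_subset_range hs, ?_⟩
  rw [hinv, length_st, cs.length_inv, hmu.2,
    hmu.isMinimal.length_mul D.Jset_subset_range (mul_mem hw.mem hst)]
  have := hw.length_mul_right hst
  rw [length_st, length_eq_one_of_mem D.Jset_subset_range hs] at this
  omega

theorem isBiminimal_of_mem_DCoset (hb_mem : b ∈ D.DCoset mu)
    (hb_min : ∀ y ∈ D.DCoset mu, cs.length b ≤ cs.length y) : IsBiminimal cs D.Jset b := by
  obtain ⟨p, hp, v, hv, rfl⟩ := hb_mem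
  refine isBiminimal_of_forall_length_le D.Jset_subset_range fun u hu u' hu' =>
    hb_min _ ⟨u * p, mul_mem hu hp, v * u', mul_mem hv hu', ?_⟩
  simp only [mul_assoc]

theorem IsDominant.eq_wJ_mul_mul (hmu : D.IsDominant mu) (hb_mem : b ∈ D.DCoset mu)
    (hb_min : ∀ y ∈ D.DCoset mu, cs.length b ≤ cs.length y)
    (hH : IsLongest cs (D.Hset b) wH) : mu = D.wJ * wH * b := by
  have hb := isBiminimal_of_mem_DCoset hb_mem hb_min
  obtain ⟨p, hp, v, hv, heq⟩ := hb_mem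
  refine hb.eq_longest_mul_longest_mul D.isLongest_wJ hH hmu.isMinimal
    hmu.Jset_subset_leftInversions (inv_mem hp) (inv_mem hv) ?_
  rw [heq]
  group

theorem eq_of_mem_WJ (hx : x ∈ D.WJ) (hy : y ∈ D.WJ) (h : (x : W ⧸ D.Lam) = y) : x = y := by
  refine (D.hs0_hyper x).unique ⟨hx, ?_⟩ ⟨hy, ?_⟩
  · rw [mul_inv_cancel]
    exact one_mem _
  · rw [← div_eq_mul_inv, ← QuotientGroup.eq_iff_div_mem]
    exact h

theorem mk_pr (w : W) : (D.pr w : W ⧸ D.Lam) = w := by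
  rw [eq_comm, QuotientGroup.eq_iff_div_mem, div_eq_mul_inv]
  exact (D.hpr w).2

variable (D) in
theorem Hset_subset_Jset (b : W) : D.Hset b ⊆ D.Jset := interConj_subset

variable (D) in
theorem exists_isLongest_Hset (b : W) : ∃ wH, IsLongest cs (D.Hset b) wH :=
  exists_isLongest ((D.Hset_subset_Jset b).trans D.Jset_subset_range)
    (D.hWJ_fin.subset (Subgroup.closure_mono (D.Hset_subset_Jset b)))
theorem mem_WJ_of_isLongest_Hset (hH : IsLongest cs (D.Hset b) wH) : wH ∈ D.WJ :=
  Subgroup.closure_mono (D.Hset_subset_Jset b) hH.mem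

theorem IsDominant.pr_eq_mul_wJ (hmu : D.IsDominant mu) (hb_mem : b ∈ D.DCoset mu)
    (hb_min : ∀ y ∈ D.DCoset mu, cs.length b ≤ cs.length y)
    (hH : IsLongest cs (D.Hset b) wH) : D.pr b = wH * D.wJ := by
  have hmul : D.wJ * wH * b ∈ D.Lam := hmu.eq_wJ_mul_mul hb_mem hb_min hH ▸ hmu.1
  refine eq_of_mem_WJ (D.hpr b).1 (mul_mem (mem_WJ_of_isLongest_Hset hH) D.hwJ_mem) ?_
  rw [mk_pr, eq_comm, QuotientGroup.eq, mul_inv_rev, D.isLongest_wJ.inv_eq, hH.inv_eq]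
  exact hmul

theorem conj_inv_eq_conj_inv_pr (hx : x ∈ D.WJ) (hconj : b⁻¹ * x * b ∈ D.WJ) :
    b⁻¹ * x * b = (D.pr b)⁻¹ * x * D.pr b := by
  have hpr := (D.hpr b).1
  refine eq_of_mem_WJ hconj (mul_mem (mul_mem (inv_mem hpr) hx) hpr) ?_
  simp only [QuotientGroup.mk_mul, QuotientGroup.mk_inv, mk_pr]

theorem mem_WHstar : x ∈ D.WHstar b ↔ D.st x ∈ Subgroup.closure (D.Hset b) := by
  have hmap : D.WHstar b = (Subgroup.closure (D.Hset b)).map D.st.toMonoidHom :=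
    (MonoidHom.map_closure D.st.toMonoidHom (D.Hset b)).symm
  rw [hmap]
  refine ⟨?_, fun h => ⟨_, h, D.hst_inv x⟩⟩
  rintro ⟨y, hy, rfl⟩
  exact (D.hst_inv y).symm ▸ hy

variable (D) in
theorem Hstar_subset_Jset (b : W) : D.Hstar b ⊆ D.Jset := by
  rintro _ ⟨s, hs, rfl⟩
  rw [D.hst_J s (Subgroup.subset_closure hs.1)]
  exact D.isLongest_wJ.conj_mem hs.1

variable (D) in
theorem finite_WHstar (b : W) : (D.WHstar b : Set W).Finite :=
  D.hWJ_fin.subset (Subgroup.closure_mono (D.Hstar_subset_Jset b))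
theorem isLongest_Hstar (hH : IsLongest cs (D.Hset b) wH) :
    IsLongest cs (D.Hstar b) (D.wJ * wH * D.wJ) := by
  rw [← D.hst_J _ (mem_WJ_of_isLongest_Hset hH)]
  refine isLongest_of_forall_length_le ((D.Hstar_subset_Jset b).trans D.Jset_subset_range) ?_ ?_
  · exact mem_WHstar.2 ((D.hst_inv wH).symm ▸ hH.mem)
  · intro u hu
    rw [length_st, ← D.length_st u]
    exact hH.length_le (mem_WHstar.1 hu)

theorem st_eq_conj_wJ (hx : x ∈ D.WJ) : D.st x = MulAut.conj D.wJ x := by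
  rw [D.hst_J x hx, MulAut.conj_apply, D.isLongest_wJ.inv_eq]

theorem IsDominant.conj_inv_st_eq_conj (hmu : D.IsDominant mu) (hb_mem : b ∈ D.DCoset mu)
    (hb_min : ∀ y ∈ D.DCoset mu, cs.length b ≤ cs.length y)
    (hH : IsLongest cs (D.Hset b) wH) (hx : x ∈ D.WHstar b) :
    b⁻¹ * D.st x * b = MulAut.conj (D.wJ * wH * D.wJ) x := by
  have hxJ : x ∈ D.WJ := Subgroup.closure_mono (D.Hstar_subset_Jset b) hx
  have hst := mem_WHstar.1 hx
  rw [conj_inv_eq_conj_inv_pr (Subgroup.closure_mono (D.Hset_subset_Jset b) hst)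
    (conj_inv_mem_closure hst), hmu.pr_eq_mul_wJ hb_mem hb_min hH, D.hst_J x hxJ,
    MulAut.conj_apply, mul_inv_rev, mul_inv_rev, mul_inv_rev, D.isLongest_wJ.inv_eq, hH.inv_eq]
  simp only [mul_assoc]

variable (D) in
theorem finsum_WJ_fixed_eq_twistedPoincare {R : Type*} [CommRing R] (q : R) :
    (∑ᶠ x : W, if x ∈ D.WJ ∧ D.st x = x then q ^ cs.length x else 0) =
      twistedPoincare cs (MulAut.conj D.wJ) D.Jset q :=
  finsum_eq_twistedPoincare D.hWJ_fin (fun _ hx => by rw [st_eq_conj_wJ hx]) q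

variable (D) in
theorem finsum_WJ_eq_twistedPoincare {R : Type*} [CommRing R] (q : R) :
    (∑ᶠ x : W, if x ∈ D.WJ then q ^ cs.length x else 0) = twistedPoincare cs 1 D.Jset q :=
  finsum_eq_twistedPoincare_one D.hWJ_fin q

theorem IsDominant.finsum_WHstar_fixed_eq_twistedPoincare (hmu : D.IsDominant mu)
    (hb_mem : b ∈ D.DCoset mu) (hb_min : ∀ y ∈ D.DCoset mu, cs.length b ≤ cs.length y)
    (hH : IsLongest cs (D.Hset b) wH) {R : Type*} [CommRing R] (q : R) :
    (∑ᶠ x : W, if x ∈ D.WHstar b ∧ b⁻¹ * D.st x * b = x then q ^ cs.length x else 0) =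
      twistedPoincare cs (MulAut.conj (D.wJ * wH * D.wJ)) (D.Hstar b) q :=
  finsum_eq_twistedPoincare (D.finite_WHstar b)
    (fun _ hx => by rw [hmu.conj_inv_st_eq_conj hb_mem hb_min hH hx]) q

variable (D) in
theorem finsum_WHstar_eq_twistedPoincare (b : W) {R : Type*} [CommRing R] (q : R) :
    (∑ᶠ x : W, if x ∈ D.WHstar b then q ^ cs.length x else 0) =
      twistedPoincare cs 1 (D.Hstar b) q :=
  finsum_eq_twistedPoincare_one (D.finite_WHstar b) q

theorem eNeg_neg_add_eNeg {T : Module.End ℚ (Fin D.rank → ℚ)} (hT : T * T = 1) :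
    D.eNeg (-T) + D.eNeg T = D.rank := by
  have hneg : (-T).eigenspace (-1) = T.eigenspace 1 := by
    ext v
    simp only [Module.End.mem_eigenspace_iff, LinearMap.neg_apply, neg_smul, neg_inj]
  rw [eNeg, eNeg, hneg, Submodule.finrank_add_eq_of_isCompl
    (isCompl_eigenspace_of_mul_self_eq_one hT), Module.finrank_fin_fun]

theorem eNeg_translationRep_conj (g w : W) :
    D.eNeg (D.translationRep (g * w * g⁻¹)) = D.eNeg (D.translationRep w) := by
  have hle (g w : W) :
      D.eNeg (D.translationRep w) ≤ D.eNeg (D.translationRep (g * w * g⁻¹)) := by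
    have hinj : Function.Injective (D.translationRep g) :=
      ((Module.End.isUnit_iff _).1 ((Group.isUnit g).map D.translationRep)).injective
    have hmem : ∀ v ∈ (D.translationRep w).eigenspace (-1),
        D.translationRep g v ∈ (D.translationRep (g * w * g⁻¹)).eigenspace (-1) := by
      intro v hv
      rw [Module.End.mem_eigenspace_iff] at hv ⊢
      rw [← Module.End.mul_apply, ← map_mul, inv_mul_cancel_right, map_mul,
        Module.End.mul_apply, hv, map_smul]
    exact LinearMap.finrank_le_finrank_of_injective
      (f := (D.translationRep g).restrict hmem) fun x y h =>
        Subtype.ext (hinj (congrArg Subtype.val h))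
  refine (hle g w).antisymm' ?_
  simpa only [mul_assoc, inv_inv, inv_mul_cancel_left, inv_mul_cancel, mul_one] using
    hle g⁻¹ (g * w * g⁻¹)

theorem phi_eq_of_pr_eq_mul_wJ (hw : wH * wH = 1) (hb : D.pr b = wH * D.wJ) :
    D.phi b = D.eNeg (D.translationRep D.wJ) - D.eNeg (D.translationRep wH) := by
  have hsq {w : W} (hw : w * w = 1) : D.translationRep w * D.translationRep w = 1 := by
    rw [← map_mul, hw, map_one]
  have hJ := eNeg_neg_add_eNeg (hsq D.isLongest_wJ.mul_self)
  have hH := eNeg_neg_add_eNeg (hsq hw)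
  rw [phi, Amap, Amap, hb, mul_assoc, D.isLongest_wJ.mul_self, mul_one, one_mul]
  change (D.eNeg (-D.translationRep wH) : ℤ) - D.eNeg (-D.translationRep D.wJ) = _
  omega

theorem neg_one_pow_length_of_pr_eq_mul_wJ {R : Type*} [Ring R] (hw : wH * wH = 1)
    (hb : D.pr b = wH * D.wJ) : (-1 : R) ^ cs.length b =
      (-1) ^ (D.eNeg (D.translationRep D.wJ) + D.eNeg (D.translationRep wH)) := by
  have hrep : D.translationRep b = D.translationRep (wH * D.wJ) := by
    rw [← hb, ← inv_mul_cancel_right b (D.pr b), map_mul, translationRep_eq_one_iff.2 (D.hpr b).2,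
      one_mul, inv_mul_cancel_right]
  have hdet : (-1 : ℚ) ^ cs.length b =
      (-1) ^ (D.eNeg (D.translationRep D.wJ) + D.eNeg (D.translationRep wH)) := by
    rw [← det_translationRep, hrep, map_mul, map_mul, det_translationRep_eq_neg_one_pow_eNeg hw,
      det_translationRep_eq_neg_one_pow_eNeg D.isLongest_wJ.mul_self, ← pow_add, add_comm]
  exact_mod_cast congrArg (Int.cast : ℤ → R) (by exact_mod_cast hdet)

theorem twistedPoincare_Hstar_mul_one_sub_pow {A : Type*} [CommRing A] [Algebra ℚ A]
    (hH : IsLongest cs (D.Hset b) wH) (q : A) :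
    twistedPoincare cs (MulAut.conj (D.wJ * wH * D.wJ)) (D.Hstar b) q *
        (1 - q) ^ D.eNeg (D.translationRep wH) =
      twistedPoincare cs 1 (D.Hstar b) (-q) * (1 + q) ^ D.eNeg (D.translationRep wH) := by
  have heq : D.eNeg (D.translationRep (D.wJ * wH * D.wJ)) = D.eNeg (D.translationRep wH) := by
    simpa only [D.isLongest_wJ.inv_eq] using eNeg_translationRep_conj D.wJ wH
  rw [← heq]
  exact D.twistedPoincare_longest_mul_one_sub_pow (D.finite_WHstar b) (isLongest_Hstar hH) q

end AffineData

/-- Let `ε` be the involution `y ↦ b⁻¹ y* b` of `W_{H*}`.  Then, in `ℚ(q)`: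
`q^{ℓ(b)} ((q−1)/(q+1))^{φ(b)} P_{J,*}(q) / P_{H*,ε}(q) = (−q)^{ℓ(b)} P_J(−q) / P_{H*}(−q)`. -/
theorem P_J_star_identity (cs : CoxeterSystem M W) (D : AffineData cs)
    (mu b : W) (hmu : D.IsDominant mu)
    (hb_mem : b ∈ D.DCoset mu)
    (hb_min : ∀ y ∈ D.DCoset mu, cs.length b ≤ cs.length y) :
    qK ^ cs.length b * ((qK - 1) / (qK + 1)) ^ D.phi b
        * (∑ᶠ x : W, if x ∈ D.WJ ∧ D.st x = x then qK ^ cs.length x else 0)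
        / (∑ᶠ x : W, if x ∈ D.WHstar b ∧ b⁻¹ * D.st x * b = x
            then qK ^ cs.length x else 0)
      = (-qK) ^ cs.length b
        * (∑ᶠ x : W, if x ∈ D.WJ then (-qK) ^ cs.length x else 0)
        / (∑ᶠ x : W, if x ∈ D.WHstar b then (-qK) ^ cs.length x else 0) := by
  obtain ⟨wH, hH⟩ := D.exists_isLongest_Hset b
  have hpr := hmu.pr_eq_mul_wJ hb_mem hb_min hH
  have hJ := D.twistedPoincare_longest_mul_one_sub_pow D.hWJ_fin D.isLongest_wJ qK
  have hHstar := AffineData.twistedPoincare_Hstar_mul_one_sub_pow hH qK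
  have hsign := AffineData.neg_one_pow_length_of_pr_eq_mul_wJ (R := K) hH.mul_self hpr
  have hq : Transcendental ℚ (-qK) := fun h => transcendental_qK (neg_neg qK ▸ h.neg)
  have hsub : 1 - qK ≠ 0 := one_sub_ne_zero_of_transcendental transcendental_qK
  have hadd : 1 + qK ≠ 0 := sub_neg_eq_add 1 qK ▸ one_sub_ne_zero_of_transcendental hq
  have hne := twistedPoincare_ne_zero (cs := cs) hq (D.finite_WHstar b) 1
  rw [D.finsum_WJ_fixed_eq_twistedPoincare, D.finsum_WJ_eq_twistedPoincare,
    hmu.finsum_WHstar_fixed_eq_twistedPoincare hb_mem hb_min hH,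
    D.finsum_WHstar_eq_twistedPoincare, AffineData.phi_eq_of_pr_eq_mul_wJ hH.mul_self hpr]
  exact pow_mul_zpow_mul_div_eq hsub hadd hne hJ hHstar hsign

end LY
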